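/- Fix n, d ∈ ℕ, x ∈ ℝ^n, and smooth vector fields X_0, X_1, …, X_d : ℝ^n → ℝ^n that are bounded, have bounded first derivatives, and such that X_1, …, X_d are bracket generating. For 1 ≤ p < ∞, let F_p : L^p([0,1], ℝ^d) → ℝ^n be the endpoint map F_p(u) = γ_u(1), where γ_u is the trajectory of u starting at x. Then there exists p_c > 1 such that for every real p with 1 ≤ p < p_c, the map F_p is a Hurewicz fibration: for every topological space Z, every continuous g : Z × [0,1] → ℝ^n, and every continuous g̃_0 : Z → L^p([0,1], ℝ^d) with F_p(g̃_0(z)) = g(z,0) for all z ∈ Z, there exists a continuous g̃ : Z × [0,1] → L^p([0,1], ℝ^d) with g̃(z,0) = g̃_0(z) and F_p(g̃(z,s)) = g(z,s) for all (z,s) ∈ Z × [0,1]. -/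

import Mathlib

open MeasureTheory Set Filter Topology

noncomputable section

/-- The Lie bracket of two (smooth) vector fields on `ℝⁿ`:
`[Y,Z](x) = DZ(x)Y(x) − DY(x)Z(x)`. -/
def lieBracketVF {n : ℕ}
    (Y Z : EuclideanSpace ℝ (Fin n) → EuclideanSpace ℝ (Fin n)) :
    EuclideanSpace ℝ (Fin n) → EuclideanSpace ℝ (Fin n) :=
  fun x => fderiv ℝ Z x (Y x) - fderiv ℝ Y x (Z x)

/-- The iterated Lie brackets of the family `X₁, …, X_d`. -/
inductive IsIteratedBracket {n d : ℕ}
    (X : Fin d → EuclideanSpace ℝ (Fin n) → EuclideanSpace ℝ (Fin n)) :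
    (EuclideanSpace ℝ (Fin n) → EuclideanSpace ℝ (Fin n)) → Prop
  | base (i : Fin d) : IsIteratedBracket X (X i)
  | bracket (Y Z : EuclideanSpace ℝ (Fin n) → EuclideanSpace ℝ (Fin n)) :
      IsIteratedBracket X Y → IsIteratedBracket X Z →
      IsIteratedBracket X (lieBracketVF Y Z)

/-- The family `X₁, …, X_d` is bracket generating. -/
def BracketGenerating {n d : ℕ}
    (X : Fin d → EuclideanSpace ℝ (Fin n) → EuclideanSpace ℝ (Fin n)) : Prop :=
  ∀ x : EuclideanSpace ℝ (Fin n),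
    Submodule.span ℝ {v | ∃ Y, IsIteratedBracket X Y ∧ Y x = v} = ⊤

/-- Trajectory on `[0,1]` of a control `u` starting at `x` for the affine control
system `γ' = X₀(γ) + Σᵢ uᵢ Xᵢ(γ)`. -/
def IsTrajectory {n d : ℕ}
    (X0 : EuclideanSpace ℝ (Fin n) → EuclideanSpace ℝ (Fin n))
    (X : Fin d → EuclideanSpace ℝ (Fin n) → EuclideanSpace ℝ (Fin n))
    (x : EuclideanSpace ℝ (Fin n))
    (u : ℝ → EuclideanSpace ℝ (Fin d))
    (γ : ℝ → EuclideanSpace ℝ (Fin n)) : Prop :=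
  ContinuousOn γ (Set.Icc 0 1) ∧
    ∀ t ∈ Set.Icc (0:ℝ) 1,
      γ t = x + ∫ s in (0:ℝ)..t, (X0 (γ s) + ∑ i, u s i • X i (γ s))

set_option linter.all false

namespace EPM

/-- post-composition of an absolutely continuous function with a Lipschitz function -/
theorem ac_comp_lipschitz {f : ℝ → ℝ} {φ : ℝ → ℝ} {a b : ℝ} {K : NNReal} {s : Set ℝ}
    (hφ : LipschitzOnWith K φ s) (hs : ∀ x ∈ uIcc a b, f x ∈ s)
    (hf : AbsolutelyContinuousOnInterval f a b) :
    AbsolutelyContinuousOnInterval (fun x => φ (f x)) a b := by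
  rw [absolutelyContinuousOnInterval_iff] at hf ⊢
  intro ε hε
  obtain ⟨δ, hδ, h⟩ := hf (ε / (K + 1)) (by positivity)
  refine ⟨δ, hδ, fun E hE hlt => ?_⟩
  have h1 := h E hE hlt
  calc
    _ ≤ ∑ i ∈ Finset.range E.1, K * dist (f (E.2 i).1) (f (E.2 i).2) := by
      apply Finset.sum_le_sum
      intro i hi
      exact hφ.dist_le_mul _ (hs _ (hE.1 i hi).1) _ (hs _ (hE.1 i hi).2)
    _ = K * ∑ i ∈ Finset.range E.1, dist (f (E.2 i).1) (f (E.2 i).2) := by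
      rw [Finset.mul_sum]
    _ ≤ K * (ε / (K + 1)) := by gcongr
    _ < (K + 1) * (ε / (K + 1)) := by gcongr; linarith
    _ = ε := by field_simp

/-- The weight `m = exp(2 ∫ k)`. -/
theorem exists_weight (k : ℝ → ℝ) (hk : IntervalIntegrable k volume 0 1) (hk0 : ∀ t, 0 ≤ k t) :
    ∃ m : ℝ → ℝ, Continuous m ∧ (∀ t, 0 < m t) ∧
      ∀ t ∈ Icc (0:ℝ) 1, ∫ s in (0:ℝ)..t, k s * m s ≤ m t / 2 := by
  set P : ℝ → ℝ := fun t => ∫ s in (0:ℝ)..t, k s with hP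
  have hPc : ContinuousOn P (Icc 0 1) := by
    have := intervalIntegral.continuousOn_primitive_interval (a := (0:ℝ)) (b := 1) (μ := volume)
      (f := k) (by rwa [intervalIntegrable_iff_integrableOn_Icc_of_le zero_le_one,
        ← uIcc_of_le zero_le_one] at hk)
    rwa [uIcc_of_le zero_le_one] at this
  let m : ℝ → ℝ := fun t => Real.exp (2 * P (projIcc 0 1 zero_le_one t))
  have hm : ∀ t ∈ Icc (0:ℝ) 1, m t = Real.exp (2 * P t) := by
    intro t ht; simp only [m, projIcc_of_mem zero_le_one ht]
  have hmc : Continuous m := by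
    have : Continuous (fun t : ℝ => P (projIcc 0 1 zero_le_one t)) :=
      (continuousOn_iff_continuous_restrict.1 hPc).comp continuous_projIcc
    exact Real.continuous_exp.comp (continuous_const.mul this)
  refine ⟨m, hmc, fun t => Real.exp_pos _, ?_⟩
  intro t ht
  have hkt : IntervalIntegrable k volume 0 t := hk.mono_set (by
    rw [uIcc_of_le ht.1, uIcc_of_le zero_le_one]; exact Icc_subset_Icc_right ht.2)
  have hPac : AbsolutelyContinuousOnInterval P 0 t :=
    hkt.absolutelyContinuousOnInterval_intervalIntegral left_mem_uIcc
  obtain ⟨R, hR⟩ : ∃ R, ∀ x ∈ uIcc 0 t, P x ∈ Icc (-R) R := by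
    obtain ⟨R, hR⟩ := hPac.exists_bound
    exact ⟨R, fun x hx => abs_le.1 (by simpa using hR x hx)⟩
  obtain ⟨K, hK⟩ := (show ContDiffOn ℝ 1 (fun x : ℝ => Real.exp (2 * x)) (Icc (-R) R) from by
    fun_prop).exists_lipschitzOnWith (by decide) (convex_Icc _ _) isCompact_Icc
  have hac := ac_comp_lipschitz hK hR hPac
  have hftc := hac.integral_deriv_eq_sub
  have hae : ∫ s in (0:ℝ)..t, deriv (fun x => Real.exp (2 * P x)) s
      = ∫ s in (0:ℝ)..t, 2 * (k s * m s) := by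
    apply intervalIntegral.integral_congr_ae
    filter_upwards [hkt.ae_hasDerivAt_integral] with s hs hs'
    have hs'' : s ∈ uIcc 0 t := uIoc_subset_uIcc hs'
    have h1 := hs hs'' 0 left_mem_uIcc
    have h2 : HasDerivAt (fun x => Real.exp (2 * P x)) (Real.exp (2 * P s) * (2 * k s)) s :=
      (h1.const_mul 2).exp
    rw [h2.deriv, hm s ?_]
    · ring
    · rw [uIcc_of_le ht.1] at hs''; exact ⟨hs''.1, hs''.2.trans ht.2⟩
  rw [hae, intervalIntegral.integral_const_mul] at hftc
  have : P 0 = 0 := by simp [hP]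
  rw [this] at hftc
  rw [hm t ht]
  simp at hftc
  linarith

/-- Gronwall-type uniqueness -/
theorem gronwall_zero (k g : ℝ → ℝ) (hk : IntervalIntegrable k volume 0 1) (hk0 : ∀ t, 0 ≤ k t)
    (hg : ContinuousOn g (Icc 0 1)) (hg0 : ∀ t ∈ Icc (0:ℝ) 1, 0 ≤ g t)
    (h : ∀ t ∈ Icc (0:ℝ) 1, g t ≤ ∫ s in (0:ℝ)..t, k s * g s) :
    ∀ t ∈ Icc (0:ℝ) 1, g t = 0 := by
  obtain ⟨m, hmc, hm0, hm⟩ := exists_weight k hk hk0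
  obtain ⟨t₀, ht₀, hmax⟩ := isCompact_Icc.exists_isMaxOn (nonempty_Icc.2 (zero_le_one' ℝ))
    (hg.div hmc.continuousOn (fun t _ => (hm0 t).ne'))
  set c := g t₀ / m t₀ with hc
  have hle : ∀ s ∈ Icc (0:ℝ) 1, g s ≤ c * m s := by
    intro s hs
    have := hmax hs
    simp only [mem_ofPred_eq] at this
    exact (div_le_iff₀ (hm0 s)).1 this
  have hsub : Icc 0 t₀ ⊆ Icc (0:ℝ) 1 := Icc_subset_Icc_right ht₀.2
  have hkt : IntervalIntegrable k volume 0 t₀ := hk.mono_set (by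
    rw [uIcc_of_le ht₀.1, uIcc_of_le zero_le_one]; exact hsub)
  have h1 : ∫ s in (0:ℝ)..t₀, k s * g s ≤ ∫ s in (0:ℝ)..t₀, c * (k s * m s) := by
    apply intervalIntegral.integral_mono_on ht₀.1
    · exact hkt.mul_continuousOn (by rw [uIcc_of_le ht₀.1]; exact hg.mono hsub)
    · exact (hkt.mul_continuousOn hmc.continuousOn).const_mul c
    · intro s hs
      have := hle s (hsub hs)
      nlinarith [hk0 s, mul_le_mul_of_nonneg_left this (hk0 s)]
  rw [intervalIntegral.integral_const_mul] at h1
  have hc0 : 0 ≤ c := div_nonneg (hg0 _ ht₀) (hm0 _).le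
  have h2 : g t₀ ≤ c * (m t₀ / 2) :=
    ((h t₀ ht₀).trans h1).trans (mul_le_mul_of_nonneg_left (hm t₀ ht₀) hc0)
  have h3 : g t₀ = c * m t₀ := by rw [hc]; field_simp [(hm0 t₀).ne']
  have h4 : c = 0 := by
    have := hm0 t₀
    nlinarith
  intro t ht
  have := hle t ht
  rw [h4, zero_mul] at this
  exact le_antisymm this (hg0 t ht)

end EPM

namespace EPM

/-- abbreviation for the measure -/
abbrev mu : Measure ℝ := volume.restrict (Set.Icc (0:ℝ) 1)

section omega
variable {α : Type} [TopologicalSpace α] [CompactSpace α]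
variable {A B C E F : Type} [NormedAddCommGroup A] [NormedSpace ℝ A]
  [NormedAddCommGroup B] [NormedSpace ℝ B] [NormedAddCommGroup C] [NormedSpace ℝ C]
  [NormedAddCommGroup E] [NormedSpace ℝ E] [NormedAddCommGroup F] [NormedSpace ℝ F]

/-- pointwise bilinear map on continuous functions -/
def pw (L : A →L[ℝ] B →L[ℝ] C) : C(α, A) →L[ℝ] C(α, B) →L[ℝ] C(α, C) :=
  LinearMap.mkContinuous₂
    (LinearMap.mk₂ ℝ (fun (a : C(α, A)) (b : C(α, B)) =>
      (⟨fun t => L (a t) (b t), by fun_prop⟩ : C(α, C)))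
      (by intros; ext; simp) (by intros; ext; simp) (by intros; ext; simp) (by intros; ext; simp))
    ‖L‖ (by
      intro a b
      rw [ContinuousMap.norm_le _ (by positivity)]
      intro t
      refine (L.le_opNorm₂ _ _).trans ?_
      gcongr
      · exact a.norm_coe_le_norm t
      · exact b.norm_coe_le_norm t)

@[simp] theorem pw_apply (L : A →L[ℝ] B →L[ℝ] C) (a : C(α, A)) (b : C(α, B)) (t : α) :
    pw L a b t = L (a t) (b t) := rfl

/-- superposition -/
def sup (f : E → F) (hf : Continuous f) (γ : C(α, E)) : C(α, F) := ⟨fun t => f (γ t), by fun_prop⟩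

@[simp] theorem sup_apply (f : E → F) (hf : Continuous f) (γ : C(α, E)) (t : α) :
  sup f hf γ t = f (γ t) := rfl

theorem sup_hasFDerivAt (f : E → F) (hf : ContDiff ℝ 1 f) (γ : C(α, E)) :
    HasFDerivAt (sup f hf.continuous)
      (pw (ContinuousLinearMap.id ℝ (E →L[ℝ] F))
        (sup (fderiv ℝ f) (hf.continuous_fderiv (by norm_num)) γ)) γ := by
  rw [hasFDerivAt_iff_isLittleO_nhds_zero, Asymptotics.isLittleO_iff]
  intro c hc
  have hcf := hf.continuous_fderiv (by norm_num)
  have hK : IsCompact (range γ) := isCompact_range γ.continuous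
  have huc := hK.uniformContinuousAt_of_continuousAt (fderiv ℝ f)
    (fun y _ => hcf.continuousAt) (Metric.dist_mem_uniformity hc)
  obtain ⟨δ, hδ, h⟩ := Metric.mem_uniformity_dist.1 huc
  filter_upwards [Metric.ball_mem_nhds (0 : C(α, E)) hδ] with η hη
  rw [ContinuousMap.norm_le _ (by positivity)]
  intro t
  have hηt : ‖η t‖ ≤ ‖η‖ := η.norm_coe_le_norm t
  have hlt : ‖η‖ < δ := by simpa using hη
  have := (convex_ball (γ t) δ).norm_image_sub_le_of_norm_hasFDerivWithin_le' (𝕜 := ℝ)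
    (f := f) (f' := fderiv ℝ f) (φ := fderiv ℝ f (γ t)) (C := c) (x := γ t) (y := γ t + η t)
    (fun z _ => (hf.differentiable (by norm_num) z).hasFDerivAt.hasFDerivWithinAt)
    (fun z hz => by
      have := @h (γ t) z (by rw [dist_comm]; exact hz) (mem_range_self t)
      have this : dist (fderiv ℝ f (γ t)) (fderiv ℝ f z) < c := this
      rw [dist_comm, dist_eq_norm] at this
      exact this.le) (by simpa using hδ) (by simpa using lt_of_le_of_lt hηt hlt)
  simp only [ContinuousMap.sub_apply, sup_apply, ContinuousMap.add_apply, pw_apply,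
    ContinuousLinearMap.id_apply]
  calc _ ≤ _ := by simpa using this
    _ ≤ c * ‖η‖ := by gcongr

theorem sup_contDiff_nat (n : ℕ) : ∀ {F : Type} [NormedAddCommGroup F] [NormedSpace ℝ F]
    (f : E → F) (_ : ContDiff ℝ n f) (hc : Continuous f),
    ContDiff ℝ n (sup (α := α) f hc) := by
  induction n with
  | zero =>
    intro F _ _ f hf hc
    rw [Nat.cast_zero, contDiff_zero]
    exact (⟨f, hc⟩ : C(E, F)).continuous_postcomp
  | succ n ih =>
    intro F _ _ f hf hc
    push_cast
    rw [contDiff_succ_iff_hasFDerivAt]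
    have h1 : ContDiff ℝ 1 f := hf.of_le (by norm_cast; omega)
    have h2 : ContDiff ℝ n (fderiv ℝ f) := hf.fderiv_right (by norm_cast)
    refine ⟨fun γ => pw (ContinuousLinearMap.id ℝ (E →L[ℝ] F))
        (sup (fderiv ℝ f) (h1.continuous_fderiv (by norm_num)) γ), ?_, fun γ => sup_hasFDerivAt f h1 γ⟩
    exact (ContinuousLinearMap.contDiff _).comp (ih (fderiv ℝ f) h2 _)

theorem sup_contDiff (f : E → F) (hf : ContDiff ℝ (⊤ : ℕ∞) f) :
    ContDiff ℝ (⊤ : ℕ∞) (sup (α := α) f hf.continuous) := by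
  rw [contDiff_infty]
  intro n
  exact sup_contDiff_nat n f (hf.of_le (by exact_mod_cast le_top)) _

end omega

section bint
variable {G W E : Type} [NormedAddCommGroup W] [NormedSpace ℝ W]
  [NormedAddCommGroup G] [NormedSpace ℝ G]
   [NormedAddCommGroup E] [NormedSpace ℝ E]

/-- projection to the unit interval -/
abbrev prj (t : ℝ) : unitInterval := projIcc (0:ℝ) 1 zero_le_one t

theorem prj_of_mem {t : ℝ} (ht : t ∈ Icc (0:ℝ) 1) : prj t = ⟨t, ht⟩ := projIcc_of_mem _ ht

theorem bint_integrable (l : G →L[ℝ] W →L[ℝ] E) (w : ℝ → W) (hw : Integrable w mu) (A : C(unitInterval, G)) :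
    Integrable (fun s => l (A (prj s)) (w s)) mu := by
  refine (hw.norm.const_mul (‖l‖ * ‖A‖)).mono' ?_ ?_
  · have h1 : AEStronglyMeasurable (fun s => A (prj s)) mu :=
      (A.continuous.comp continuous_projIcc).aestronglyMeasurable
    exact l.aestronglyMeasurable_comp₂ h1 hw.1
  · refine Eventually.of_forall fun s => ?_
    refine (l.le_opNorm₂ _ _).trans ?_
    gcongr
    exact A.norm_coe_le_norm _

theorem ii_of_mu {f : ℝ → E} (hf : Integrable f mu) {a b : ℝ} (ha : a ∈ Icc (0:ℝ) 1)
    (hb : b ∈ Icc (0:ℝ) 1) : IntervalIntegrable f volume a b := by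
  rw [intervalIntegrable_iff]
  refine IntegrableOn.mono_set (show IntegrableOn f (Icc 0 1) volume from hf) ?_
  intro s hs
  have := uIoc_subset_uIcc hs
  exact (uIcc_subset_Icc ha hb) this

/-- primitive as a continuous function on the unit interval -/
def prim (f : ℝ → E) (hf : Integrable f mu) : C(unitInterval, E) :=
  ⟨fun t => ∫ s in (0:ℝ)..t, f s, by
    have h0 : IntegrableOn f (uIcc 0 1) volume := by
      rw [uIcc_of_le zero_le_one]; exact hf
    have := intervalIntegral.continuousOn_primitive_interval (a := (0:ℝ)) (b := 1)
      (μ := volume) h0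
    rw [uIcc_of_le zero_le_one] at this
    exact continuousOn_iff_continuous_domRestrict.1 this⟩

theorem prim_apply (f : ℝ → E) (hf : Integrable f mu) (t : unitInterval) :
  prim f hf t = ∫ s in (0:ℝ)..t, f s := rfl

/-- the bilinear integral map -/
def Bint (l : G →L[ℝ] W →L[ℝ] E) : Lp W 1 mu →L[ℝ] C(unitInterval, G) →L[ℝ] C(unitInterval, E) :=
  LinearMap.mkContinuous₂
    (LinearMap.mk₂ ℝ (fun (w : Lp W 1 mu) (A : C(unitInterval, G)) =>
      prim (fun s => l (A (prj s)) (w s)) (bint_integrable l w (L1.integrable_coeFn w) A))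
      (by
        intro w w' A
        ext t
        have h1 := ii_of_mu (bint_integrable l w (L1.integrable_coeFn w) A)
          (left_mem_Icc.2 zero_le_one) t.2
        have h2 := ii_of_mu (bint_integrable l w' (L1.integrable_coeFn w') A)
          (left_mem_Icc.2 zero_le_one) t.2
        simp only [prim_apply, ContinuousMap.add_apply]
        rw [← intervalIntegral.integral_add h1 h2]
        apply intervalIntegral.integral_congr_ae
        have := (ae_restrict_iff' measurableSet_Icc).1 (Lp.coeFn_add w w')
        filter_upwards [this] with s hs hs'
        rw [uIoc_of_le t.2.1] at hs'
        rw [hs ⟨hs'.1.le, hs'.2.trans t.2.2⟩]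
        simp)
      (by
        intro c w A
        ext t
        simp only [prim_apply, ContinuousMap.smul_apply]
        rw [← intervalIntegral.integral_smul]
        apply intervalIntegral.integral_congr_ae
        have := (ae_restrict_iff' measurableSet_Icc).1 (Lp.coeFn_smul c w)
        filter_upwards [this] with s hs hs'
        rw [uIoc_of_le t.2.1] at hs'
        rw [hs ⟨hs'.1.le, hs'.2.trans t.2.2⟩]
        simp)
      (by
        intro w A A'
        ext t
        have h1 := ii_of_mu (bint_integrable l w (L1.integrable_coeFn w) A)
          (left_mem_Icc.2 zero_le_one) t.2
        have h2 := ii_of_mu (bint_integrable l w (L1.integrable_coeFn w) A')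
          (left_mem_Icc.2 zero_le_one) t.2
        simp only [prim_apply, ContinuousMap.add_apply]
        rw [← intervalIntegral.integral_add h1 h2]
        simp)
      (by
        intro c w A
        ext t
        simp only [prim_apply, ContinuousMap.smul_apply]
        rw [← intervalIntegral.integral_smul]
        simp))
    ‖l‖ (by
      intro w A
      rw [ContinuousMap.norm_le _ (by positivity)]
      intro t
      simp only [LinearMap.mk₂_apply, prim_apply]
      have hw := L1.integrable_coeFn w
      calc _ ≤ ∫ s in (0:ℝ)..t, ‖l‖ * ‖A‖ * ‖w s‖ := by
            apply intervalIntegral.norm_integral_le_of_norm_le t.2.1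
            · refine Eventually.of_forall fun s _ => ?_
              refine (l.le_opNorm₂ _ _).trans ?_
              gcongr
              exact A.norm_coe_le_norm _
            · exact ii_of_mu (hw.norm.const_mul _) (left_mem_Icc.2 zero_le_one) t.2
        _ = ∫ s in Ioc (0:ℝ) t, ‖l‖ * ‖A‖ * ‖w s‖ := intervalIntegral.integral_of_le t.2.1
        _ ≤ ∫ s in Icc (0:ℝ) 1, ‖l‖ * ‖A‖ * ‖w s‖ := by
            apply setIntegral_mono_set
            · exact hw.norm.const_mul _
            · exact Eventually.of_forall fun s => by positivity
            · exact (show Ioc (0:ℝ) t ⊆ Icc 0 1 from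
                fun s hs => ⟨hs.1.le, hs.2.trans t.2.2⟩).eventuallyLE
        _ = ‖l‖ * ‖A‖ * ‖w‖ := by rw [integral_const_mul, L1.norm_eq_integral_norm]
        _ = _ := by ring)

theorem Bint_apply (l : G →L[ℝ] W →L[ℝ] E) (w : Lp W 1 mu) (A : C(unitInterval, G)) (t : unitInterval) :
    Bint l w A t = ∫ s in (0:ℝ)..t, l (A (prj s)) (w s) := rfl

end bint
end EPM

namespace EPM

/-- smooth globally Lipschitz control-linear field -/
structure Fld (G W E : Type) [NormedAddCommGroup G] [NormedSpace ℝ G] [NormedAddCommGroup W] [NormedSpace ℝ W]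
   [NormedAddCommGroup E] [NormedSpace ℝ E] where
  l : G →L[ℝ] W →L[ℝ] E
  hl : ‖l‖ ≤ 1
  Y : E → G
  smooth : ContDiff ℝ (⊤ : ℕ∞) Y
  L : NNReal
  lip : LipschitzWith L Y

section ode
variable {G W E : Type} [NormedAddCommGroup G] [NormedSpace ℝ G] [NormedAddCommGroup W] [NormedSpace ℝ W]
   [NormedAddCommGroup E] [NormedSpace ℝ E] [CompleteSpace E] [CompleteSpace W]

/-- weighted bound -/
theorem Bint_bound (l : G →L[ℝ] W →L[ℝ] E) (hl : ‖l‖ ≤ 1) (w : Lp W 1 mu) (A : C(unitInterval, G)) (g : ℝ → ℝ)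
    (hg : Continuous g)
    (hA : ∀ t : unitInterval, ‖A t‖ ≤ g t) (t : unitInterval) :
    ‖Bint l w A t‖ ≤ ∫ s in (0:ℝ)..t, ‖w s‖ * g s := by
  rw [Bint_apply]
  apply intervalIntegral.norm_integral_le_of_norm_le t.2.1
  · refine Eventually.of_forall fun s hs => ?_
    have hs' : s ∈ Icc (0:ℝ) 1 := ⟨hs.1.le, hs.2.trans t.2.2⟩
    have := hA (prj s)
    rw [prj_of_mem hs'] at this ⊢
    rw [mul_comm]
    calc _ ≤ ‖l‖ * ‖A ⟨s, hs'⟩‖ * ‖w s‖ := l.le_opNorm₂ _ _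
      _ ≤ 1 * g s * ‖w s‖ := by
        have := (norm_nonneg _).trans this
        gcongr
      _ = _ := by ring
  · have hw := (L1.integrable_coeFn w).norm
    have : IntervalIntegrable (fun s => ‖w s‖) volume 0 t :=
      ii_of_mu hw (left_mem_Icc.2 zero_le_one) t.2
    exact this.mul_continuousOn hg.continuousOn

/-- existence of a weight -/
theorem weight (f : Fld G W E) (w : Lp W 1 mu) : ∃ m : C(unitInterval, ℝ), (∀ t, 0 < m t) ∧
    ∀ (A : C(unitInterval, G)) (N : ℝ), 0 ≤ N →
      (∀ t, ‖A t‖ ≤ f.L * (m t * N)) → ∀ t, ‖Bint f.l w A t‖ ≤ m t * (N / 2) := by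
  have hw := (L1.integrable_coeFn w).norm.const_mul (f.L : ℝ)
  obtain ⟨m, hmc, hm0, hm⟩ := exists_weight (fun s => f.L * ‖w s‖)
    (ii_of_mu hw (left_mem_Icc.2 zero_le_one) (right_mem_Icc.2 zero_le_one))
    (fun t => by positivity)
  refine ⟨⟨fun t => m t, by fun_prop⟩, fun t => hm0 t, fun A N hN hA t => ?_⟩
  refine (Bint_bound f.l f.hl w A (fun s => f.L * (m s * N)) (by fun_prop) hA t).trans ?_
  have := hm t t.2
  calc ∫ s in (0:ℝ)..t, ‖w s‖ * (f.L * (m s * N))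
      = (∫ s in (0:ℝ)..t, f.L * ‖w s‖ * m s) * N := by
        rw [← intervalIntegral.integral_mul_const]; congr 1; ext s; ring
    _ ≤ (m t / 2) * N := by gcongr
    _ = _ := by simp; ring

/-- pointwise multiplication -/
def Mop (m : C(unitInterval, ℝ)) : C(unitInterval, E) →L[ℝ] C(unitInterval, E) :=
  pw (ContinuousLinearMap.lsmul ℝ ℝ) m

@[simp] theorem Mop_apply (m : C(unitInterval, ℝ)) (η : C(unitInterval, E)) (t) :
    Mop m η t = m t • η t := rfl

/-- inverse weight -/
def minv (m : C(unitInterval, ℝ)) (hm : ∀ t, 0 < m t) : C(unitInterval, ℝ) :=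
  ⟨fun t => (m t)⁻¹, m.continuous.inv₀ (fun t => (hm t).ne')⟩

@[simp] theorem minv_apply (m : C(unitInterval, ℝ)) (hm : ∀ t, 0 < m t) (t) :
  minv m hm t = (m t)⁻¹ := rfl

theorem Mop_minv (m : C(unitInterval, ℝ)) (hm : ∀ t, 0 < m t) (η : C(unitInterval, E)) :
    Mop m (Mop (minv m hm) η) = η := by
  ext t; simp [(hm t).ne']

theorem minv_Mop (m : C(unitInterval, ℝ)) (hm : ∀ t, 0 < m t) (η : C(unitInterval, E)) :
    Mop (minv m hm) (Mop m η) = η := by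
  ext t; simp [(hm t).ne']

/-- constant functions -/
def cst : E →L[ℝ] C(unitInterval, E) := ContinuousLinearMap.const ℝ unitInterval

@[simp] theorem cst_apply (y : E) (t) : (cst y : C(unitInterval, E)) t = y := rfl

/-- Picard map -/
def pic (f : Fld G W E) (w : Lp W 1 mu) (y : E) (γ : C(unitInterval, E)) : C(unitInterval, E) :=
  cst y + Bint f.l w (sup f.Y f.smooth.continuous γ)

theorem pic_exists_unique (f : Fld G W E) (w : Lp W 1 mu) (y : E) :
    ∃! γ, pic f w y γ = γ := by
  obtain ⟨m, hm, hB⟩ := weight f w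
  let S : C(unitInterval, E) → C(unitInterval, E) :=
    fun η => Mop (minv m hm) (pic f w y (Mop m η))
  have hS : ContractingWith (1/2) S := by
    refine ⟨by rw [← NNReal.coe_lt_coe]; norm_num, LipschitzWith.of_dist_le_mul fun η η' => ?_⟩
    rw [dist_eq_norm, dist_eq_norm, ContinuousMap.norm_le _ (by positivity)]
    intro t
    have h1 := hB (sup f.Y f.smooth.continuous (Mop m η) - sup f.Y f.smooth.continuous (Mop m η'))
      ‖η - η'‖ (norm_nonneg _) (fun t => by
        have := f.lip.dist_le_mul (Mop m η t) (Mop m η' t)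
        rw [dist_eq_norm, dist_eq_norm] at this
        refine this.trans ?_
        gcongr
        rw [Mop_apply, Mop_apply, ← smul_sub, norm_smul, Real.norm_of_nonneg (hm t).le]
        gcongr
        · exact (hm t).le
        · exact (η - η').norm_coe_le_norm t) t
    have h2 : (S η - S η') t = (m t)⁻¹ • Bint f.l w (sup f.Y f.smooth.continuous (Mop m η) - sup f.Y f.smooth.continuous (Mop m η')) t := by
      simp [S, pic, smul_sub]
    rw [h2, norm_smul, norm_inv, Real.norm_of_nonneg (hm t).le]
    have := hm t
    calc _ ≤ (m t)⁻¹ * (m t * (‖η - η'‖ / 2)) := by gcongr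
      _ = _ := by
        field_simp
        push_cast
        ring
  refine ⟨Mop m (hS.fixedPoint S), ?_, ?_⟩
  · have := hS.fixedPoint_isFixedPt
    have h2 : Mop m (S (hS.fixedPoint S)) = Mop m (hS.fixedPoint S) := by rw [this]
    simpa [S, Mop_minv] using h2
  · intro γ hγ
    have : Function.IsFixedPt S (Mop (minv m hm) γ) := by
      show S _ = _
      simp only [S, Mop_minv, hγ]
    rw [← hS.fixedPoint_unique this, Mop_minv]

/-- the solution -/
def sol (f : Fld G W E) (w : Lp W 1 mu) (y : E) : C(unitInterval, E) :=
  (pic_exists_unique f w y).choose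

theorem sol_spec (f : Fld G W E) (w : Lp W 1 mu) (y : E) : pic f w y (sol f w y) = sol f w y :=
  (pic_exists_unique f w y).choose_spec.1

theorem sol_unique (f : Fld G W E) (w : Lp W 1 mu) (y : E) {γ} (h : pic f w y γ = γ) :
    γ = sol f w y :=
  (pic_exists_unique f w y).choose_spec.2 _ h

/-- the implicit equation -/
def impl (f : Fld G W E) (q : (Lp W 1 mu × E) × C(unitInterval, E)) : C(unitInterval, E) :=
  q.2 - pic f q.1.1 q.1.2 q.2

theorem impl_contDiff (f : Fld G W E) : ContDiff ℝ (⊤ : ℕ∞) (impl f) := by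
  have h1 : ContDiff ℝ (⊤ : ℕ∞) (fun q : (Lp W 1 mu × E) × C(unitInterval, E) =>
      sup f.Y f.smooth.continuous q.2) := (sup_contDiff f.Y f.smooth).comp contDiff_snd
  have h2 : ContDiff ℝ (⊤ : ℕ∞) (fun q : (Lp W 1 mu × E) × C(unitInterval, E) =>
      (Bint f.l q.1.1 (sup f.Y f.smooth.continuous q.2))) :=
    (Bint f.l).isBoundedBilinearMap.contDiff.comp
      ((contDiff_fst.comp contDiff_fst).prodMk h1)
  have h3 : ContDiff ℝ (⊤ : ℕ∞) (fun q : (Lp W 1 mu × E) × C(unitInterval, E) =>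
      (cst q.1.2)) := ContDiff.comp (g := fun y : E => (cst y : C(unitInterval, E)))
      (cst (E := E)).contDiff (contDiff_snd.comp contDiff_fst)
  exact contDiff_snd.sub (h3.add h2)

theorem sol_contDiff (f : Fld G W E) :
    ContDiff ℝ (⊤ : ℕ∞) (fun q : Lp W 1 mu × E => sol f q.1 q.2) := by
  rw [contDiff_iff_contDiffAt]
  rintro ⟨w, y⟩
  set γ := sol f w y with hγ
  have cdf : ContDiffAt ℝ (⊤ : ℕ∞) (impl f) ((w, y), γ) := (impl_contDiff f).contDiffAt
  have pn : ((⊤ : ℕ∞) : WithTop ℕ∞) ≠ 0 := by simp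
  have hYc : Continuous (fderiv ℝ f.Y) := f.smooth.continuous_fderiv (by simp)
  set K : C(unitInterval, E) →L[ℝ] C(unitInterval, E) :=
    (Bint f.l w).comp (pw (ContinuousLinearMap.id ℝ (E →L[ℝ] G))
        (sup (fderiv ℝ f.Y) hYc γ)) with hK
  have hder : fderiv ℝ (impl f) ((w, y), γ) ∘L .inr ℝ (Lp W 1 mu × E) C(unitInterval, E)
      = 1 - K := by
    have h1 : HasFDerivAt (fun η => impl f ((w, y), η))
        (fderiv ℝ (impl f) ((w, y), γ) ∘L .inr ℝ (Lp W 1 mu × E) C(unitInterval, E)) γ := by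
      have ha : HasFDerivAt (impl f) (fderiv ℝ (impl f) ((w, y), γ)) ((w, y), γ) :=
        (cdf.differentiableAt pn).hasFDerivAt
      exact ha.comp γ (hasFDerivAt_prodMk_right (w, y) γ)
    have h2 : HasFDerivAt (fun η => impl f ((w, y), η)) (1 - K) γ := by
      have hs := sup_hasFDerivAt (α := unitInterval) f.Y (f.smooth.of_le (by exact_mod_cast le_top)) γ
      have := ((Bint f.l w).hasFDerivAt.comp γ hs).const_add (cst y)
      exact (hasFDerivAt_id γ).sub this
    exact h1.unique h2
  have hinv : (fderiv ℝ (impl f) ((w, y), γ) ∘L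
      .inr ℝ (Lp W 1 mu × E) C(unitInterval, E)).IsInvertible := by
    rw [hder]
    obtain ⟨m, hm, hB⟩ := weight f w
    set K' := Mop (minv m hm) * K * Mop m with hK'
    have hn : ‖K'‖ < 1 := by
      refine lt_of_le_of_lt (ContinuousLinearMap.opNorm_le_bound _ (M := 1/2) (by norm_num) ?_)
        (by norm_num)
      intro η
      rw [ContinuousMap.norm_le _ (by positivity)]
      intro t
      have h1 := hB (pw (ContinuousLinearMap.id ℝ (E →L[ℝ] G))
        (sup (fderiv ℝ f.Y) hYc γ) (Mop m η)) ‖η‖ (norm_nonneg _) (fun t => by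
          simp only [pw_apply, ContinuousLinearMap.id_apply, sup_apply, Mop_apply]
          refine (ContinuousLinearMap.le_opNorm _ _).trans ?_
          rw [norm_smul, Real.norm_of_nonneg (hm t).le]
          have := norm_fderiv_le_of_lipschitz (𝕜 := ℝ) f.lip (x₀ := γ t)
          have := hm t
          gcongr
          exact η.norm_coe_le_norm t) t
      have h2 : K' η t = (m t)⁻¹ • Bint f.l w (pw (ContinuousLinearMap.id ℝ (E →L[ℝ] G))
        (sup (fderiv ℝ f.Y) hYc γ) (Mop m η)) t := rfl
      rw [h2, norm_smul, norm_inv, Real.norm_of_nonneg (hm t).le]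
      have := hm t
      calc _ ≤ (m t)⁻¹ * (m t * (‖η‖ / 2)) := by gcongr
        _ = _ := by
          field_simp
    obtain ⟨u, hu⟩ := isUnit_one_sub_of_norm_lt_one (R := C(unitInterval, E) →L[ℝ] C(unitInterval, E)) hn
    have e1 : (1 - K') * (↑u⁻¹ : _ →L[ℝ] _) = 1 := by rw [← hu]; exact u.mul_inv
    have e2 : (↑u⁻¹ : _ →L[ℝ] _) * (1 - K') = 1 := by rw [← hu]; exact u.inv_mul
    have m1 : (Mop m : C(unitInterval, E) →L[ℝ] _) * Mop (minv m hm) = 1 := by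
      ext1 η; exact Mop_minv m hm η
    have m2 : (Mop (minv m hm) : C(unitInterval, E) →L[ℝ] _) * Mop m = 1 := by
      ext1 η; exact minv_Mop m hm η
    have e3 : 1 - K = Mop m * (1 - K') * Mop (minv m hm) := by
      rw [mul_sub, sub_mul, mul_one, m1, hK']
      congr 1
      calc K = (Mop m * Mop (minv m hm)) * K * (Mop m * Mop (minv m hm)) := by rw [m1]; simp
        _ = _ := by simp only [mul_assoc]
    refine ContinuousLinearMap.IsInvertible.of_inverse (g := Mop m * (↑u⁻¹ : C(unitInterval, E) →L[ℝ] C(unitInterval, E)) * Mop (minv m hm)) ?_ ?_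
    · change (1 - K) * _ = 1
      rw [e3]
      calc _ = Mop m * ((1 - K') * ((Mop (minv m hm) * Mop m) * ↑u⁻¹)) * Mop (minv m hm) := by
            simp only [mul_assoc]
        _ = 1 := by rw [m2, one_mul, e1, mul_one, m1]
    · change _ * (1 - K) = 1
      rw [e3]
      calc _ = Mop m * (↑u⁻¹ * ((Mop (minv m hm) * Mop m) * (1 - K'))) * Mop (minv m hm) := by
            simp only [mul_assoc]
        _ = 1 := by rw [m2, one_mul, e2, mul_one, m1]
  have hcd := cdf.contDiffAt_implicitFunction pn hinv
  have hev := cdf.eventually_apply_implicitFunction pn hinv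
  refine hcd.congr_of_eventuallyEq ?_
  filter_upwards [hev] with q hq
  symm
  apply sol_unique
  have h0 : impl f ((w, y), γ) = 0 := by
    simp only [impl]
    rw [hγ, sol_spec, sub_self]
  rw [h0] at hq
  exact (sub_eq_zero.1 hq).symm

end ode
end EPM

namespace EPM

instance : IsProbabilityMeasure mu := ⟨by simp [mu]⟩

section rep
variable {V : Type} [NormedAddCommGroup V] [NormedSpace ℝ V]
variable {p : ENNReal} [hp : Fact (1 ≤ p)]

theorem map_aff (a c : ℝ) (hc : c ≠ 0) :
    Measure.map (fun t : ℝ => a + c * t) volume = ENNReal.ofReal |c⁻¹| • volume := by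
  have h1 : (fun t : ℝ => a + c * t) = (fun t => a + t) ∘ (fun t => c * t) := rfl
  rw [h1, ← Measure.map_map (by fun_prop) (by fun_prop), Real.map_volume_mul_left hc,
    Measure.map_smul, map_add_left_eq_self]

theorem qmp_aff (a c : ℝ) (hc : c ≠ 0) :
    Measure.QuasiMeasurePreserving (fun t : ℝ => a + c * t) volume volume := by
  refine ⟨by fun_prop, ?_⟩
  rw [map_aff a c hc]
  exact Measure.smul_absolutelyContinuous

/-- norm bound constant -/
def nR (p : ENNReal) (c : ℝ) : ℝ := |c| * |c⁻¹| ^ (1 / p).toReal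

theorem nR_nonneg (p : ENNReal) (c : ℝ) : 0 ≤ nR p c := by unfold nR; positivity

/-- affine reparametrization of a function -/
def Rfun (a c : ℝ) (f : ℝ → V) : ℝ → V := fun t => c • f (a + c * t)

theorem Rfun_norm (a c : ℝ) (f : ℝ → V) (hf : AEStronglyMeasurable f volume) :
    eLpNorm (Rfun a c f) p mu ≤ ENNReal.ofReal (nR p c) * eLpNorm f p volume := by
  by_cases hc : c = 0
  · subst hc
    have : Rfun 0 0 f = 0 := by ext; simp [Rfun]
    have : Rfun a 0 f = 0 := by ext; simp [Rfun]
    simp [this]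
  refine (eLpNorm_mono_measure _ Measure.restrict_le_self).trans ?_
  have h1 : Rfun a c f = c • (f ∘ (fun t => a + c * t)) := rfl
  have h2 : AEStronglyMeasurable f (Measure.map (fun t : ℝ => a + c * t) volume) := by
    rw [map_aff a c hc]; exact hf.smul_measure _
  rw [h1, eLpNorm_const_smul, ← eLpNorm_map_measure h2 (by fun_prop), map_aff a c hc,
    eLpNorm_smul_measure_of_ne_zero (by simp [hc]), smul_eq_mul, ← mul_assoc, nR,
    ENNReal.ofReal_mul (abs_nonneg _), ENNReal.ofReal_rpow_of_nonneg (abs_nonneg _) (by positivity),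
    ← Real.norm_eq_abs c, ofReal_norm]

theorem Rfun_memLp (a c : ℝ) (f : ℝ → V) (hf : MemLp f p volume) :
    MemLp (Rfun a c f) p mu := by
  constructor
  · by_cases hc : c = 0
    · subst hc
      have : Rfun a 0 f = 0 := by ext; simp [Rfun]
      rw [this]; exact aestronglyMeasurable_zero
    · have : AEStronglyMeasurable (f ∘ (fun t => a + c * t)) volume :=
        hf.1.comp_quasiMeasurePreserving (qmp_aff a c hc)
      exact (this.const_smul c).restrict
  · refine (Rfun_norm a c f hf.1).trans_lt (ENNReal.mul_lt_top (by simp) hf.2)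

/-- extension by zero -/
def ext0 (u : ℝ → V) : ℝ → V := indicator (Icc (0:ℝ) 1) u

theorem ext0_memLp (u : Lp V p mu) : MemLp (ext0 u) p volume :=
  (memLp_indicator_iff_restrict measurableSet_Icc).2 (Lp.memLp u)

theorem ext0_norm (u : Lp V p mu) : eLpNorm (ext0 u) p volume = eLpNorm u p mu :=
  eLpNorm_indicator_eq_eLpNorm_restrict measurableSet_Icc

theorem ext0_congr {u v : ℝ → V} (h : u =ᵐ[mu] v) : ext0 u =ᵐ[volume] ext0 v := by
  have := (ae_restrict_iff' measurableSet_Icc).1 h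
  filter_upwards [this] with t ht
  by_cases h : t ∈ Icc (0:ℝ) 1
  · simp [ext0, h, ht h]
  · simp [ext0, h]

theorem Rfun_congr (a c : ℝ) {f g : ℝ → V} (h : f =ᵐ[volume] g) : Rfun a c f =ᵐ[mu] Rfun a c g := by
  apply ae_restrict_of_ae
  by_cases hc : c = 0
  · subst hc
    simp [Rfun]
  · filter_upwards [(qmp_aff a c hc).ae h] with t ht
    simp [Rfun, ht]

/-- the reparametrization operator -/
def Rop (a c : ℝ) : Lp V p mu →L[ℝ] Lp V p mu :=
  LinearMap.mkContinuous
    { toFun := fun u => (Rfun_memLp a c (ext0 u) (ext0_memLp u)).toLp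
      map_add' := by
        intro u v
        rw [← MemLp.toLp_add]
        apply MemLp.toLp_congr
        refine (Rfun_congr a c (ext0_congr (Lp.coeFn_add u v))).trans ?_
        refine Eventually.of_forall fun t => ?_
        simp only [Rfun, ext0, Pi.add_apply, ← smul_add]
        congr 1
        exact congrFun (indicator_add _ _ _) _
      map_smul' := by
        intro r u
        rw [RingHom.id_apply, ← MemLp.toLp_const_smul]
        apply MemLp.toLp_congr
        refine (Rfun_congr a c (ext0_congr (Lp.coeFn_smul r u))).trans ?_
        refine Eventually.of_forall fun t => ?_
        simp only [Rfun, ext0, Pi.smul_apply]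
        rw [smul_comm r c]
        congr 1
        exact congrFun (indicator_const_smul _ _ _) _ }
    (nR p c) (by
      intro u
      simp only [LinearMap.coe_mk, AddHom.coe_mk]
      rw [Lp.norm_toLp, Lp.norm_def, ← ENNReal.toReal_ofReal (nR_nonneg p c), ← ENNReal.toReal_mul]
      refine ENNReal.toReal_mono (ENNReal.mul_ne_top (by simp) (Lp.eLpNorm_ne_top u)) ?_
      rw [← ext0_norm]
      exact Rfun_norm a c _ (ext0_memLp u).1)

theorem Rop_norm (a c : ℝ) (u : Lp V p mu) : ‖Rop a c u‖ ≤ nR p c * ‖u‖ :=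
  (ContinuousLinearMap.le_of_opNorm_le _ (LinearMap.mkContinuous_norm_le _ (nR_nonneg p c) _) u)

theorem Rop_coe (a c : ℝ) (u : Lp V p mu) :
    Rop a c u =ᵐ[mu] fun t => c • ext0 u (a + c * t) :=
  MemLp.coeFn_toLp (Rfun_memLp a c (ext0 u) (ext0_memLp u))

theorem nR_continuousAt (c : ℝ) (hc : c ≠ 0) : ContinuousAt (nR p) c := by
  unfold nR
  refine continuousAt_id.abs.mul ?_
  refine ContinuousAt.rpow_const ((continuousAt_inv₀ hc).abs) (Or.inl ?_)
  simp [hc]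

/-- strong continuity -/
theorem Rop_strong (hpt : p ≠ ⊤) (u : Lp V p mu) (a c : ℝ) (hc : c ≠ 0) :
    ContinuousAt (fun q : ℝ × ℝ => Rop q.1 q.2 u) (a, c) := by
  rw [Metric.continuousAt_iff']
  intro ε hε
  set M := nR p c + 1 with hM
  have hM0 : 0 < M := by have := nR_nonneg p c; positivity
  obtain ⟨g, -, hg, hgc, hgm⟩ := (ext0_memLp u).exists_hasCompactSupport_eLpNorm_sub_le hpt
    (ε := ENNReal.ofReal (ε / (4 * M))) (by simp; positivity)
  have hd : AEStronglyMeasurable (ext0 u - g) volume := (ext0_memLp u).1.sub hgm.1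
  -- distance to the approximant
  have h1 : ∀ a' c' : ℝ, nR p c' < M → eLpNorm (⇑(Rop a' c' u) - Rfun a' c' g) p mu
      ≤ ENNReal.ofReal (ε / 4) := by
    intro a' c' hlt
    have e : (⇑(Rop a' c' u) - Rfun a' c' g) =ᵐ[mu] Rfun a' c' (ext0 u - g) := by
      filter_upwards [Rop_coe a' c' u] with t ht
      simp [ht, Rfun, smul_sub]
    rw [eLpNorm_congr_ae e]
    refine (Rfun_norm a' c' _ hd).trans ?_
    calc _ ≤ ENNReal.ofReal M * ENNReal.ofReal (ε / (4 * M)) := by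
          gcongr
      _ = ENNReal.ofReal (ε / 4) := by
        rw [← ENNReal.ofReal_mul hM0.le]; congr 1; field_simp
  have h2 : ∀ᶠ q : ℝ × ℝ in 𝓝 (a, c), nR p q.2 < M := by
    have : ContinuousAt (fun q : ℝ × ℝ => nR p q.2) (a, c) :=
      (nR_continuousAt (p := p) c hc).tendsto.comp
        (show Tendsto (fun q : ℝ × ℝ => q.2) (𝓝 (a, c)) (𝓝 c) from continuousAt_snd)
    exact this.eventually_lt continuousAt_const (by simp [hM])
  have h3 : ∀ᶠ q : ℝ × ℝ in 𝓝 (a, c), ∀ t ∈ Icc (0:ℝ) 1,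
      ‖Rfun q.1 q.2 g t - Rfun a c g t‖ < ε / 4 := by
    have hcont : Continuous (fun z : (ℝ × ℝ) × ℝ => ‖Rfun z.1.1 z.1.2 g z.2 - Rfun a c g z.2‖) := by
      unfold Rfun; fun_prop
    apply isCompact_Icc.eventually_forall_of_forall_eventually
    intro t ht
    exact hcont.continuousAt.eventually_lt continuousAt_const (by simp; positivity)
  filter_upwards [h2, h3] with q hq2 hq3
  have hb := eLpNorm_le_of_ae_bound (p := p) (μ := mu) (f := Rfun q.1 q.2 g - Rfun a c g) (C := ε / 4)
    ((ae_restrict_iff' measurableSet_Icc).2 (Eventually.of_forall fun t ht => (hq3 t ht).le))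
  have hq := h1 q.1 q.2 hq2
  have ha := h1 a c (by simp [hM])
  rw [dist_eq_norm, Lp.norm_def]
  have hsum : eLpNorm (⇑(Rop q.1 q.2 u - Rop a c u)) p mu ≤ ENNReal.ofReal (ε / 4 + ε / 4 + ε / 4) := by
    have m1 := (Rfun_memLp q.1 q.2 g hgm).1
    have m2 := (Rfun_memLp a c g hgm).1
    have m3 := (Lp.memLp (Rop q.1 q.2 u)).1
    have m4 := (Lp.memLp (Rop a c u)).1
    have e : (⇑(Rop q.1 q.2 u - Rop a c u)) =ᵐ[mu] (⇑(Rop q.1 q.2 u) - Rfun q.1 q.2 g)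
        + (Rfun q.1 q.2 g - Rfun a c g) - (⇑(Rop a c u) - Rfun a c g) := by
      filter_upwards [Lp.coeFn_sub (Rop q.1 q.2 u) (Rop a c u)] with t ht
      simp only [ht, Pi.sub_apply, Pi.add_apply]
      abel
    rw [eLpNorm_congr_ae e]
    refine (eLpNorm_sub_le ((m3.sub m1).add (m1.sub m2)) (m4.sub m2) hp.out).trans ?_
    rw [ENNReal.ofReal_add (by positivity) (by positivity),
      ENNReal.ofReal_add (by positivity) (by positivity)]
    refine add_le_add ((eLpNorm_add_le (m3.sub m1) (m1.sub m2) hp.out).trans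
      (add_le_add hq ?_)) ha
    simpa using hb
  calc _ ≤ (ENNReal.ofReal (ε / 4 + ε / 4 + ε / 4)).toReal :=
        ENNReal.toReal_mono (by simp) hsum
    _ = ε / 4 + ε / 4 + ε / 4 := ENNReal.toReal_ofReal (by positivity)
    _ < ε := by linarith

/-- joint continuity -/
theorem Rop_joint (hpt : p ≠ ⊤) (u : Lp V p mu) (a c : ℝ) (hc : c ≠ 0) :
    ContinuousAt (fun q : (ℝ × ℝ) × Lp V p mu => Rop q.1.1 q.1.2 q.2) ((a, c), u) := by
  have h1 := Rop_strong hpt u a c hc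
  have h2 : ContinuousAt (fun q : (ℝ × ℝ) × Lp V p mu => Rop q.1.1 q.1.2 u) ((a, c), u) :=
    ContinuousAt.comp (f := Prod.fst) (g := fun q : ℝ × ℝ => Rop q.1 q.2 u) h1 continuousAt_fst
  have h3 : Tendsto (fun q : (ℝ × ℝ) × Lp V p mu => Rop q.1.1 q.1.2 (q.2 - u)) (𝓝 ((a, c), u))
      (𝓝 0) := by
    have hb : ContinuousAt (fun q : (ℝ × ℝ) × Lp V p mu => nR p q.1.2 * ‖q.2 - u‖) ((a, c), u) := by
      refine ContinuousAt.mul ?_ (by fun_prop)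
      exact (nR_continuousAt (p := p) c hc).tendsto.comp
        (show Tendsto (fun q : (ℝ × ℝ) × Lp V p mu => q.1.2) (𝓝 ((a, c), u)) (𝓝 c) from
          (continuousAt_snd.comp continuousAt_fst))
    have hb' : Tendsto (fun q : (ℝ × ℝ) × Lp V p mu => nR p q.1.2 * ‖q.2 - u‖) (𝓝 ((a, c), u))
      (𝓝 0) := by simpa [ContinuousAt] using hb
    exact squeeze_zero_norm (fun q => Rop_norm _ _ _) hb'
  have := h2.tendsto.add h3
  simpa [ContinuousAt] using this

end rep
end EPM

namespace EPM

theorem clm_cd {A B C : Type} [NormedAddCommGroup A] [NormedSpace ℝ A]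
   [NormedAddCommGroup B] [NormedSpace ℝ B] [NormedAddCommGroup C] [NormedSpace ℝ C]
   (L : B →L[ℝ] C) {f : A → B} (hf : ContDiff ℝ (⊤ : ℕ∞) f) :
   ContDiff ℝ (⊤ : ℕ∞) (fun x => L (f x)) := ContDiff.comp (g := L) L.contDiff hf

/-- control system -/
structure Sys (V E : Type) [NormedAddCommGroup V] [NormedSpace ℝ V]
   [NormedAddCommGroup E] [NormedSpace ℝ E] where
  X0 : E → E
  Y : E → V →L[ℝ] E
  smooth0 : ContDiff ℝ (⊤ : ℕ∞) X0
  smooth : ContDiff ℝ (⊤ : ℕ∞) Y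
  L0 : NNReal
  lip0 : LipschitzWith L0 X0
  L : NNReal
  lip : LipschitzWith L Y

section flow
variable {V E : Type} [NormedAddCommGroup V] [NormedSpace ℝ V] [CompleteSpace V]
   [NormedAddCommGroup E] [NormedSpace ℝ E] [CompleteSpace E]
variable {p : ENNReal} [hp : Fact (1 ≤ p)]

/-- combined field as linear function -/
def comb : (E × (V →L[ℝ] E)) →L[ℝ] ((ℝ × V) →L[ℝ] E) :=
  ((ContinuousLinearMap.smulRightL ℝ (ℝ × V) E (ContinuousLinearMap.fst ℝ ℝ V)).comp
      (ContinuousLinearMap.fst ℝ E (V →L[ℝ] E)))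
    + (((ContinuousLinearMap.compL ℝ (ℝ × V) V E).flip (ContinuousLinearMap.snd ℝ ℝ V)).comp
      (ContinuousLinearMap.snd ℝ E (V →L[ℝ] E)))

theorem comb_apply (a : E) (B : V →L[ℝ] E) (r : ℝ) (v : V) :
    comb (a, B) (r, v) = r • a + B v := by
  simp [comb]

/-- the field of a system -/
def Sys.fld (S : Sys V E) : Fld ((ℝ × V) →L[ℝ] E) (ℝ × V) E where
  l := ContinuousLinearMap.id ℝ _
  hl := ContinuousLinearMap.norm_id_le
  Y := fun y => comb (S.X0 y, S.Y y)
  smooth := clm_cd comb (S.smooth0.prodMk S.smooth)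
  L := ‖(comb : (E × (V →L[ℝ] E)) →L[ℝ] ((ℝ × V) →L[ℝ] E))‖₊ * max S.L0 S.L
  lip := (ContinuousLinearMap.lipschitz _).comp (S.lip0.prodMk S.lip)

/-- inclusion into L1 -/
def incl : Lp V p mu →L[ℝ] Lp V 1 mu :=
  LinearMap.mkContinuous
    { toFun := fun u => ((Lp.memLp u).mono_exponent hp.out).toLp
      map_add' := by
        intro u v
        rw [← MemLp.toLp_add]
        exact MemLp.toLp_congr _ _ (Lp.coeFn_add u v)
      map_smul' := by
        intro r u
        rw [RingHom.id_apply, ← MemLp.toLp_const_smul]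
        exact MemLp.toLp_congr _ _ (Lp.coeFn_smul r u) } 1 (by
      intro u
      simp only [LinearMap.coe_mk, AddHom.coe_mk]
      rw [Lp.norm_toLp, Lp.norm_def, one_mul]
      refine ENNReal.toReal_mono (Lp.eLpNorm_ne_top u) ?_
      exact eLpNorm_le_eLpNorm_of_exponent_le hp.out (Lp.memLp u).1)

theorem incl_coe (u : Lp V p mu) : incl u =ᵐ[mu] u :=
  MemLp.coeFn_toLp ((Lp.memLp u).mono_exponent hp.out)

/-- the embedding of controls -/
def iot : (ℝ × Lp V p mu) →L[ℝ] Lp (ℝ × V) 1 mu :=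
  ((Lp.constL 1 mu ℝ).comp (ContinuousLinearMap.inl ℝ ℝ V)).comp
      (ContinuousLinearMap.fst ℝ ℝ (Lp V p mu))
    + (((ContinuousLinearMap.inr ℝ ℝ V).compLpL 1 mu).comp incl).comp
      (ContinuousLinearMap.snd ℝ ℝ (Lp V p mu))

theorem iot_coe (r : ℝ) (u : Lp V p mu) : iot (r, u) =ᵐ[mu] fun s => (r, u s) := by
  have h1 : iot (r, u) = Lp.const 1 mu ((r, 0) : ℝ × V)
      + (ContinuousLinearMap.inr ℝ ℝ V).compLpL 1 mu (incl u) := rfl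
  rw [h1]
  filter_upwards [Lp.coeFn_add (Lp.const 1 mu ((r, 0) : ℝ × V))
      ((ContinuousLinearMap.inr ℝ ℝ V).compLpL 1 mu (incl u)), Lp.coeFn_const 1 mu ((r, 0) : ℝ × V),
    (ContinuousLinearMap.inr ℝ ℝ V).coeFn_compLpL (incl u), incl_coe u] with s h1 h2 h3 h4
  rw [h1, Pi.add_apply, h2, h3, h4]
  simp

/-- trajectory -/
def Sys.traj (S : Sys V E) (r : ℝ) (u : Lp V p mu) (y : E) : C(unitInterval, E) :=
  sol S.fld (iot (r, u)) y

/-- endpoint -/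
def Sys.Phi (S : Sys V E) (q : ℝ × Lp V p mu × E) : E := S.traj q.1 q.2.1 q.2.2 1

theorem Sys.traj_contDiff (S : Sys V E) :
    ContDiff ℝ (⊤ : ℕ∞) (fun q : ℝ × Lp V p mu × E => S.traj q.1 q.2.1 q.2.2) := by
  have h := sol_contDiff S.fld
  have h2 : ContDiff ℝ (⊤ : ℕ∞) (fun q : ℝ × Lp V p mu × E => (iot (q.1, q.2.1), q.2.2)) :=
    (clm_cd (A := ℝ × Lp V p mu × E) (iot : (ℝ × Lp V p mu) →L[ℝ] Lp (ℝ × V) 1 mu)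
      (f := fun q => (q.1, q.2.1))
      (contDiff_fst.prodMk (contDiff_fst.comp contDiff_snd))).prodMk
      (contDiff_snd.comp contDiff_snd)
  exact h.comp h2

theorem Sys.Phi_contDiff (S : Sys V E) :
    ContDiff ℝ (⊤ : ℕ∞) (S.Phi (p := p)) :=
  clm_cd (ContinuousMap.evalCLM ℝ (1 : unitInterval)) S.traj_contDiff

/-- trajectory predicate -/
def Sys.Tr (S : Sys V E) (r : ℝ) (u : ℝ → V) (y : E) (γ : ℝ → E) : Prop :=
  ContinuousOn γ (Icc 0 1) ∧
    ∀ t ∈ Icc (0:ℝ) 1, γ t = y + ∫ s in (0:ℝ)..t, (r • S.X0 (γ s) + S.Y (γ s) (u s))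

theorem Sys.tr_pic (S : Sys V E) (r : ℝ) (u : Lp V p mu) (y : E) (γ : C(unitInterval, E))
    (t : unitInterval) :
    pic S.fld (iot (r, u)) y γ t = y + ∫ s in (0:ℝ)..t, (r • S.X0 (γ (prj s)) + S.Y (γ (prj s)) (u s)) := by
  simp only [pic, ContinuousMap.add_apply, cst_apply, Bint_apply, sup_apply]
  congr 1
  apply intervalIntegral.integral_congr_ae
  filter_upwards [(ae_restrict_iff' measurableSet_Icc).1 (iot_coe r u)] with s hs hs'
  rw [uIoc_of_le t.2.1] at hs'
  rw [hs ⟨hs'.1.le, hs'.2.trans t.2.2⟩]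
  exact comb_apply _ _ _ _

theorem Sys.traj_tr (S : Sys V E) (r : ℝ) (u : Lp V p mu) (y : E) :
    S.Tr r u y (fun t => S.traj r u y (prj t)) := by
  refine ⟨((S.traj r u y).continuous.comp continuous_projIcc).continuousOn, fun t ht => ?_⟩
  have h1 := S.tr_pic r u y (S.traj r u y) (prj t)
  have h2 : pic S.fld (iot (r, u)) y (S.traj r u y) = S.traj r u y := sol_spec _ _ _
  rw [h2] at h1
  show S.traj r u y (prj t) = _
  rw [h1, prj_of_mem ht]

theorem Sys.tr_unique (S : Sys V E) {r : ℝ} {u : Lp V p mu} {y : E} {γ : ℝ → E}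
    (h : S.Tr r u y γ) : ∀ t ∈ Icc (0:ℝ) 1, γ t = S.traj r u y (prj t) := by
  let γ' : C(unitInterval, E) := ⟨fun t => γ t, continuousOn_iff_continuous_domRestrict.1 h.1⟩
  have h1 : γ' = S.traj r u y := by
    apply sol_unique
    ext t
    rw [S.tr_pic]
    change _ = γ t
    rw [h.2 t t.2]
    congr 1
    apply intervalIntegral.integral_congr
    intro s hs
    rw [uIcc_of_le t.2.1] at hs
    have : γ' (prj s) = γ s := by
      rw [prj_of_mem ⟨hs.1, hs.2.trans t.2.2⟩]; rfl
    simp [this]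
  intro t ht
  rw [← h1, prj_of_mem ht]; rfl

theorem Sys.Phi_eq (S : Sys V E) {r : ℝ} {u : Lp V p mu} {y : E} {γ : ℝ → E}
    (h : S.Tr r u y γ) : γ 1 = S.Phi (r, u, y) := by
  rw [S.tr_unique h 1 (right_mem_Icc.2 zero_le_one), prj_of_mem (right_mem_Icc.2 zero_le_one)]; rfl

theorem Sys.traj_zero (S : Sys V E) (r : ℝ) (u : Lp V p mu) (y : E) : S.traj r u y 0 = y := by
  have := (S.traj_tr r u y).2 0 (left_mem_Icc.2 zero_le_one)
  simp only [prj_of_mem (left_mem_Icc.2 zero_le_one)] at this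
  simpa using this

theorem Tr_ae (S : Sys V E) {r : ℝ} {u v : ℝ → V} {y : E} {γ : ℝ → E} (h : S.Tr r u y γ)
    (huv : u =ᵐ[mu] v) : S.Tr r v y γ := by
  refine ⟨h.1, fun t ht => ?_⟩
  rw [h.2 t ht]
  congr 1
  apply intervalIntegral.integral_congr_ae
  filter_upwards [(ae_restrict_iff' measurableSet_Icc).1 huv] with s hs hs'
  rw [uIoc_of_le ht.1] at hs'
  rw [hs ⟨hs'.1.le, hs'.2.trans ht.2⟩]

/-- integrability along a trajectory -/
theorem Sys.integ (S : Sys V E) (r : ℝ) (u : Lp V p mu) {γ : ℝ → E}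
    (h : ContinuousOn γ (Icc 0 1)) :
    IntegrableOn (fun s => r • S.X0 (γ s) + S.Y (γ s) (u s)) (Icc 0 1) volume := by
  let γ' : C(unitInterval, E) := ⟨fun t => γ t, continuousOn_iff_continuous_domRestrict.1 h⟩
  have h1 := bint_integrable S.fld.l (iot (r, u)) (L1.integrable_coeFn _)
    (sup S.fld.Y S.fld.smooth.continuous γ')
  refine Integrable.congr h1 ?_
  filter_upwards [iot_coe r u, ae_restrict_mem measurableSet_Icc] with s hs hs'
  rw [hs, prj_of_mem hs']
  exact comb_apply _ _ _ _

/-- affine restriction of a trajectory -/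
theorem Sys.Tr_affine (S : Sys V E) {r : ℝ} {u : Lp V p mu} {y : E} {γ : ℝ → E} (h : S.Tr r u y γ)
    (a c : ℝ) (ha : a ∈ Icc (0:ℝ) 1) (hac : a + c ∈ Icc (0:ℝ) 1) :
    S.Tr (c * r) (fun t => c • u (a + c * t)) (γ a) (fun t => γ (a + c * t)) := by
  have hmem : ∀ t ∈ Icc (0:ℝ) 1, a + c * t ∈ Icc (0:ℝ) 1 := by
    intro t ht
    constructor
    · nlinarith [ht.1, ht.2, ha.1, hac.1]
    · nlinarith [ht.1, ht.2, ha.2, hac.2]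
  refine ⟨h.1.comp (by fun_prop) hmem, fun t ht => ?_⟩
  have hi := S.integ r u h.1
  have hii : ∀ b ∈ Icc (0:ℝ) 1, ∀ b' ∈ Icc (0:ℝ) 1, IntervalIntegrable
      (fun s => r • S.X0 (γ s) + S.Y (γ s) (u s)) volume b b' :=
    fun b hb b' hb' => ii_of_mu hi hb hb'
  have h0 := left_mem_Icc.2 (zero_le_one (α := ℝ))
  show γ (a + c * t) = _
  rw [h.2 _ (hmem t ht), h.2 a ha, ← intervalIntegral.integral_add_adjacent_intervals
    (hii 0 h0 a ha) (hii a ha _ (hmem t ht)), ← add_assoc]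
  congr 1
  have := intervalIntegral.smul_integral_comp_add_mul
    (fun s => r • S.X0 (γ s) + S.Y (γ s) (u s)) (a := 0) (b := t) c a
  rw [mul_zero, add_zero] at this
  rw [← this, ← intervalIntegral.integral_smul]
  congr 1
  ext s
  simp [smul_smul, smul_add]

theorem Sys.Phi_affine (S : Sys V E) (r : ℝ) (u v : Lp V p mu) (y : E)
    (a c : ℝ) (ha : a ∈ Icc (0:ℝ) 1) (hac : a + c ∈ Icc (0:ℝ) 1)
    (hv : v =ᵐ[mu] fun t => c • u (a + c * t)) :
    S.traj r u y ⟨a + c, hac⟩ = S.Phi (c * r, v, S.traj r u y ⟨a, ha⟩) := by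
  have h := S.Tr_affine (S.traj_tr r u y) a c ha hac
  have h2 := S.Phi_eq (Tr_ae S h hv.symm)
  simp only [mul_one, prj_of_mem ha, prj_of_mem hac] at h2
  exact h2

/-- concatenation -/
def Gop (τ : ℝ) (q u : Lp V p mu) : Lp V p mu :=
  Rop 0 τ⁻¹ q + Rop (-τ / (1 - τ)) (1 - τ)⁻¹ u

theorem Gop_coe (τ : ℝ) (q u : Lp V p mu) : Gop τ q u =ᵐ[mu] fun t =>
    τ⁻¹ • ext0 q (τ⁻¹ * t) + (1 - τ)⁻¹ • ext0 u (-τ / (1 - τ) + (1 - τ)⁻¹ * t) := by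
  filter_upwards [Lp.coeFn_add (Rop 0 τ⁻¹ q) (Rop (-τ / (1 - τ)) (1 - τ)⁻¹ u), Rop_coe 0 τ⁻¹ q,
    Rop_coe (-τ / (1 - τ)) (1 - τ)⁻¹ u] with t h1 h2 h3
  rw [Gop, h1, Pi.add_apply, h2, h3, zero_add]

theorem ae_pull {P : ℝ → Prop} (h : ∀ᵐ t ∂mu, P t) (a c : ℝ) (hc : c ≠ 0) (ha : a ∈ Icc (0:ℝ) 1)
    (hac : a + c ∈ Icc (0:ℝ) 1) : ∀ᵐ t ∂mu, P (a + c * t) := by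
  have h1 := (qmp_aff a c hc).ae ((ae_restrict_iff' measurableSet_Icc).1 h)
  refine (ae_restrict_iff' measurableSet_Icc).2 ?_
  filter_upwards [h1] with t ht ht'
  apply ht
  constructor
  · nlinarith [ht'.1, ht'.2, ha.1, hac.1]
  · nlinarith [ht'.1, ht'.2, ha.2, hac.2]

theorem Gop_first (τ : ℝ) (h0 : 0 < τ) (h1 : τ < 1) (q u : Lp V p mu) :
    q =ᵐ[mu] fun t => τ • Gop τ q u (0 + τ * t) := by
  have := ae_pull (Gop_coe τ q u) 0 τ h0.ne' (by simp) (by constructor <;> linarith)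
  have hne : ∀ᵐ t ∂mu, t ≠ 1 := ae_restrict_of_ae (by simp [ae_iff])
  filter_upwards [this, ae_restrict_mem measurableSet_Icc, hne] with t ht ht' htn
  have e1 : τ⁻¹ * (0 + τ * t) = t := by field_simp; ring
  have e2 : -τ / (1 - τ) + (1 - τ)⁻¹ * (0 + τ * t) ∉ Icc (0:ℝ) 1 := by
    have h1τ : 0 < 1 - τ := by linarith
    have hlt : t < 1 := lt_of_le_of_ne ht'.2 htn
    have : -τ / (1 - τ) + (1 - τ)⁻¹ * (0 + τ * t) = - (τ * (1 - t) / (1 - τ)) := by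
      field_simp; ring
    rw [this]
    have : 0 < τ * (1 - t) / (1 - τ) := div_pos (mul_pos h0 (by linarith)) h1τ
    intro h; linarith [h.1]
  rw [ht, e1, ext0, ext0, indicator_of_mem ht', indicator_of_notMem e2]
  simp [smul_smul, h0.ne']

theorem Gop_second (τ : ℝ) (h0 : 0 < τ) (h1 : τ < 1) (q u : Lp V p mu) :
    u =ᵐ[mu] fun t => (1 - τ) • Gop τ q u (τ + (1 - τ) * t) := by
  have h1τ : 0 < 1 - τ := by linarith
  have := ae_pull (Gop_coe τ q u) τ (1 - τ) h1τ.ne' ⟨h0.le, h1.le⟩ (by simp)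
  have hne : ∀ᵐ t ∂mu, t ≠ 0 := ae_restrict_of_ae (by simp [ae_iff])
  filter_upwards [this, ae_restrict_mem measurableSet_Icc, hne] with t ht ht' htn
  have e1 : -τ / (1 - τ) + (1 - τ)⁻¹ * (τ + (1 - τ) * t) = t := by field_simp; ring
  have e2 : τ⁻¹ * (τ + (1 - τ) * t) ∉ Icc (0:ℝ) 1 := by
    have hlt : 0 < t := lt_of_le_of_ne ht'.1 (Ne.symm htn)
    have : τ⁻¹ * (τ + (1 - τ) * t) = 1 + (1 - τ) * t / τ := by
      field_simp
    rw [this]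
    have : 0 < (1 - τ) * t / τ := div_pos (mul_pos h1τ (by linarith)) h0
    intro h; linarith [h.2]
  rw [ht, e1, ext0, ext0, indicator_of_mem ht', indicator_of_notMem e2]
  simp [smul_smul, h1τ.ne']

theorem Sys.Phi_Gop (S : Sys V E) (τ : ℝ) (h0 : 0 < τ) (h1 : τ < 1) (r : ℝ) (q u : Lp V p mu)
    (y : E) : S.Phi (r, Gop τ q u, y) = S.Phi ((1 - τ) * r, u, S.Phi (τ * r, q, y)) := by
  have e1 := S.Phi_affine r (Gop τ q u) q y 0 τ (by simp) (by constructor <;> linarith)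
    (Gop_first τ h0 h1 q u)
  have e2 := S.Phi_affine r (Gop τ q u) u y τ (1 - τ) ⟨h0.le, h1.le⟩ (by simp)
    (Gop_second τ h0 h1 q u)
  have e3 : S.traj r (Gop τ q u) y ⟨0, by simp⟩ = y := S.traj_zero _ _ _
  rw [e3] at e1
  rw [← e1]
  simp only [zero_add]
  rw [← e2]
  simp [Sys.Phi]

/-- time reversal -/
def rev : Lp V p mu →L[ℝ] Lp V p mu := Rop 1 (-1)

theorem rev_coe (u : Lp V p mu) : rev u =ᵐ[mu] fun t => (-1 : ℝ) • u (1 + (-1) * t) := by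
  filter_upwards [Rop_coe 1 (-1) u, ae_restrict_mem measurableSet_Icc] with t h1 h2
  rw [rev, h1, ext0, indicator_of_mem]
  constructor <;> linarith [h2.1, h2.2]

/-- inverse flow -/
def Sys.Psi (S : Sys V E) (q : ℝ × Lp V p mu × E) : E := S.Phi (-q.1, rev q.2.1, q.2.2)

theorem Sys.Psi_contDiff (S : Sys V E) : ContDiff ℝ (⊤ : ℕ∞) (S.Psi (p := p)) := by
  refine S.Phi_contDiff.comp ?_
  exact contDiff_fst.neg.prodMk ((clm_cd (A := ℝ × Lp V p mu × E)
    (rev : Lp V p mu →L[ℝ] Lp V p mu) (f := fun q => q.2.1)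
    (contDiff_fst.comp contDiff_snd)).prodMk
    (contDiff_snd.comp contDiff_snd))

theorem Sys.Psi_Phi (S : Sys V E) (r : ℝ) (u : Lp V p mu) (y : E) :
    S.Psi (r, u, S.Phi (r, u, y)) = y := by
  have := S.Phi_affine r u (rev u) y 1 (-1) (by simp) (by simp) (rev_coe u)
  have e : (⟨1 + -1, by simp⟩ : unitInterval) = 0 := by ext; simp
  rw [e, S.traj_zero] at this
  rw [Sys.Psi]
  simp only [neg_one_mul] at this
  exact this.symm

theorem rev_rev (u : Lp V p mu) : rev (rev u) = u := by
  apply Lp.ext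
  filter_upwards [rev_coe (rev u), ae_pull (rev_coe u) 1 (-1) (by norm_num) (by simp) (by simp)]
    with t h1 h2
  rw [h1, h2]
  simp

theorem Sys.Phi_Psi (S : Sys V E) (r : ℝ) (u : Lp V p mu) (y : E) :
    S.Phi (r, u, S.Psi (r, u, y)) = y := by
  have := S.Psi_Phi (-r) (rev u) y
  rwa [Sys.Psi, rev_rev, neg_neg] at this

end flow
end EPM

namespace EPM
section flow
variable {V E : Type} [NormedAddCommGroup V] [NormedSpace ℝ V] [CompleteSpace V]
   [NormedAddCommGroup E] [NormedSpace ℝ E] [CompleteSpace E]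
variable {p : ENNReal} [hp : Fact (1 ≤ p)]

/-- concatenation at time one half, as a continuous linear map -/
def cat : (Lp V p mu × Lp V p mu) →L[ℝ] Lp V p mu :=
  (Rop 0 ((1/2 : ℝ)⁻¹)).comp (ContinuousLinearMap.fst ℝ _ _)
    + (Rop (-(1/2 : ℝ) / (1 - 1/2)) ((1 - 1/2 : ℝ)⁻¹)).comp (ContinuousLinearMap.snd ℝ _ _)

theorem cat_eq (q u : Lp V p mu) : cat (q, u) = Gop (1/2) q u := rfl

theorem Sys.Phi_cat (S : Sys V E) (r : ℝ) (q u : Lp V p mu) (y : E) :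
    S.Phi (r, cat (q, u), y) = S.Phi (r / 2, u, S.Phi (r / 2, q, y)) := by
  rw [cat_eq, S.Phi_Gop (1/2) (by norm_num) (by norm_num)]
  congr 2
  · ring
  · congr 2
    congr 1
    ring

theorem Sys.Phi_cat0 (S : Sys V E) (q u : Lp V p mu) (y : E) :
    S.Phi (0, cat (q, u), y) = S.Phi (0, u, S.Phi (0, q, y)) := by
  rw [S.Phi_cat]; simp

theorem Sys.Phi_zero (S : Sys V E) (y : E) : S.Phi (0, (0 : Lp V p mu), y) = y := by
  have h : S.Tr 0 (0 : ℝ → V) y (fun _ => y) := by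
    refine ⟨continuousOn_const, fun t ht => ?_⟩
    simp
  have h2 := S.Phi_eq (Tr_ae S h (Lp.coeFn_zero V p mu).symm)
  exact h2.symm

/-- constant controls -/
def cC : V →L[ℝ] Lp V p mu := Lp.constL p mu ℝ

theorem cC_coe (v : V) : (cC v : Lp V p mu) =ᵐ[mu] fun _ => v := Lp.coeFn_const p mu v

theorem rev_cC (v : V) : rev (cC v : Lp V p mu) = cC (-v) := by
  apply Lp.ext
  filter_upwards [rev_coe (cC v : Lp V p mu), ae_pull (cC_coe (p := p) v) 1 (-1) (by norm_num) (by simp) (by simp),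
    cC_coe (p := p) (-v)] with t h1 h2 h3
  rw [h1, h2, h3]; simp

theorem Sys.fl_inv (S : Sys V E) (v : V) (y : E) :
    S.Phi (0, (cC (-v) : Lp V p mu), S.Phi (0, (cC v : Lp V p mu), y)) = y := by
  have := S.Psi_Phi 0 (cC v : Lp V p mu) y
  rwa [Sys.Psi, rev_cC, neg_zero] at this

theorem Sys.fl_scale (S : Sys V E) (v : V) (y : E) (t : ℝ) (ht : t ∈ Icc (0:ℝ) 1) :
    S.Phi (0, (cC (t • v) : Lp V p mu), y) = S.traj 0 (cC v : Lp V p mu) y (prj t) := by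
  by_cases h0 : t = 0
  · subst h0
    rw [zero_smul, map_zero, S.Phi_zero, prj_of_mem ht]
    exact (S.traj_zero _ _ _).symm
  have h1 := S.Phi_affine 0 (cC v : Lp V p mu) (cC (t • v)) y 0 t (by simp) (by simpa using ht) (by
    filter_upwards [cC_coe (p := p) (t • v), ae_pull (cC_coe (p := p) v) 0 t h0 (by simp) (by simpa using ht)]
      with s h1 h2
    rw [h1, h2])
  have e3 : S.traj 0 (cC v : Lp V p mu) y ⟨0, by simp⟩ = y := S.traj_zero _ _ _
  rw [e3, mul_zero] at h1
  rw [← h1, prj_of_mem ht]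
  simp

theorem Sys.fl_contDiff (S : Sys V E) (v : V) :
    ContDiff ℝ (⊤ : ℕ∞) (fun q : ℝ × E => S.Phi (0, (cC (q.1 • v) : Lp V p mu), q.2)) := by
  refine S.Phi_contDiff.comp ?_
  refine contDiff_const.prodMk (ContDiff.prodMk ?_ contDiff_snd)
  exact clm_cd (A := ℝ × E) (cC : V →L[ℝ] Lp V p mu) (f := fun q => q.1 • v)
    (contDiff_fst.smul contDiff_const)

theorem Sys.fl_deriv (S : Sys V E) (v : V) (y : E) :
    HasDerivAt (fun a : ℝ => S.Phi (0, (cC (a • v) : Lp V p mu), y)) (S.Y y v) 0 := by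
  set f := fun a : ℝ => S.Phi (0, (cC (a • v) : Lp V p mu), y) with hf
  have hd : DifferentiableAt ℝ f 0 := by
    have : ContDiff ℝ (⊤ : ℕ∞) f :=
      ContDiff.comp (g := fun q : ℝ × E => S.Phi (0, (cC (q.1 • v) : Lp V p mu), q.2))
        (f := fun a : ℝ => (a, y)) (S.fl_contDiff v) (contDiff_id.prodMk contDiff_const)
    exact this.differentiable (by simp) 0
  have h1 : HasDerivWithinAt f (S.Y y v) (Ici 0) 0 := by
    have hT := S.traj_tr 0 (cC v : Lp V p mu) y
    set γ := fun t => S.traj 0 (cC v : Lp V p mu) y (prj t) with hγ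
    have hγc : Continuous γ := (S.traj 0 (cC v : Lp V p mu) y).continuous.comp continuous_projIcc
    have hγ0 : γ 0 = y := by
      show S.traj 0 (cC v : Lp V p mu) y (prj 0) = y
      rw [prj_of_mem (left_mem_Icc.2 zero_le_one)]; exact S.traj_zero _ _ _
    have hT2 := Tr_ae S hT (cC_coe v)
    have hi : Continuous (fun s => S.Y (γ s) v) := (S.smooth.continuous.comp hγc).clm_apply continuous_const
    have h2 : HasDerivAt (fun t => y + ∫ s in (0:ℝ)..t, S.Y (γ s) v) (S.Y y v) 0 := by
      have := (intervalIntegral.integral_hasDerivAt_right (hi.intervalIntegrable 0 0)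
        (hi.stronglyMeasurableAtFilter _ _) hi.continuousAt).const_add y
      rwa [hγ0] at this
    have h3 : HasDerivWithinAt f (S.Y y v) (Icc 0 1) 0 := by
      refine h2.hasDerivWithinAt.congr ?_ ?_
      · intro t ht
        rw [hf]
        simp only
        rw [S.fl_scale v y t ht]
        have := hT2.2 t ht
        simpa using this
      · simp [hf, S.Phi_zero]
    exact h3.mono_of_mem_nhdsWithin (Icc_mem_nhdsGE zero_lt_one)
  have h4 := hd.hasDerivAt.hasDerivWithinAt (s := Ici 0)
  have := (uniqueDiffWithinAt_Ici (0:ℝ)).eq_deriv _ h4 h1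
  rw [← this]; exact hd.hasDerivAt

end flow

/-- Hadamard division -/
theorem hadamard {E F : Type} [NormedAddCommGroup E] [NormedSpace ℝ E]
    [NormedAddCommGroup F] [NormedSpace ℝ F] [CompleteSpace F]
    (h : ℝ × E → F) (hh : ContDiff ℝ (⊤ : ℕ∞) h) (h0 : ∀ y, h (0, y) = 0) :
    ∃ g : ℝ × E → F, ContDiff ℝ (⊤ : ℕ∞) g ∧ (∀ ε y, h (ε, y) = ε • g (ε, y)) ∧
      ∀ y, g (0, y) = fderiv ℝ h (0, y) (1, 0) := by
  have hk : ContDiff ℝ (⊤ : ℕ∞) (fun z => fderiv ℝ h z (1, 0)) :=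
    (hh.fderiv_right (m := (⊤ : ℕ∞)) (by simp)).clm_apply contDiff_const
  set k := fun z => fderiv ℝ h z ((1, 0) : ℝ × E) with hkdef
  refine ⟨fun z => ∫ s in (0:ℝ)..1, k (s * z.1, z.2), ?_, ?_, ?_⟩
  · let A : ℝ × E →L[ℝ] C(unitInterval, ℝ × E) := LinearMap.mkContinuous
      { toFun := fun z => ⟨fun s => ((s : ℝ) * z.1, z.2), by fun_prop⟩
        map_add' := by intro a b; ext s <;> simp [mul_add]
        map_smul' := by intro a b; ext s <;> simp; ring } 1 (by
        intro z
        rw [one_mul]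
        refine (ContinuousMap.norm_le _ (norm_nonneg _)).2 fun s => ?_
        simp only [LinearMap.coe_mk, AddHom.coe_mk, ContinuousMap.coe_mk]
        refine max_le_max ?_ le_rfl
        simp only [norm_mul]
        refine mul_le_of_le_one_left (norm_nonneg _) ?_
        rw [Real.norm_eq_abs, abs_of_nonneg s.2.1]; exact s.2.2)
    let J : C(unitInterval, F) →L[ℝ] F := LinearMap.mkContinuous
      { toFun := fun f => ∫ s in (0:ℝ)..1, f (prj s)
        map_add' := by
          intro a b
          exact intervalIntegral.integral_add
            ((a.continuous.comp continuous_projIcc).intervalIntegrable _ _)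
            ((b.continuous.comp continuous_projIcc).intervalIntegrable _ _)
        map_smul' := by intro a b; simp } 1 (by
        intro f
        simp only [LinearMap.coe_mk, AddHom.coe_mk]
        have := intervalIntegral.norm_integral_le_of_norm_le_const (a := (0:ℝ)) (b := 1)
          (f := fun s => f (prj s)) (C := ‖f‖) (fun s _ => f.norm_coe_le_norm _)
        simpa using this)
    have h1 : ContDiff ℝ (⊤ : ℕ∞) (fun z => J (sup k hk.continuous (A z))) :=
      clm_cd J ((sup_contDiff k hk).comp A.contDiff)
    convert h1 using 1
    funext z
    show _ = ∫ s in (0:ℝ)..1, (sup k hk.continuous (A z)) (prj s)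
    refine intervalIntegral.integral_congr fun s hs => ?_
    rw [uIcc_of_le zero_le_one] at hs
    show k (s * z.1, z.2) = k (((prj s : unitInterval) : ℝ) * z.1, z.2)
    rw [prj_of_mem hs]
  · intro ε y
    have hd : ∀ s ∈ uIcc (0:ℝ) 1, HasDerivAt (fun s => h (s * ε, y)) (ε • k (s * ε, y)) s := by
      intro s _
      have h1 : HasFDerivAt h (fderiv ℝ h (s * ε, y)) (s * ε, y) :=
        (hh.differentiable (by simp) _).hasFDerivAt
      have h2 : HasDerivAt (fun s : ℝ => (s * ε, y)) ((ε, 0) : ℝ × E) s := by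
        have := ((hasDerivAt_id s).mul_const ε).prodMk (hasDerivAt_const s y)
        simpa using this
      have h3 := h1.comp_hasDerivAt s h2
      have : fderiv ℝ h (s * ε, y) (ε, 0) = ε • k (s * ε, y) := by
        rw [hkdef]; simp only
        rw [← map_smul]; simp
      rwa [this] at h3
    have hc : Continuous (fun s => ε • k (s * ε, y)) :=
      continuous_const.smul (hk.continuous.comp (by fun_prop))
    have := intervalIntegral.integral_eq_sub_of_hasDerivAt hd (hc.intervalIntegrable _ _)
    simp only [one_mul, zero_mul, h0, sub_zero] at this
    rw [← this, intervalIntegral.integral_smul]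
  · intro y
    simp [hkdef]

end EPM

namespace EPM

section br
variable {E : Type} [NormedAddCommGroup E] [NormedSpace ℝ E] [CompleteSpace E]

theorem fderiv_curve {F G : Type} [NormedAddCommGroup F] [NormedSpace ℝ F]
    [NormedAddCommGroup G] [NormedSpace ℝ G] {f : F → G} (hf : ContDiff ℝ (⊤ : ℕ∞) f)
    {c : ℝ → F} {t : ℝ} {c' : F} (hc : HasDerivAt c c' t) :
    HasDerivAt (fun s => f (c s)) (fderiv ℝ f (c t) c') t :=
  (hf.differentiable (by simp) _).hasFDerivAt.comp_hasDerivAt t hc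

theorem line_deriv {F : Type} [NormedAddCommGroup F] [NormedSpace ℝ F] (y w : F) :
    HasDerivAt (fun s : ℝ => y + s • w) w 0 := by
  have := ((hasDerivAt_id (0:ℝ)).smul_const w).const_add y
  simpa using this

theorem flowA (A : ℝ × E → E) (hA : ContDiff ℝ (⊤ : ℕ∞) A) (X : E → E)
    (hX : ContDiff ℝ (⊤ : ℕ∞) X)
    (A0 : ∀ y, A (0, y) = y) (A1 : ∀ y, HasDerivAt (fun a => A (a, y)) (X y) 0)
    (g : ℝ × E → E) (hg : ContDiff ℝ (⊤ : ℕ∞) g) :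
    ∃ g' : ℝ × E → E, ContDiff ℝ (⊤ : ℕ∞) g' ∧
      (∀ ε y, fderiv ℝ A (-ε, A (ε, y)) (0, g (ε, A (ε, y))) - g (ε, y) = ε • g' (ε, y)) ∧
      ∀ y, g' (0, y) = VectorField.lieBracket ℝ X (fun y => g (0, y)) y := by
  have hD : ContDiff ℝ (⊤ : ℕ∞) (fderiv ℝ A) := hA.fderiv_right (m := (⊤ : ℕ∞)) (by simp)
  have D0 : ∀ y w, fderiv ℝ A (0, y) (0, w) = w := by
    intro y w
    have h1 : HasDerivAt (fun s : ℝ => ((0 : ℝ), y + s • w)) ((0, w) : ℝ × E) 0 :=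
      (hasDerivAt_const _ _).prodMk (line_deriv y w)
    have h2 := fderiv_curve hA h1
    simp only [A0, zero_smul, add_zero] at h2
    exact h2.unique (line_deriv y w)
  have D1 : ∀ y, fderiv ℝ A (0, y) (1, 0) = X y := by
    intro y
    have h1 : HasDerivAt (fun s : ℝ => (s, y)) ((1, 0) : ℝ × E) 0 :=
      (hasDerivAt_id _).prodMk (hasDerivAt_const _ _)
    exact (fderiv_curve hA h1).unique (A1 y)
  have hfA : ContDiff ℝ (⊤ : ℕ∞) (fun z : ℝ × E => ((z.1, A z) : ℝ × E)) := contDiff_fst.prodMk hA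
  have hfA' : ContDiff ℝ (⊤ : ℕ∞) (fun z : ℝ × E => ((-z.1, A z) : ℝ × E)) :=
    contDiff_fst.neg.prodMk hA
  have hG : ContDiff ℝ (⊤ : ℕ∞) (fun z : ℝ × E => g (z.1, A z)) := hg.comp hfA
  have hDA : ContDiff ℝ (⊤ : ℕ∞) (fun z : ℝ × E => fderiv ℝ A (-z.1, A z)) := hD.comp hfA'
  have h00 : ContDiff ℝ (⊤ : ℕ∞) (fun z : ℝ × E => ((0, g (z.1, A z)) : ℝ × E)) :=
    contDiff_const.prodMk hG
  have hh : ContDiff ℝ (⊤ : ℕ∞)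
      (fun z : ℝ × E => fderiv ℝ A (-z.1, A z) (0, g (z.1, A z)) - g z) :=
    (hDA.clm_apply h00).sub hg
  obtain ⟨g', h1, h2, h3⟩ := hadamard _ hh (by
    intro y
    simp only [A0, neg_zero, D0, sub_self])
  refine ⟨g', h1, fun ε y => h2 ε y, fun y => ?_⟩
  rw [h3]
  have hl : HasDerivAt (fun s : ℝ => (s, y)) ((1, 0) : ℝ × E) 0 :=
      (hasDerivAt_id _).prodMk (hasDerivAt_const _ _)
  have e1 := fderiv_curve hh hl
  simp only at e1
  have c1 : HasDerivAt (fun s : ℝ => (s, A (s, y))) ((1, X y) : ℝ × E) 0 :=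
    (hasDerivAt_id _).prodMk (A1 y)
  have c2 : HasDerivAt (fun s : ℝ => (-s, A (s, y))) ((-1, X y) : ℝ × E) 0 :=
    (hasDerivAt_id _).neg.prodMk (A1 y)
  have e2 := fderiv_curve hg c1
  have e3 := fderiv_curve hD c2
  have e4 : HasDerivAt (fun s : ℝ => ((0 : ℝ), g (s, A (s, y))))
    ((0, fderiv ℝ g (0, A (0, y)) (1, X y)) : ℝ × E) 0 := (hasDerivAt_const _ _).prodMk e2
  have e5 := (e3.clm_apply e4).sub (fderiv_curve hg hl)
  have e6 := e1.unique e5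
  rw [e6]
  simp only [A0, neg_zero, D0]
  have sym : ∀ a b, fderiv ℝ (fderiv ℝ A) (0, y) a b = fderiv ℝ (fderiv ℝ A) (0, y) b a := by
    intro a b
    have : IsSymmSndFDerivAt ℝ A (0, y) := hA.contDiffAt.isSymmSndFDerivAt (by
      simp only [minSmoothness_of_isRCLikeNormedField]; exact WithTop.coe_le_coe.2 (le_top : (2:ℕ∞) ≤ ⊤))
    exact this a b
  have l1 : HasDerivAt (fun s : ℝ => ((0 : ℝ), y + s • g (0, y))) ((0, g (0, y)) : ℝ × E) 0 :=
      (hasDerivAt_const _ _).prodMk (line_deriv y _)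
  have l2 := (fderiv_curve hD l1).clm_apply (hasDerivAt_const (0:ℝ) ((-1, X y) : ℝ × E))
  simp only [zero_smul, add_zero, map_zero] at l2
  have l3 : HasDerivAt (fun s : ℝ => fderiv ℝ A (0, y + s • g (0, y)) (-1, X y))
      (-fderiv ℝ X y (g (0, y))) 0 := by
    have : (fun s : ℝ => fderiv ℝ A (0, y + s • g (0, y)) (-1, X y))
        = fun s : ℝ => - X (y + s • g (0, y)) + X y := by
      funext s
      have : ((-1, X y) : ℝ × E) = - (1, 0) + (0, X y) := by simp
      rw [this, map_add, map_neg, D1, D0]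
    rw [this]
    have := ((fderiv_curve hX (line_deriv y (g (0, y)))).neg).add_const (X y)
    simpa using this
  have l4 := l2.unique l3
  rw [sym, l4]
  have s1 : fderiv ℝ (fun y => g (0, y)) y (X y) = fderiv ℝ g (0, y) (0, X y) := by
    have k1 : HasDerivAt (fun s : ℝ => ((0 : ℝ), y + s • X y)) ((0, X y) : ℝ × E) 0 :=
      (hasDerivAt_const _ _).prodMk (line_deriv y _)
    have k2 := fderiv_curve hg k1
    have hg0 : ContDiff ℝ (⊤ : ℕ∞) (fun y => g (0, y)) := hg.comp (contDiff_const.prodMk contDiff_id)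
    have k3 := fderiv_curve hg0 (line_deriv y (X y))
    simp only [zero_smul, add_zero] at k2 k3
    exact k3.unique k2
  rw [VectorField.lieBracket, s1]
  have : ((1, X y) : ℝ × E) = (1, 0) + (0, X y) := by simp
  rw [this, map_add]
  abel

end br

section nest
variable {V E : Type} [NormedAddCommGroup V] [NormedSpace ℝ V] [CompleteSpace V]
   [NormedAddCommGroup E] [NormedSpace ℝ E] [CompleteSpace E]

/-- nested brackets -/
def Sys.Zb (S : Sys V E) : List V → V → E → E
  | [], v => fun y => S.Y y v
  | w :: l, v => VectorField.lieBracket ℝ (fun y => S.Y y w) (S.Zb l v)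

variable {p : ENNReal} [hp : Fact (1 ≤ p)]

/-- controls for nested brackets -/
def qb : List V → V → (ℝ × ℝ →L[ℝ] Lp V p mu)
  | [], v => (ContinuousLinearMap.snd ℝ ℝ ℝ).smulRight (cC v)
  | w :: l, v =>
    let c : ℝ × ℝ →L[ℝ] Lp V p mu := (ContinuousLinearMap.fst ℝ ℝ ℝ).smulRight (cC w)
    let m : ℝ × ℝ →L[ℝ] ℝ × ℝ :=
      (ContinuousLinearMap.fst ℝ ℝ ℝ).prod (-(ContinuousLinearMap.snd ℝ ℝ ℝ))
    cat.comp ((cat.comp (c.prod (qb l v))).prod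
      (cat.comp ((-c).prod ((qb l v).comp m))))

theorem qb_cons (w : V) (l : List V) (v : V) (ε ρ : ℝ) :
    (qb (w :: l) v (ε, ρ) : Lp V p mu) =
      cat (cat (cC (ε • w), qb l v (ε, ρ)), cat (cC (-(ε • w)), qb l v (ε, -ρ))) := by
  rw [map_neg, map_smul]
  rfl

theorem Sys.Y_contDiff (S : Sys V E) (v : V) : ContDiff ℝ (⊤ : ℕ∞) (fun y => S.Y y v) :=
  S.smooth.clm_apply contDiff_const

theorem nest (S : Sys V E) (l : List V) (v : V) :
    (∀ ε y, S.Phi (0, (qb l v (ε, 0) : Lp V p mu), y) = y) ∧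
    ∃ g : ℝ × E → E, ContDiff ℝ (⊤ : ℕ∞) g ∧ (∀ y, g (0, y) = S.Zb l v y) ∧
      ∀ ε y, HasDerivAt (fun ρ => S.Phi (0, (qb l v (ε, ρ) : Lp V p mu), y))
        (ε ^ l.length • g (ε, y)) 0 := by
  induction l with
  | nil =>
    refine ⟨fun ε y => ?_, fun z => S.Y z.2 v, ?_, fun y => rfl, fun ε y => ?_⟩
    · simp [qb, S.Phi_zero]
    · exact (S.Y_contDiff v).comp contDiff_snd
    · have := S.fl_deriv (p := p) v y
      simpa [qb] using this
  | cons w l ih =>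
    obtain ⟨i1, g, hg, g0, i2⟩ := ih
    set Q : ℝ → ℝ × E → E := fun ε z => S.Phi (0, (qb l v (ε, z.1) : Lp V p mu), z.2) with hQ
    have hQs : ∀ ε, ContDiff ℝ (⊤ : ℕ∞) (Q ε) := by
      intro ε
      refine S.Phi_contDiff.comp ?_
      refine contDiff_const.prodMk (ContDiff.prodMk ?_ contDiff_snd)
      exact clm_cd (A := ℝ × E) (qb l v : ℝ × ℝ →L[ℝ] Lp V p mu) (f := fun z => (ε, z.1))
        (contDiff_const.prodMk contDiff_fst)
    set A : ℝ × E → E := fun q => S.Phi (0, (cC (q.1 • w) : Lp V p mu), q.2) with hA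
    have hAs : ContDiff ℝ (⊤ : ℕ∞) A := S.fl_contDiff w
    have A0 : ∀ y, A (0, y) = y := by intro y; simp [hA, S.Phi_zero]
    have Ainv : ∀ ε y, A (-ε, A (ε, y)) = y := by
      intro ε y
      have := S.fl_inv (p := p) (ε • w) y
      simpa [hA] using this
    have key : ∀ ε ρ y, S.Phi (0, (qb (w :: l) v (ε, ρ) : Lp V p mu), y) =
        Q ε (-ρ, A (-ε, Q ε (ρ, A (ε, y)))) := by
      intro ε ρ y
      rw [qb_cons, S.Phi_cat0, S.Phi_cat0, S.Phi_cat0, ← neg_smul]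
    obtain ⟨g', hg', h1, h2⟩ := flowA A hAs (fun y => S.Y y w) (S.Y_contDiff w) A0
      (fun y => S.fl_deriv w y) g hg
    refine ⟨fun ε y => ?_, g', hg', fun y => ?_, fun ε y => ?_⟩
    · rw [key, neg_zero]
      simp only [hQ, i1, Ainv]
    · rw [h2]
      have : (fun y => g (0, y)) = S.Zb l v := funext g0
      rw [this]; rfl
    · simp only [key]
      have m1 : HasDerivAt (fun ρ => Q ε (ρ, A (ε, y))) (ε ^ l.length • g (ε, A (ε, y))) 0 :=
        i2 ε _
      have m2 := fderiv_curve hAs ((hasDerivAt_const (0:ℝ) (-ε)).prodMk m1)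
      have m3 := fderiv_curve (hQs ε) ((hasDerivAt_neg' (0:ℝ)).prodMk m2)
      have Q0 : ∀ y, Q ε (0, y) = y := fun y => i1 ε y
      have D0 : ∀ y u, fderiv ℝ (Q ε) (0, y) (0, u) = u := by
        intro y u
        have h1 : HasDerivAt (fun s : ℝ => ((0 : ℝ), y + s • u)) ((0, u) : ℝ × E) 0 :=
          (hasDerivAt_const _ _).prodMk (line_deriv y u)
        have h2 := fderiv_curve (hQs ε) h1
        simp only [Q0, zero_smul, add_zero] at h2
        exact h2.unique (line_deriv y u)
      have D1 : ∀ y, fderiv ℝ (Q ε) (0, y) (1, 0) = ε ^ l.length • g (ε, y) := by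
        intro y
        have h1 : HasDerivAt (fun s : ℝ => (s, y)) ((1, 0) : ℝ × E) 0 :=
          (hasDerivAt_id _).prodMk (hasDerivAt_const _ _)
        exact (fderiv_curve (hQs ε) h1).unique (i2 ε y)
      refine HasDerivAt.congr_deriv m3 ?_
      simp only [neg_zero, Q0, Ainv]
      have sp : ∀ b : E, ((-1, b) : ℝ × E) = - (1, 0) + (0, b) := by intro b; simp
      rw [sp, map_add, map_neg, D1, D0]
      have sp2 : ((0, ε ^ l.length • g (ε, A (ε, y))) : ℝ × E)
        = ε ^ l.length • (0, g (ε, A (ε, y))) := by simp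
      rw [sp2, map_smul, List.length_cons, pow_succ, mul_smul, ← h1, smul_sub]
      abel

end nest
end EPM

namespace EPM

section nest
variable {V E : Type} [NormedAddCommGroup V] [NormedSpace ℝ V] [CompleteSpace V]
   [NormedAddCommGroup E] [NormedSpace ℝ E] [CompleteSpace E]

theorem lb_smooth {A B : E → E} (hA : ContDiff ℝ (⊤ : ℕ∞) A) (hB : ContDiff ℝ (⊤ : ℕ∞) B) :
    ContDiff ℝ (⊤ : ℕ∞) (VectorField.lieBracket ℝ A B) :=
  hA.lieBracket_vectorField hB (by simp)

theorem Sys.Zb_smooth (S : Sys V E) (l : List V) (v : V) : ContDiff ℝ (⊤ : ℕ∞) (S.Zb l v) := by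
  induction l with
  | nil => exact S.Y_contDiff v
  | cons w l ih => exact lb_smooth (S.Y_contDiff w) ih

/-- span of nested brackets as vector fields -/
def Sys.Nb (S : Sys V E) : Submodule ℝ (E → E) :=
  Submodule.span ℝ (range fun w : List V × V => S.Zb w.1 w.2)

theorem Sys.Nb_smooth (S : Sys V E) {A : E → E} (hA : A ∈ S.Nb) : ContDiff ℝ (⊤ : ℕ∞) A := by
  induction hA using Submodule.span_induction with
  | mem x h => obtain ⟨w, rfl⟩ := h; exact S.Zb_smooth _ _
  | zero => exact contDiff_const
  | add x y _ _ hx hy => exact hx.add hy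
  | smul a x _ hx => exact hx.const_smul a

theorem Sys.Zb_mem (S : Sys V E) (l : List V) (v : V) : S.Zb l v ∈ S.Nb :=
  Submodule.subset_span ⟨(l, v), rfl⟩

theorem Sys.Nb_br1 (S : Sys V E) (v : V) {B : E → E} (hB : B ∈ S.Nb) :
    VectorField.lieBracket ℝ (fun y => S.Y y v) B ∈ S.Nb := by
  induction hB using Submodule.span_induction with
  | mem x h => obtain ⟨w, rfl⟩ := h; exact S.Zb_mem (v :: w.1) w.2
  | zero => rw [VectorField.lieBracket_zero_right]; exact zero_mem _
  | add x y hx' hy' hx hy =>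
    have : VectorField.lieBracket ℝ (fun y => S.Y y v) (x + y) =
        VectorField.lieBracket ℝ (fun y => S.Y y v) x + VectorField.lieBracket ℝ (fun y => S.Y y v) y := by
      funext z
      exact VectorField.lieBracket_add_right ((S.Nb_smooth hx').differentiable (by simp) z)
        ((S.Nb_smooth hy').differentiable (by simp) z)
    rw [this]; exact add_mem hx hy
  | smul a x hx' hx =>
    have : VectorField.lieBracket ℝ (fun y => S.Y y v) (a • x) =
        a • VectorField.lieBracket ℝ (fun y => S.Y y v) x := by
      funext z
      exact VectorField.lieBracket_const_smul_right ((S.Nb_smooth hx').differentiable (by simp) z)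
    rw [this]; exact Submodule.smul_mem _ _ hx

theorem Sys.Nb_br2 (S : Sys V E) (l : List V) (v : V) :
    ∀ {B : E → E}, B ∈ S.Nb → VectorField.lieBracket ℝ (S.Zb l v) B ∈ S.Nb := by
  induction l with
  | nil => intro B hB; exact S.Nb_br1 v hB
  | cons w l ih =>
    intro B hB
    have : VectorField.lieBracket ℝ (S.Zb (w :: l) v) B =
        VectorField.lieBracket ℝ (fun y => S.Y y w) (VectorField.lieBracket ℝ (S.Zb l v) B)
        - VectorField.lieBracket ℝ (S.Zb l v) (VectorField.lieBracket ℝ (fun y => S.Y y w) B) := by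
      funext z
      have := VectorField.leibniz_identity_lieBracket (𝕜 := ℝ) (n := ((⊤ : ℕ∞) : WithTop ℕ∞))
        (by simp only [minSmoothness_of_isRCLikeNormedField]
            exact WithTop.coe_le_coe.2 (le_top : (2:ℕ∞) ≤ ⊤))
        (S.Y_contDiff w).contDiffAt (S.Zb_smooth l v).contDiffAt (S.Nb_smooth hB).contDiffAt (x := z)
      rw [Pi.sub_apply, this, add_sub_cancel_right]
      rfl
    rw [this]
    exact sub_mem (S.Nb_br1 w (ih hB)) (ih (S.Nb_br1 w hB))

theorem Sys.Nb_br (S : Sys V E) {A B : E → E} (hA : A ∈ S.Nb) (hB : B ∈ S.Nb) :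
    VectorField.lieBracket ℝ A B ∈ S.Nb := by
  induction hA using Submodule.span_induction with
  | mem x h => obtain ⟨w, rfl⟩ := h; exact S.Nb_br2 _ _ hB
  | zero => rw [VectorField.lieBracket_zero_left]; exact zero_mem _
  | add x y hx' hy' hx hy =>
    have : VectorField.lieBracket ℝ (x + y) B =
        VectorField.lieBracket ℝ x B + VectorField.lieBracket ℝ y B := by
      funext z
      exact VectorField.lieBracket_add_left ((S.Nb_smooth hx').differentiable (by simp) z)
        ((S.Nb_smooth hy').differentiable (by simp) z)
    rw [this]; exact add_mem hx hy
  | smul a x hx' hx =>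
    have : VectorField.lieBracket ℝ (a • x) B = a • VectorField.lieBracket ℝ x B := by
      funext z
      exact VectorField.lieBracket_const_smul_left ((S.Nb_smooth hx').differentiable (by simp) z)
    rw [this]; exact Submodule.smul_mem _ _ hx

theorem Sys.Nb_eval (S : Sys V E) {A : E → E} (hA : A ∈ S.Nb) (y : E) :
    A y ∈ Submodule.span ℝ (range fun w : List V × V => S.Zb w.1 w.2 y) := by
  induction hA using Submodule.span_induction with
  | mem x h => obtain ⟨w, rfl⟩ := h; exact Submodule.subset_span ⟨w, rfl⟩
  | zero => exact zero_mem _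
  | add x y' hx' hy' hx hy => exact add_mem hx hy
  | smul a x hx' hx => exact Submodule.smul_mem _ _ hx

variable {p : ENNReal} [hp : Fact (1 ≤ p)]

/-- combined controls for a finite family of words -/
theorem multi (S : Sys V E) {ι : Type} [Fintype ι] (w : ι → List V × V) (s : Finset ι) :
    ∃ q : ℝ × (ι → ℝ) →L[ℝ] Lp V p mu, ∃ g : ι → ℝ × E → E,
      (∀ i, ContDiff ℝ (⊤ : ℕ∞) (g i)) ∧ (∀ i y, g i (0, y) = S.Zb (w i).1 (w i).2 y) ∧
      (∀ ε y, S.Phi (0, q (ε, 0), y) = y) ∧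
      ∀ ε y, HasFDerivAt (fun ρ => S.Phi (0, q (ε, ρ), y))
        (∑ i ∈ s, (ContinuousLinearMap.proj (R := ℝ) (φ := fun _ : ι => ℝ) i).smulRight
          (ε ^ (w i).1.length • g i (ε, y))) 0 := by
  classical
  choose h1 g hg g0 hd using fun i => nest (p := p) S (w i).1 (w i).2
  induction s using Finset.induction_on with
  | empty =>
    refine ⟨0, g, hg, g0, fun ε y => by simp [S.Phi_zero], fun ε y => ?_⟩
    simp only [ContinuousLinearMap.zero_apply, S.Phi_zero, Finset.sum_empty]
    exact hasFDerivAt_const _ _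
  | insert a s ha ih =>
    obtain ⟨q, g', hg', g0', q0, qd⟩ := ih
    let pa : ℝ × (ι → ℝ) →L[ℝ] ℝ × ℝ := (ContinuousLinearMap.fst ℝ ℝ (ι → ℝ)).prod
      ((ContinuousLinearMap.proj a).comp (ContinuousLinearMap.snd ℝ ℝ (ι → ℝ)))
    refine ⟨cat.comp (((qb (w a).1 (w a).2).comp pa).prod q),
      Function.update g' a (g a), ?_, ?_, ?_, ?_⟩
    · intro i
      by_cases hi : i = a
      · subst hi; rw [Function.update_self]; exact hg i
      · rw [Function.update_of_ne hi]; exact hg' i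
    · intro i y
      by_cases hi : i = a
      · subst hi; rw [Function.update_self]; exact g0 i y
      · rw [Function.update_of_ne hi]; exact g0' i y
    · intro ε y
      show S.Phi (0, cat (qb (w a).1 (w a).2 (ε, (0 : ℝ)), q (ε, 0)), y) = y
      rw [S.Phi_cat0, h1, q0]
    · intro ε y
      have e : (fun ρ : ι → ℝ => S.Phi (0, (cat.comp (((qb (w a).1 (w a).2).comp pa).prod q)) (ε, ρ), y))
          = fun ρ : ι → ℝ => S.Phi (0, q (ε, ρ), S.Phi (0, (qb (w a).1 (w a).2 (ε, ρ a) : Lp V p mu), y)) := by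
        funext ρ
        exact S.Phi_cat0 _ _ _
      rw [e]
      -- total derivative
      set Q : (ι → ℝ) × E → E := fun z => S.Phi (0, q (ε, z.1), z.2) with hQ
      have hQs : ContDiff ℝ (⊤ : ℕ∞) Q := by
        refine S.Phi_contDiff.comp ?_
        refine contDiff_const.prodMk (ContDiff.prodMk ?_ contDiff_snd)
        exact clm_cd (A := (ι → ℝ) × E) q (f := fun z => (ε, z.1)) (contDiff_const.prodMk contDiff_fst)
      have hQd : HasFDerivAt Q (fderiv ℝ Q (0, y)) (0, y) :=
        (hQs.differentiable (by simp) _).hasFDerivAt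
      have i1 : HasFDerivAt (fun ρ : ι → ℝ => S.Phi (0, (qb (w a).1 (w a).2 (ε, ρ a) : Lp V p mu), y))
          ((ContinuousLinearMap.proj (R := ℝ) (φ := fun _ : ι => ℝ) a).smulRight
          (ε ^ (w a).1.length • g a (ε, y))) 0 := by
        have k1 : HasFDerivAt (fun ρ : ι → ℝ => ρ a)
          (ContinuousLinearMap.proj (R := ℝ) (φ := fun _ : ι => ℝ) a) 0 :=
          (ContinuousLinearMap.proj (R := ℝ) (φ := fun _ : ι => ℝ) a).hasFDerivAt
        have k2 := HasFDerivAt.comp (g := fun ρ : ℝ => S.Phi (0, (qb (w a).1 (w a).2 (ε, ρ) : Lp V p mu), y))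
          (f := fun ρ : ι → ℝ => ρ a) (0 : ι → ℝ) (hd a ε y).hasFDerivAt k1
        refine k2.congr_fderiv ?_
        ext1 ρ
        simp
      have i2 : HasFDerivAt (fun ρ : ι → ℝ => (ρ, S.Phi (0, (qb (w a).1 (w a).2 (ε, ρ a) : Lp V p mu), y)))
        _ 0 := (hasFDerivAt_id (0 : ι → ℝ)).prodMk i1
      have e0 : S.Phi (0, (qb (w a).1 (w a).2 (ε, (0 : ι → ℝ) a) : Lp V p mu), y) = y := h1 a ε y
      have i3 := HasFDerivAt.comp (0 : ι → ℝ) (g := Q) (by simp only [e0]; exact hQd) i2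
      refine i3.congr_fderiv ?_
      have D0 : ∀ u, fderiv ℝ Q (0, y) (0, u) = u := by
        intro u
        have h1 : HasDerivAt (fun s : ℝ => ((0 : ι → ℝ), y + s • u)) ((0, u) : (ι → ℝ) × E) 0 :=
          (hasDerivAt_const _ _).prodMk (line_deriv y u)
        have h2 := fderiv_curve hQs h1
        simp only [hQ, q0, zero_smul, add_zero] at h2
        exact h2.unique (line_deriv y u)
      have D1 : ∀ r, fderiv ℝ Q (0, y) (r, 0) = (∑ i ∈ s, (ContinuousLinearMap.proj (R := ℝ)
          (φ := fun _ : ι => ℝ) i).smulRight (ε ^ (w i).1.length • g' i (ε, y))) r := by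
        intro r
        have k1 : HasFDerivAt (fun ρ : ι → ℝ => (ρ, y)) (ContinuousLinearMap.inl ℝ (ι → ℝ) E) 0 := by
          have := (hasFDerivAt_id (𝕜 := ℝ) (0 : ι → ℝ)).prodMk (hasFDerivAt_const y (0 : ι → ℝ))
          exact this
        have k2 := HasFDerivAt.comp (0 : ι → ℝ) (g := Q) hQd k1
        have k3 := k2.unique (qd ε y)
        rw [← k3]; rfl
      ext1 r
      rw [Finset.sum_insert ha]
      have sp : ∀ b : E, ((r, b) : (ι → ℝ) × E) = (r, 0) + (0, b) := by intro b; simp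
      simp only [ContinuousLinearMap.comp_apply, ContinuousLinearMap.prod_apply,
        ContinuousLinearMap.add_apply]
      rw [ContinuousLinearMap.id_apply, sp, map_add, D0, D1, Function.update_self, add_comm]
      congr 1
      simp only [ContinuousLinearMap.sum_apply]
      refine Finset.sum_congr rfl fun i hi => ?_
      rw [Function.update_of_ne]
      rintro rfl; exact ha hi

end nest
end EPM

namespace EPM

section rinv
variable {E : Type} [NormedAddCommGroup E] [NormedSpace ℝ E] [FiniteDimensional ℝ E]

theorem rinv_pt {α : Type} (z : α → E) (h : Submodule.span ℝ (range z) = ⊤) :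
    ∃ W : Finset α, ∃ φ : α → E →L[ℝ] ℝ, (∀ w, w ∉ W → φ w = 0) ∧
      ∑ w ∈ W, (φ w).smulRight (z w) = ContinuousLinearMap.id ℝ E := by
  classical
  let b := Module.finBasis ℝ E
  have h1 : ∀ i, ∃ c : α →₀ ℝ, (c.sum fun w a => a • z w) = b i := by
    intro i
    have : b i ∈ Submodule.span ℝ (range z) := by rw [h]; trivial
    exact Finsupp.mem_span_range_iff_exists_finsupp.1 this
  choose c hc using h1
  refine ⟨Finset.univ.biUnion fun i => (c i).support,
    fun w => ∑ i, (c i w) • LinearMap.toContinuousLinearMap (b.coord i), ?_, ?_⟩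
  · intro w hw
    refine Finset.sum_eq_zero fun i _ => ?_
    have : c i w = 0 := by
      by_contra h0
      exact hw (Finset.mem_biUnion.2 ⟨i, Finset.mem_univ _, Finsupp.mem_support_iff.2 h0⟩)
    rw [this, zero_smul]
  · ext1 ξ
    simp only [ContinuousLinearMap.sum_apply, ContinuousLinearMap.smulRight_apply,
      ContinuousLinearMap.smul_apply, ContinuousLinearMap.id_apply, Finset.sum_smul]
    rw [Finset.sum_comm]
    conv_rhs => rw [← b.sum_repr ξ]
    refine Finset.sum_congr rfl fun i _ => ?_
    rw [← hc i, Finsupp.sum, Finset.smul_sum]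
    refine (Finset.sum_subset ?_ ?_).symm.trans (Finset.sum_congr rfl fun w _ => ?_)
    · exact Finset.subset_biUnion_of_mem (fun i => (c i).support) (Finset.mem_univ i)
    · intro w _ hw
      rw [Finsupp.notMem_support_iff.1 hw]; simp
    · simp [smul_smul, mul_comm]

theorem rinv {α : Type} (Z : α → E → E) (hZ : ∀ w, Continuous (Z w)) (K : Set E)
    (hK : IsCompact K) (h : ∀ y ∈ K, Submodule.span ℝ (range fun w => Z w y) = ⊤) :
    ∃ W : Finset α, ∃ R : E → (W → (E →L[ℝ] ℝ)), ContinuousOn R K ∧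
      ∀ y ∈ K, ‖∑ w : W, (R y w).smulRight (Z w y) - ContinuousLinearMap.id ℝ E‖ ≤ 1/4 := by
  classical
  choose! W φ h0 h1 using fun y (hy : y ∈ K) => rinv_pt (fun w => Z w y) (h y hy)
  let N : E → Set E := fun y =>
    {y' | ‖∑ w ∈ W y, (φ y w).smulRight (Z w y') - ContinuousLinearMap.id ℝ E‖ < 1/4}
  have hcont : ∀ (T : Finset α) (f : α → E →L[ℝ] ℝ),
      Continuous fun y' => ‖∑ w ∈ T, (f w).smulRight (Z w y') - ContinuousLinearMap.id ℝ E‖ := by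
    intro T f
    refine ((continuous_finset_sum _ fun w _ => ?_).sub continuous_const).norm
    exact ((ContinuousLinearMap.smulRightL ℝ E E (f w)).continuous).comp (hZ w)
  have hN : ∀ y, IsOpen (N y) := fun y => isOpen_lt (hcont _ _) continuous_const
  obtain ⟨t, htK, ht⟩ := hK.elim_nhds_subcover N (fun y hy => (hN y).mem_nhds (by
    show ‖_‖ < _
    rw [h1 y hy]; simp))
  let T := t.biUnion W
  have hsum : ∀ y0 ∈ t, ∀ y, ∑ w : T, (φ y0 w).smulRight (Z w y) =
      ∑ w ∈ W y0, (φ y0 w).smulRight (Z w y) := by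
    intro y0 hy0 y
    rw [Finset.sum_coe_sort T (fun w => (φ y0 w).smulRight (Z w y))]
    refine (Finset.sum_subset (Finset.subset_biUnion_of_mem W hy0) fun w _ hw => ?_).symm
    rw [h0 y0 (htK y0 hy0) w hw]; ext; simp
  haveI : CompactSpace K := isCompact_iff_compactSpace.1 hK
  obtain ⟨R, hR⟩ := exists_continuous_forall_mem_convex_of_local_const (X := K)
    (E := T → (E →L[ℝ] ℝ))
    (t := fun y => {f | ‖∑ w : T, (f w).smulRight (Z w y) - ContinuousLinearMap.id ℝ E‖ < 1/4})
    (by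
      intro y
      let Λ : (T → (E →L[ℝ] ℝ)) →ₗ[ℝ] (E →L[ℝ] E) :=
        { toFun := fun f => ∑ w : T, (f w).smulRight (Z w y)
          map_add' := by
            intro f g
            rw [← Finset.sum_add_distrib]
            refine Finset.sum_congr rfl fun w _ => ?_
            ext ξ; simp [add_smul]
          map_smul' := by
            intro a f
            rw [Finset.smul_sum]
            refine Finset.sum_congr rfl fun w _ => ?_
            ext ξ; simp [smul_smul] }
      have : {f : T → (E →L[ℝ] ℝ) | ‖∑ w : T, (f w).smulRight (Z w y) - ContinuousLinearMap.id ℝ E‖ < 1/4}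
        = Λ ⁻¹' (Metric.ball (ContinuousLinearMap.id ℝ E) (1/4)) := by
        ext f; simp [Λ, dist_eq_norm]
      rw [this]
      exact (convex_ball _ _).linear_preimage Λ)
    (by
      intro y
      obtain ⟨y0, hy0, hy0'⟩ := mem_iUnion₂.1 (ht y.2)
      refine ⟨fun w => φ y0 w, ?_⟩
      have : Subtype.val ⁻¹' (N y0) ∈ 𝓝 y := ((hN y0).preimage continuous_subtype_val).mem_nhds hy0'
      filter_upwards [this] with y' hy'
      show ‖∑ w : T, (φ y0 w).smulRight (Z w y') - ContinuousLinearMap.id ℝ E‖ < 1/4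
      rw [hsum y0 hy0]; exact hy')
  refine ⟨T, fun y => if hy : y ∈ K then R ⟨y, hy⟩ else 0, ?_, ?_⟩
  · rw [continuousOn_iff_continuous_domRestrict]
    convert R.continuous using 1
    funext y
    simp [Set.domRestrict, y.2]
  · intro y hy
    have := hR ⟨y, hy⟩
    simp only [hy, dif_pos]
    exact le_of_lt this

end rinv
end EPM

namespace EPM

theorem unif_lip {A B G : Type} [NormedAddCommGroup A] [NormedSpace ℝ A]
    [NormedAddCommGroup B] [NormedSpace ℝ B] [NormedAddCommGroup G] [NormedSpace ℝ G]
    (f : A × B → G) (hf : ContDiff ℝ (⊤ : ℕ∞) f) (Ka : Set A) (Kb : Set B) (ha : IsCompact Ka)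
    (hac : Convex ℝ Ka) (hb : IsCompact Kb) :
    ∃ C, 0 ≤ C ∧ ∀ a ∈ Ka, ∀ a' ∈ Ka, ∀ b ∈ Kb, ‖f (a, b) - f (a', b)‖ ≤ C * ‖a - a'‖ := by
  have hfd : Continuous (fderiv ℝ f) := hf.continuous_fderiv (by simp)
  obtain ⟨C, hC⟩ := (ha.prod hb).exists_bound_of_continuousOn hfd.continuousOn
  refine ⟨max C 0, le_max_right _ _, fun a h1 a' h2 b h3 => ?_⟩
  refine hac.norm_image_sub_le_of_norm_hasFDerivWithin_le (f := fun a => f (a, b))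
    (f' := fun a => (fderiv ℝ f (a, b)).comp (ContinuousLinearMap.inl ℝ A B)) ?_ ?_ h2 h1
  · intro c hc
    have k1 : HasFDerivAt (fun a : A => (a, b)) (ContinuousLinearMap.inl ℝ A B) c := by
      have := (hasFDerivAt_id (𝕜 := ℝ) c).prodMk (hasFDerivAt_const b c)
      exact this
    exact (HasFDerivAt.comp c (g := f) (hf.differentiable (by simp) _).hasFDerivAt k1).hasFDerivWithinAt
  · intro c hc
    refine (ContinuousLinearMap.opNorm_comp_le _ _).trans ?_
    have h4 : ‖fderiv ℝ f (c, b)‖ ≤ max C 0 := (hC (c, b) ⟨hc, h3⟩).trans (le_max_left _ _)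
    have h5 : ‖ContinuousLinearMap.inl ℝ A B‖ ≤ 1 := ContinuousLinearMap.norm_inl_le_one ℝ A B
    nlinarith [norm_nonneg (fderiv ℝ f (c, b)), norm_nonneg (ContinuousLinearMap.inl ℝ A B)]

section loc
variable {E : Type} [NormedAddCommGroup E] [NormedSpace ℝ E] [FiniteDimensional ℝ E]
variable {ι : Type} [Fintype ι]

/-- the rescaled coefficients -/
def Pc (κ : ℕ) (len : ι → ℕ) (R : E → ι → (E →L[ℝ] ℝ)) (ε : ℝ) (y : E) : E →L[ℝ] (ι → ℝ) :=
  ContinuousLinearMap.pi fun i => (ε ^ (κ - len i) * ε ^ (κ + 1)) • R y i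

theorem Pc_apply (κ : ℕ) (len : ι → ℕ) (R : E → ι → (E →L[ℝ] ℝ)) (ε : ℝ) (y ζ : E) (i : ι) :
    Pc κ len R ε y ζ i = ε ^ (κ - len i) * ε ^ (κ + 1) * R y i ζ := rfl

theorem Pc_norm (κ : ℕ) (len : ι → ℕ) (R : E → ι → (E →L[ℝ] ℝ)) (ε : ℝ) (h0 : 0 ≤ ε) (h1 : ε ≤ 1)
    (y : E) : ‖Pc κ len R ε y‖ ≤ ε ^ (κ + 1) * ‖R y‖ := by
  refine ContinuousLinearMap.opNorm_le_bound _ (by positivity) fun ζ => ?_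
  refine (pi_norm_le_iff_of_nonneg (by positivity)).2 fun i => ?_
  rw [Pc_apply, norm_mul, norm_mul, norm_pow, norm_pow, Real.norm_of_nonneg h0]
  have e1 : ε ^ (κ - len i) ≤ 1 := pow_le_one₀ h0 h1
  have e2 : ‖R y i ζ‖ ≤ ‖R y‖ * ‖ζ‖ :=
    ((R y i).le_opNorm ζ).trans (mul_le_mul_of_nonneg_right (norm_le_pi_norm (R y) i) (norm_nonneg _))
  have e3 : 0 ≤ ε ^ (κ + 1) := by positivity
  calc ε ^ (κ - len i) * ε ^ (κ + 1) * ‖R y i ζ‖ ≤ 1 * ε ^ (κ + 1) * (‖R y‖ * ‖ζ‖) := by gcongr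
    _ = _ := by ring

/-- the fixed point map -/
def Th (κ : ℕ) (len : ι → ℕ) (R : E → ι → (E →L[ℝ] ℝ)) (Ef : (ℝ × (ι → ℝ)) × (ℝ × E) → E)
    (τ ε : ℝ) (y v ζ : E) : E :=
  ζ + (ε ^ (2 * κ + 1))⁻¹ • (v - (Ef ((τ, Pc κ len R ε y ζ), (ε, y)) - y))

set_option maxHeartbeats 2000000 in
theorem contraction (κ : ℕ) (len : ι → ℕ) (hlen : ∀ i, len i ≤ κ) (R : E → ι → (E →L[ℝ] ℝ))
    (Ef : (ℝ × (ι → ℝ)) × (ℝ × E) → E) (hE : ContDiff ℝ (⊤ : ℕ∞) Ef)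
    (g : ι → ℝ × E → E) (hg : ∀ i, ContDiff ℝ (⊤ : ℕ∞) (g i))
    (E0 : ∀ ε y, Ef ((0, 0), (ε, y)) = y)
    (E1 : ∀ ε y, HasFDerivAt (fun ρ => Ef ((0, ρ), (ε, y)))
      (∑ i, (ContinuousLinearMap.proj (R := ℝ) (φ := fun _ : ι => ℝ) i).smulRight
          (ε ^ (len i) • g i (ε, y))) 0)
    (K : Set E) (hK : IsCompact K) (hRc : ContinuousOn R K)
    (hR : ∀ y ∈ K, ‖∑ i, (R y i).smulRight (g i (0, y)) - ContinuousLinearMap.id ℝ E‖ ≤ 1/4) :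
    ∃ ε0, 0 < ε0 ∧ ε0 ≤ 1 ∧ ∀ ε, 0 < ε → ε ≤ ε0 → ∀ τ, 0 ≤ τ → τ ≤ ε ^ (2 * κ + 2) → ∀ y ∈ K, ∀ v,
      ‖v‖ ≤ ε ^ (2 * κ + 2) →
      (∀ ζ, ‖ζ‖ ≤ 1 → ‖Th κ len R Ef τ ε y v ζ‖ ≤ 1) ∧
      ∀ ζ, ‖ζ‖ ≤ 1 → ∀ ζ', ‖ζ'‖ ≤ 1 →
        ‖Th κ len R Ef τ ε y v ζ - Th κ len R Ef τ ε y v ζ'‖ ≤ 1/2 * ‖ζ - ζ'‖ := by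
  -- partial derivative in rho
  set J : (ι → ℝ) →L[ℝ] ((ℝ × (ι → ℝ)) × (ℝ × E)) :=
    (ContinuousLinearMap.inl ℝ (ℝ × (ι → ℝ)) (ℝ × E)).comp (ContinuousLinearMap.inr ℝ ℝ (ι → ℝ)) with hJ
  have hDs : ContDiff ℝ (⊤ : ℕ∞) (fun z => (fderiv ℝ Ef z).comp J) :=
    (hE.fderiv_right (m := (⊤ : ℕ∞)) (by simp)).clm_comp contDiff_const
  set D : (ℝ × (ι → ℝ)) × (ℝ × E) → ((ι → ℝ) →L[ℝ] E) := fun z => (fderiv ℝ Ef z).comp J with hD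
  have hDd : ∀ τ ρ b, HasFDerivAt (fun ρ => Ef ((τ, ρ), b)) (D ((τ, ρ), b)) ρ := by
    intro τ ρ b
    have k0 : HasFDerivAt (fun ρ : ι → ℝ => (τ, ρ)) (ContinuousLinearMap.inr ℝ ℝ (ι → ℝ)) ρ := by
      have := (hasFDerivAt_const (𝕜 := ℝ) τ ρ).prodMk (hasFDerivAt_id ρ)
      exact this
    have k1 : HasFDerivAt (fun ρ : ι → ℝ => ((τ, ρ), b)) J ρ := by
      have := k0.prodMk (hasFDerivAt_const b ρ)
      exact this
    exact HasFDerivAt.comp ρ (g := Ef) (hE.differentiable (by simp) _).hasFDerivAt k1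
  have hD0 : ∀ ε y, D ((0, 0), (ε, y)) = ∑ i, (ContinuousLinearMap.proj (R := ℝ) (φ := fun _ : ι => ℝ) i).smulRight
          (ε ^ (len i) • g i (ε, y)) := fun ε y => (hDd 0 0 (ε, y)).unique (E1 ε y)
  have cI : IsCompact (Icc (0:ℝ) 1) := isCompact_Icc
  have cB : IsCompact (Metric.closedBall (0 : ι → ℝ) 1) := isCompact_closedBall _ _
  have vI : Convex ℝ (Icc (0:ℝ) 1) := convex_Icc _ _
  have vB : Convex ℝ (Metric.closedBall (0 : ι → ℝ) 1) := convex_closedBall _ _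
  obtain ⟨C1, C1n, b1⟩ := unif_lip D hDs _ _ (cI.prod cB) (vI.prod vB) (cI.prod hK)
  obtain ⟨C3, C3n, b3⟩ := unif_lip Ef hE _ _ (cI.prod cB) (vI.prod vB) (cI.prod hK)
  choose C2 C2n b2 using fun i => unif_lip (g i) (hg i) _ _ cI vI hK
  obtain ⟨C4', b4'⟩ := hK.exists_bound_of_continuousOn hRc
  set C4 := max C4' 0 with hC4
  have C4n : 0 ≤ C4 := le_max_right _ _
  have b4 : ∀ y ∈ K, ‖R y‖ ≤ C4 := fun y hy => (b4' y hy).trans (le_max_left _ _)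
  set C5 := ∑ i, C4 * C2 i with hC5
  have C5n : 0 ≤ C5 := Finset.sum_nonneg fun i _ => mul_nonneg C4n (C2n i)
  set C := C5 + C1 * (1 + C4) * C4 with hC
  have Cn : 0 ≤ C := by positivity
  set M := 4 * (1 + C + C3 + C4) with hM
  have Mpos : 4 ≤ M := by rw [hM]; nlinarith
  refine ⟨M⁻¹, by positivity, inv_le_one_of_one_le₀ (by linarith), ?_⟩
  intro ε hε hε0 τ hτ hτε y hy v hv
  have hεM : ε * M ≤ 1 := by
    calc ε * M ≤ M⁻¹ * M := by gcongr
      _ = 1 := inv_mul_cancel₀ (by linarith)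
  have hε1 : ε ≤ 1 := by nlinarith
  have hεC : ε * C ≤ 1/4 := by rw [hM] at hεM; nlinarith [mul_nonneg hε.le Cn, mul_nonneg hε.le C3n, mul_nonneg hε.le C4n]
  have hεC3 : ε * (1 + C3) ≤ 1/4 := by rw [hM] at hεM; nlinarith [mul_nonneg hε.le Cn, mul_nonneg hε.le C3n, mul_nonneg hε.le C4n]
  have hεC4 : ε * C4 ≤ 1 := by rw [hM] at hεM; nlinarith [mul_nonneg hε.le Cn, mul_nonneg hε.le C3n, mul_nonneg hε.le C4n]
  have hεm : ε ∈ Icc (0:ℝ) 1 := ⟨hε.le, hε1⟩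
  have hτk : τ ≤ ε ^ (κ + 1) := hτε.trans (pow_le_pow_of_le_one hε.le hε1 (by omega))
  have hτ1 : τ ∈ Icc (0:ℝ) 1 := ⟨hτ, hτk.trans (pow_le_one₀ hε.le hε1)⟩
  have hpk : ε ^ (κ + 1) ≤ ε := by
    calc ε ^ (κ + 1) ≤ ε ^ 1 := pow_le_pow_of_le_one hε.le hε1 (by omega)
      _ = ε := pow_one ε
  have hpp : 0 < ε ^ (2 * κ + 1) := by positivity
  have hPn : ‖Pc κ len R ε y‖ ≤ ε ^ (κ + 1) * C4 :=
    (Pc_norm κ len R ε hε.le hε1 y).trans (by gcongr; exact b4 y hy)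
  set P := Pc κ len R ε y with hP
  have hPb : ∀ ζ : E, ‖ζ‖ ≤ 1 → ‖P ζ‖ ≤ ε ^ (κ + 1) * C4 := by
    intro ζ hζ
    calc ‖P ζ‖ ≤ ‖P‖ * ‖ζ‖ := P.le_opNorm _
      _ ≤ (ε ^ (κ + 1) * C4) * 1 := by gcongr
      _ = _ := mul_one _
  have hPb1 : ∀ ζ : E, ‖ζ‖ ≤ 1 → P ζ ∈ Metric.closedBall (0 : ι → ℝ) 1 := by
    intro ζ hζ
    rw [mem_closedBall_zero_iff]
    refine (hPb ζ hζ).trans ?_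
    calc ε ^ (κ + 1) * C4 ≤ ε * C4 := by gcongr
      _ ≤ 1 := hεC4
  have z0 : (0 : ι → ℝ) ∈ Metric.closedBall (0 : ι → ℝ) 1 := by simp
  have i0 : (0:ℝ) ∈ Icc (0:ℝ) 1 := by simp
  -- leading term
  have lead : (D ((0, 0), (ε, y))).comp P = ε ^ (2 * κ + 1) • ∑ i, (R y i).smulRight (g i (ε, y)) := by
    ext1 ζ
    rw [hD0]
    simp only [ContinuousLinearMap.comp_apply, ContinuousLinearMap.sum_apply,
      ContinuousLinearMap.smulRight_apply, ContinuousLinearMap.proj_apply, hP, Pc_apply,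
      ContinuousLinearMap.smul_apply, Finset.smul_sum, smul_smul]
    refine Finset.sum_congr rfl fun i _ => ?_
    congr 1
    have : ε ^ (2 * κ + 1) = ε ^ (κ - len i) * ε ^ (len i) * ε ^ (κ + 1) := by
      rw [← pow_add, ← pow_add]; congr 1; have := hlen i; omega
    rw [this]; ring
  have gdiff : ‖∑ i, (R y i).smulRight (g i (ε, y)) - ContinuousLinearMap.id ℝ E‖ ≤ 1/4 + C5 * ε := by
    have e : ∑ i, (R y i).smulRight (g i (ε, y)) - ContinuousLinearMap.id ℝ E
        = (∑ i, (R y i).smulRight (g i (0, y)) - ContinuousLinearMap.id ℝ E)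
          + ∑ i, (R y i).smulRight (g i (ε, y) - g i (0, y)) := by
      have : ∀ i, (R y i).smulRight (g i (ε, y) - g i (0, y))
        = (R y i).smulRight (g i (ε, y)) - (R y i).smulRight (g i (0, y)) := by
        intro i; ext ζ; simp [smul_sub]
      simp only [this, Finset.sum_sub_distrib]; abel
    rw [e]
    refine (norm_add_le _ _).trans (add_le_add (hR y hy) ?_)
    refine (norm_sum_le _ _).trans ?_
    rw [hC5, Finset.sum_mul]
    refine Finset.sum_le_sum fun i _ => ?_
    rw [ContinuousLinearMap.norm_smulRight_apply]
    have := b2 i ε hεm 0 i0 y hy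
    rw [sub_zero, Real.norm_of_nonneg hε.le] at this
    have h4 : ‖R y i‖ ≤ C4 := (norm_le_pi_norm (R y) i).trans (b4 y hy)
    calc ‖R y i‖ * ‖g i (ε, y) - g i (0, y)‖ ≤ C4 * (C2 i * ε) := by gcongr
      _ = _ := by ring
  -- derivative estimate
  have dest : ∀ ζ : E, ‖ζ‖ ≤ 1 → ‖(D ((τ, P ζ), (ε, y))).comp P
      - ε ^ (2 * κ + 1) • ContinuousLinearMap.id ℝ E‖ ≤ ε ^ (2 * κ + 1) * (1/2) := by
    intro ζ hζ
    have e : (D ((τ, P ζ), (ε, y))).comp P - ε ^ (2 * κ + 1) • ContinuousLinearMap.id ℝ E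
      = (D ((τ, P ζ), (ε, y)) - D ((0, 0), (ε, y))).comp P
        + ε ^ (2 * κ + 1) • (∑ i, (R y i).smulRight (g i (ε, y)) - ContinuousLinearMap.id ℝ E) := by
      rw [smul_sub, ← lead, ContinuousLinearMap.sub_comp]; abel
    rw [e]
    have n1 : ‖D ((τ, P ζ), (ε, y)) - D ((0, 0), (ε, y))‖ ≤ C1 * (ε ^ (κ + 1) * (1 + C4)) := by
      refine (b1 (τ, P ζ) ⟨hτ1, hPb1 ζ hζ⟩ (0, 0) ⟨i0, z0⟩ (ε, y) ⟨hεm, hy⟩).trans ?_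
      gcongr
      rw [Prod.mk_sub_mk, sub_zero, sub_zero, Prod.norm_mk]
      refine max_le ?_ ?_
      · rw [Real.norm_of_nonneg hτ]; nlinarith [mul_nonneg (pow_nonneg hε.le (κ + 1)) C4n]
      · have := hPb ζ hζ; nlinarith [pow_nonneg hε.le (κ + 1)]
    have pw2 : ε ^ (κ + 1) * ε ^ (κ + 1) = ε ^ (2 * κ + 1) * ε := by ring
    calc _ ≤ ‖(D ((τ, P ζ), (ε, y)) - D ((0, 0), (ε, y))).comp P‖ + _ := norm_add_le _ _
      _ ≤ (C1 * (ε ^ (κ + 1) * (1 + C4))) * (ε ^ (κ + 1) * C4) + ε ^ (2 * κ + 1) * (1/4 + C5 * ε) := by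
          gcongr
          · refine (ContinuousLinearMap.opNorm_comp_le _ _).trans ?_
            gcongr
          · rw [norm_smul, norm_pow, Real.norm_of_nonneg hε.le]
            gcongr
      _ = (ε ^ (κ + 1) * ε ^ (κ + 1)) * (C1 * (1 + C4) * C4) + ε ^ (2 * κ + 1) * (1/4 + C5 * ε) := by ring
      _ = ε ^ (2 * κ + 1) * (1/4 + ε * C) := by rw [pw2, hC]; ring
      _ ≤ ε ^ (2 * κ + 1) * (1/2) := by gcongr; linarith
  -- Lipschitz
  have lip : ∀ ζ, ‖ζ‖ ≤ 1 → ∀ ζ', ‖ζ'‖ ≤ 1 →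
        ‖Th κ len R Ef τ ε y v ζ - Th κ len R Ef τ ε y v ζ'‖ ≤ 1/2 * ‖ζ - ζ'‖ := by
    intro ζ hζ ζ' hζ'
    have mv := (convex_closedBall (0 : E) 1).norm_image_sub_le_of_norm_hasFDerivWithin_le
      (f := fun ζ => Ef ((τ, P ζ), (ε, y)) - ε ^ (2 * κ + 1) • ζ)
      (f' := fun ζ => (D ((τ, P ζ), (ε, y))).comp P - ε ^ (2 * κ + 1) • ContinuousLinearMap.id ℝ E)
      (C := ε ^ (2 * κ + 1) * (1/2)) (x := ζ') (y := ζ) (by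
        intro c hc
        refine HasFDerivAt.hasFDerivWithinAt ?_
        refine HasFDerivAt.sub ?_ ?_
        · exact HasFDerivAt.comp c (g := fun ρ => Ef ((τ, ρ), (ε, y))) (hDd τ (P c) (ε, y)) P.hasFDerivAt
        · exact (hasFDerivAt_id c).const_smul _)
      (by intro c hc; exact dest c (mem_closedBall_zero_iff.1 hc))
      (mem_closedBall_zero_iff.2 hζ') (mem_closedBall_zero_iff.2 hζ)
    have e : Th κ len R Ef τ ε y v ζ - Th κ len R Ef τ ε y v ζ' = -((ε ^ (2 * κ + 1))⁻¹ •
        ((Ef ((τ, P ζ), (ε, y)) - ε ^ (2 * κ + 1) • ζ) - (Ef ((τ, P ζ'), (ε, y)) - ε ^ (2 * κ + 1) • ζ'))) := by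
      simp only [Th, smul_sub, smul_smul, inv_mul_cancel₀ hpp.ne', one_smul, ← hP]
      abel
    rw [e, norm_neg, norm_smul, norm_inv, Real.norm_of_nonneg hpp.le]
    calc _ ≤ (ε ^ (2 * κ + 1))⁻¹ * (ε ^ (2 * κ + 1) * (1/2) * ‖ζ - ζ'‖) := by gcongr
      _ = 1/2 * ‖ζ - ζ'‖ := by field_simp
  refine ⟨fun ζ hζ => ?_, lip⟩
  have h0 : ‖Th κ len R Ef τ ε y v 0‖ ≤ 1/2 := by
    have e : Th κ len R Ef τ ε y v 0 = (ε ^ (2 * κ + 1))⁻¹ • (v - (Ef ((τ, 0), (ε, y)) - Ef ((0, 0), (ε, y)))) := by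
      simp [Th, E0]
    have n3 : ‖Ef ((τ, 0), (ε, y)) - Ef ((0, 0), (ε, y))‖ ≤ C3 * τ := by
      have := b3 (τ, 0) ⟨hτ1, z0⟩ (0, 0) ⟨i0, z0⟩ (ε, y) ⟨hεm, hy⟩
      rwa [Prod.mk_sub_mk, sub_zero, sub_zero, Prod.norm_mk, norm_zero, Real.norm_of_nonneg hτ,
        max_eq_left hτ] at this
    rw [e, norm_smul, norm_inv, Real.norm_of_nonneg hpp.le]
    calc _ ≤ (ε ^ (2 * κ + 1))⁻¹ * (ε ^ (2 * κ + 2) + C3 * ε ^ (2 * κ + 2)) := by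
          gcongr
          refine (norm_sub_le _ _).trans (add_le_add hv (n3.trans ?_))
          gcongr
      _ = ε * (1 + C3) := by field_simp; ring
      _ ≤ 1/2 := by linarith
  have := lip ζ hζ 0 (by simp)
  rw [sub_zero] at this
  calc ‖Th κ len R Ef τ ε y v ζ‖ = ‖(Th κ len R Ef τ ε y v ζ - Th κ len R Ef τ ε y v 0) + Th κ len R Ef τ ε y v 0‖ := by
        rw [sub_add_cancel]
    _ ≤ 1/2 * ‖ζ‖ + 1/2 := (norm_add_le _ _).trans (add_le_add this h0)
    _ ≤ 1 := by linarith

end loc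
end EPM

namespace EPM

theorem fix_ball {E : Type} [NormedAddCommGroup E] [NormedSpace ℝ E] [CompleteSpace E] (T : E → E)
    (h1 : ∀ ζ, ‖ζ‖ ≤ 1 → ‖T ζ‖ ≤ 1)
    (h2 : ∀ ζ, ‖ζ‖ ≤ 1 → ∀ ζ', ‖ζ'‖ ≤ 1 → ‖T ζ - T ζ'‖ ≤ 1/2 * ‖ζ - ζ'‖) :
    ∃ ζ, ‖ζ‖ ≤ 1 ∧ T ζ = ζ := by
  have hm : MapsTo T (Metric.closedBall 0 1) (Metric.closedBall 0 1) := by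
    intro ζ hζ
    rw [mem_closedBall_zero_iff] at *
    exact h1 ζ hζ
  have hc : ContractingWith (1/2) (hm.restrict T _ _) := by
    refine ⟨by norm_num, LipschitzWith.of_dist_le_mul fun a b => ?_⟩
    have := h2 a (mem_closedBall_zero_iff.1 a.2) b (mem_closedBall_zero_iff.1 b.2)
    rw [Subtype.dist_eq, Subtype.dist_eq, dist_eq_norm, dist_eq_norm]
    simpa using this
  obtain ⟨ζ, h3, h4, -⟩ := ContractingWith.exists_fixedPoint' (Metric.isClosed_closedBall.isComplete)
    hm hc (x := 0) (by simp) (edist_ne_top _ _)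
  exact ⟨ζ, mem_closedBall_zero_iff.1 h3, h4⟩

/-- domain of the local lemma -/
def Dm {E : Type} [NormedAddCommGroup E] (K : Set E) (r0 : ℝ) : Set (ℝ × E × E) :=
  {z | 0 ≤ z.1 ∧ z.2.1 ∈ K ∧ z.1 + ‖z.2.2 - z.2.1‖ ≤ r0}

section loc
variable {V E : Type} [NormedAddCommGroup V] [NormedSpace ℝ V] [CompleteSpace V]
   [NormedAddCommGroup E] [NormedSpace ℝ E] [CompleteSpace E] [FiniteDimensional ℝ E]
variable {p : ENNReal} [hp : Fact (1 ≤ p)]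

set_option maxHeartbeats 1000000 in
theorem local_lemma (S : Sys V E) (K : Set E) (hK : IsCompact K) (W : Finset (List V × V))
    (R : E → W → (E →L[ℝ] ℝ)) (hRc : ContinuousOn R K)
    (hR : ∀ y ∈ K, ‖∑ w : W, (R y w).smulRight (S.Zb w.1.1 w.1.2 y) - ContinuousLinearMap.id ℝ E‖ ≤ 1/4)
    (κ : ℕ) (hκ : ∀ w ∈ W, w.1.length ≤ κ) :
    ∃ C r0 : ℝ, 0 ≤ C ∧ 0 < r0 ∧ ∃ k : ℝ × E × E → Lp V p mu, ContinuousOn k (Dm K r0) ∧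
      ∀ z ∈ Dm K r0, S.Phi (z.1, k z, z.2.1) = z.2.2 ∧
        ‖k z‖ ≤ C * (z.1 + ‖z.2.2 - z.2.1‖) ^ ((1:ℝ) / (2 * κ + 2 : ℕ)) := by
  obtain ⟨q, g, hg, g0, q0, q1⟩ := multi (p := p) S (fun w : W => w.1) Finset.univ
  set len : W → ℕ := fun w => w.1.1.length with hlen
  set Ef : (ℝ × (W → ℝ)) × (ℝ × E) → E := fun z => S.Phi (z.1.1, q (z.2.1, z.1.2), z.2.2) with hEf
  have hE : ContDiff ℝ (⊤ : ℕ∞) Ef := by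
    refine S.Phi_contDiff.comp ?_
    refine (contDiff_fst.comp contDiff_fst).prodMk (ContDiff.prodMk ?_ (contDiff_snd.comp contDiff_snd))
    exact clm_cd (A := (ℝ × (W → ℝ)) × (ℝ × E)) q (f := fun z => (z.2.1, z.1.2))
      ((contDiff_fst.comp contDiff_snd).prodMk (contDiff_snd.comp contDiff_fst))
  obtain ⟨ε0, e0, e1, hcon⟩ := contraction κ len (fun w => hκ w.1 w.2) R Ef hE g hg q0 q1 K hK hRc
    (by intro y hy; simp only [g0]; exact hR y hy)
  set N := 2 * κ + 2 with hN
  have N0 : N ≠ 0 := by omega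
  obtain ⟨C4', b4'⟩ := hK.exists_bound_of_continuousOn hRc
  set C4 := max C4' 0 with hC4
  have C4n : 0 ≤ C4 := le_max_right _ _
  have b4 : ∀ y ∈ K, ‖R y‖ ≤ C4 := fun y hy => (b4' y hy).trans (le_max_left _ _)
  set rr : ℝ × E × E → ℝ := fun z => z.1 + ‖z.2.2 - z.2.1‖ with hrr
  have rrc : Continuous rr := by rw [hrr]; fun_prop
  set eps : ℝ × E × E → ℝ := fun z => (rr z) ^ ((1:ℝ) / N) with heps
  have epsc : Continuous eps := rrc.rpow_const (fun z => Or.inr (by positivity))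
  have rr0 : ∀ z ∈ Dm K (ε0 ^ N), 0 ≤ rr z := fun z hz => add_nonneg hz.1 (norm_nonneg _)
  have eps0 : ∀ z ∈ Dm K (ε0 ^ N), 0 ≤ eps z := fun z hz => Real.rpow_nonneg (rr0 z hz) _
  have epsN : ∀ z ∈ Dm K (ε0 ^ N), eps z ^ N = rr z := by
    intro z hz
    rw [heps]; simp only
    rw [one_div, Real.rpow_inv_natCast_pow (rr0 z hz) N0]
  have epsle : ∀ z ∈ Dm K (ε0 ^ N), eps z ≤ ε0 := by
    intro z hz
    refine le_of_pow_le_pow_left₀ N0 e0.le ?_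
    rw [epsN z hz]; exact hz.2.2
  have hfix : ∀ z : ℝ × E × E, ∃ ζ : E, ‖ζ‖ ≤ 1 ∧ (z ∈ Dm K (ε0 ^ N) → 0 < rr z →
      Th κ len R Ef z.1 (eps z) z.2.1 (z.2.2 - z.2.1) ζ = ζ) := by
    intro z
    by_cases hz : z ∈ Dm K (ε0 ^ N) ∧ 0 < rr z
    · have hc := hcon (eps z) (Real.rpow_pos_of_pos hz.2 _) (epsle z hz.1) z.1 hz.1.1
        (by rw [epsN z hz.1]; simp [hrr]) z.2.1 hz.1.2.1 (z.2.2 - z.2.1)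
        (by rw [epsN z hz.1]; simp [hrr]; exact hz.1.1)
      obtain ⟨ζ, h1, h2⟩ := fix_ball _ hc.1 hc.2
      exact ⟨ζ, h1, fun _ _ => h2⟩
    · exact ⟨0, by simp, fun h1 h2 => absurd ⟨h1, h2⟩ hz⟩
  choose ζ ζ1 ζf using hfix
  set k : ℝ × E × E → Lp V p mu := fun z => q (eps z, Pc κ len R (eps z) z.2.1 (ζ z)) with hk
  have bound : ∀ z ∈ Dm K (ε0 ^ N), ‖k z‖ ≤ (‖q‖ * (1 + C4)) * eps z := by
    intro z hz
    have h1 : eps z ≤ 1 := (epsle z hz).trans e1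
    have h2 := Pc_norm κ len R (eps z) (eps0 z hz) h1 z.2.1
    have h3 : eps z ^ (κ + 1) ≤ eps z := by
      calc eps z ^ (κ + 1) ≤ eps z ^ 1 := pow_le_pow_of_le_one (eps0 z hz) h1 (by omega)
        _ = eps z := pow_one _
    refine (q.le_opNorm _).trans ?_
    rw [mul_assoc]
    gcongr
    rw [Prod.norm_mk]
    refine max_le ?_ ?_
    · rw [Real.norm_of_nonneg (eps0 z hz)]; nlinarith [eps0 z hz]
    · calc _ ≤ ‖Pc κ len R (eps z) z.2.1‖ * ‖ζ z‖ := ContinuousLinearMap.le_opNorm _ _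
        _ ≤ (eps z ^ (κ + 1) * ‖R z.2.1‖) * 1 := by
          exact mul_le_mul h2 (ζ1 z) (norm_nonneg _) (by have := eps0 z hz; positivity)
        _ ≤ (eps z * C4) * 1 := by
          have := eps0 z hz
          gcongr
          exact b4 _ hz.2.1
        _ ≤ (1 + C4) * eps z := by nlinarith [eps0 z hz]
  refine ⟨‖q‖ * (1 + C4), ε0 ^ N, by positivity, by positivity, k, ?_, fun z hz => ⟨?_, ?_⟩⟩
  · intro z0 hz0
    rcases (rr0 z0 hz0).eq_or_lt with h | h
    · have e00 : eps z0 = 0 := by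
        rw [heps]; simp only; rw [← h]; exact Real.zero_rpow (by positivity)
      have k0 : k z0 = 0 := by
        have := bound z0 hz0
        rw [e00, mul_zero] at this
        exact norm_le_zero_iff.1 this
      rw [ContinuousWithinAt, k0]
      refine squeeze_zero_norm' (a := fun z => (‖q‖ * (1 + C4)) * eps z) ?_ ?_
      · filter_upwards [self_mem_nhdsWithin] with z hz using bound z hz
      · have : Tendsto (fun z => (‖q‖ * (1 + C4)) * eps z) (𝓝 z0) (𝓝 ((‖q‖ * (1 + C4)) * eps z0)) :=
          (continuous_const.mul epsc).tendsto z0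
        rw [e00, mul_zero] at this
        exact this.mono_left nhdsWithin_le_nhds
    · -- continuity of the fixed point
      have Rc : ContinuousWithinAt (fun z : ℝ × E × E => R z.2.1) (Dm K (ε0 ^ N)) z0 := by
        refine ContinuousWithinAt.comp (t := K) (g := R) (hRc _ hz0.2.1) (by fun_prop) ?_
        intro z hz; exact hz.2.1
      have Pcc : ∀ f : ℝ × E × E → E, ContinuousWithinAt f (Dm K (ε0 ^ N)) z0 →
          ContinuousWithinAt (fun z => Pc κ len R (eps z) z.2.1 (f z)) (Dm K (ε0 ^ N)) z0 := by
        intro f hf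
        refine continuousWithinAt_pi.2 fun i => ?_
        simp only [Pc_apply]
        have h1 : ContinuousWithinAt (fun z => eps z ^ (κ - len i) * eps z ^ (κ + 1)) (Dm K (ε0 ^ N)) z0 :=
          ((epsc.pow _).mul (epsc.pow _)).continuousWithinAt
        refine h1.mul ?_
        exact ((continuousWithinAt_pi.1 Rc) i).clm_apply hf
      have epos : 0 < eps z0 := Real.rpow_pos_of_pos h _
      have Tc : ContinuousWithinAt (fun z => Th κ len R Ef z.1 (eps z) z.2.1 (z.2.2 - z.2.1) (ζ z0))
          (Dm K (ε0 ^ N)) z0 := by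
        simp only [Th]
        refine continuousWithinAt_const.add (ContinuousWithinAt.smul ?_ ?_)
        · exact (epsc.pow _).continuousWithinAt.inv₀ (pow_pos epos _).ne'
        · refine ContinuousWithinAt.sub (by fun_prop) (ContinuousWithinAt.sub ?_ (by fun_prop))
          have hin : ContinuousWithinAt (fun z : ℝ × E × E =>
            (((z.1, Pc κ len R (eps z) z.2.1 (ζ z0)), (eps z, z.2.1)) : (ℝ × (W → ℝ)) × (ℝ × E)))
            (Dm K (ε0 ^ N)) z0 := by
            refine ContinuousWithinAt.prodMk (ContinuousWithinAt.prodMk (by fun_prop)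
              (Pcc _ continuousWithinAt_const)) (ContinuousWithinAt.prodMk epsc.continuousWithinAt (by fun_prop))
          exact hE.continuous.continuousAt.comp_continuousWithinAt hin
      have ζc : ContinuousWithinAt ζ (Dm K (ε0 ^ N)) z0 := by
        rw [ContinuousWithinAt, tendsto_iff_norm_sub_tendsto_zero]
        have hlim : Tendsto (fun z => 2 * ‖Th κ len R Ef z.1 (eps z) z.2.1 (z.2.2 - z.2.1) (ζ z0) - ζ z0‖)
            (𝓝[Dm K (ε0 ^ N)] z0) (𝓝 0) := by
          have Tc2 : Tendsto (fun z => Th κ len R Ef z.1 (eps z) z.2.1 (z.2.2 - z.2.1) (ζ z0))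
            (𝓝[Dm K (ε0 ^ N)] z0) (𝓝 (ζ z0)) := by
            have h5 := Tc.tendsto
            simp only [ζf z0 hz0 h] at h5
            exact h5
          have := (tendsto_iff_norm_sub_tendsto_zero.1 Tc2).const_mul 2
          rwa [mul_zero] at this
        refine squeeze_zero' (Eventually.of_forall fun _ => norm_nonneg _) ?_ hlim
        have hpos : ∀ᶠ z in 𝓝[Dm K (ε0 ^ N)] z0, 0 < rr z :=
          nhdsWithin_le_nhds (rrc.continuousAt.eventually (lt_mem_nhds h))
        filter_upwards [self_mem_nhdsWithin, hpos] with z hz hzp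
        have hc := hcon (eps z) (Real.rpow_pos_of_pos hzp _) (epsle z hz) z.1 hz.1
          (by rw [epsN z hz]; simp [hrr]) z.2.1 hz.2.1 (z.2.2 - z.2.1)
          (by rw [epsN z hz]; simp [hrr]; exact hz.1)
        have h1 := hc.2 (ζ z) (ζ1 z) (ζ z0) (ζ1 z0)
        rw [ζf z hz hzp] at h1
        have h2 : ‖ζ z - ζ z0‖ ≤ ‖ζ z - Th κ len R Ef z.1 (eps z) z.2.1 (z.2.2 - z.2.1) (ζ z0)‖
          + ‖Th κ len R Ef z.1 (eps z) z.2.1 (z.2.2 - z.2.1) (ζ z0) - ζ z0‖ := norm_sub_le_norm_sub_add_norm_sub _ _ _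
        linarith
      exact q.continuous.continuousAt.comp_continuousWithinAt
        (epsc.continuousWithinAt.prodMk (Pcc ζ ζc))
  · rcases (rr0 z hz).eq_or_lt with h | h
    · have e00 : eps z = 0 := by
        rw [heps]; simp only; rw [← h]; exact Real.zero_rpow (by positivity)
      have k0 : k z = 0 := by
        have := bound z hz
        rw [e00, mul_zero] at this
        exact norm_le_zero_iff.1 this
      have hz1 : z.1 = 0 := by
        have := hz.1; have := norm_nonneg (z.2.2 - z.2.1); simp only [hrr] at h; linarith
      have hz2 : z.2.2 = z.2.1 := by
        have h2 : ‖z.2.2 - z.2.1‖ = 0 := by simp only [hrr] at h; linarith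
        exact sub_eq_zero.1 (norm_eq_zero.1 h2)
      rw [k0, hz1, S.Phi_zero, hz2]
    · have := ζf z hz h
      have epos : 0 < eps z := Real.rpow_pos_of_pos h _
      rw [Th, add_eq_left, smul_eq_zero] at this
      have h2 := this.resolve_left (by positivity)
      have h3 : Ef ((z.1, Pc κ len R (eps z) z.2.1 (ζ z)), (eps z, z.2.1)) - z.2.1 = z.2.2 - z.2.1 :=
        (sub_eq_zero.1 h2).symm
      exact sub_left_injective h3
  · exact bound z hz

end loc
end EPM

namespace EPM

section glob
variable {V E : Type} [NormedAddCommGroup V] [NormedSpace ℝ V] [CompleteSpace V]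
   [NormedAddCommGroup E] [NormedSpace ℝ E] [CompleteSpace E] [FiniteDimensional ℝ E]
variable {p : ENNReal} [hp : Fact (1 ≤ p)]

/-- cut-off radial path from x to y -/
def pth (x : E) (s : ℝ) (y : E) : E := x + (max 0 (min 1 (s - ‖y - x‖))) • (y - x)

theorem pth_cont (x : E) (s : ℝ) : Continuous (pth x s) := by
  unfold pth; fun_prop

theorem pth_zero (x y : E) : pth x 0 y = x := by
  unfold pth
  have : max 0 (min 1 (0 - ‖y - x‖)) = 0 := by
    apply max_eq_left
    exact (min_le_right _ _).trans (by simp)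
  rw [this]; simp

theorem pth_self (x : E) (s : ℝ) : pth x s x = x := by simp [pth]

theorem pth_end (x y : E) (s : ℝ) (h : ‖y - x‖ + 1 ≤ s) : pth x s y = y := by
  unfold pth
  have : max 0 (min 1 (s - ‖y - x‖)) = 1 := by
    rw [min_eq_left (by linarith)]; simp
  rw [this]; simp

theorem pth_far (x y : E) (s R : ℝ) (hs : s ≤ R) (h : R < ‖y - x‖) : pth x s y = x := by
  unfold pth
  have : max 0 (min 1 (s - ‖y - x‖)) = 0 := by
    apply max_eq_left
    exact (min_le_right _ _).trans (by linarith)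
  rw [this]; simp

theorem pth_mem (x y : E) (s R : ℝ) (hR : 0 ≤ R) (hs : s ≤ R) : pth x s y ∈ Metric.closedBall x R := by
  rw [Metric.mem_closedBall]
  rcases lt_or_ge R ‖y - x‖ with h | h
  · rw [pth_far x y s R hs h]; simpa using hR
  · unfold pth
    rw [dist_eq_norm, add_sub_cancel_left, norm_smul, Real.norm_of_nonneg (le_max_left _ _)]
    have h1 : max 0 (min 1 (s - ‖y - x‖)) ≤ 1 := max_le zero_le_one (min_le_left _ _)
    have h2 : 0 ≤ max 0 (min 1 (s - ‖y - x‖)) := le_max_left _ _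
    nlinarith [norm_nonneg (y - x)]

theorem pth_lip (x y : E) (s s' R : ℝ) (hR : 0 ≤ R) (hs : s ≤ s') (hs' : s' ≤ R) :
    ‖pth x s' y - pth x s y‖ ≤ R * (s' - s) := by
  rcases lt_or_ge R ‖y - x‖ with h | h
  · rw [pth_far x y s R (hs.trans hs') h, pth_far x y s' R hs' h, sub_self, norm_zero]
    exact mul_nonneg hR (by linarith)
  · unfold pth
    rw [add_sub_add_left_eq_sub, ← sub_smul, norm_smul, mul_comm]
    refine mul_le_mul h ?_ (norm_nonneg _) hR
    calc _ ≤ |min 1 (s' - ‖y - x‖) - min 1 (s - ‖y - x‖)| := by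
          rw [Real.norm_eq_abs]
          rw [max_comm 0, max_comm 0]
          exact abs_max_sub_max_le_abs _ _ _
      _ ≤ |(s' - ‖y - x‖) - (s - ‖y - x‖)| := by
          have := abs_min_sub_min_le_max 1 (s' - ‖y - x‖) 1 (s - ‖y - x‖)
          simpa using this
      _ = s' - s := by
          rw [abs_of_nonneg (by linarith)]; ring

theorem local_cor (S : Sys V E) (K : Set E) (hK : IsCompact K)
    (hs : ∀ y, Submodule.span ℝ (range fun w : List V × V => S.Zb w.1 w.2 y) = ⊤) :
    ∃ r0 : ℝ, 0 < r0 ∧ ∃ k : ℝ × E × E → Lp V p mu, ContinuousOn k (Dm K r0) ∧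
      ∀ z ∈ Dm K r0, S.Phi (z.1, k z, z.2.1) = z.2.2 ∧ (z.1 = 0 → z.2.1 = z.2.2 → k z = 0) := by
  obtain ⟨W, R, hRc, hR⟩ := rinv (fun w : List V × V => S.Zb w.1 w.2)
    (fun w => (S.Zb_smooth w.1 w.2).continuous) K hK (fun y _ => hs y)
  obtain ⟨C, r0, hC, hr, k, hk, h⟩ := local_lemma (p := p) S K hK W R hRc hR (W.sup fun w => w.1.length)
    (fun w hw => Finset.le_sup (f := fun w : List V × V => w.1.length) hw)
  refine ⟨r0, hr, k, hk, fun z hz => ⟨(h z hz).1, fun h1 h2 => ?_⟩⟩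
  have h3 := (h z hz).2
  rw [h1, h2, sub_self, norm_zero, add_zero, Real.zero_rpow (by positivity), mul_zero] at h3
  exact norm_le_zero_iff.1 h3

/-- steering from `pth a` to `pth b` without drift -/
def TT (p : ENNReal) [Fact (1 ≤ p)] (S : Sys V E) (x : E) (a b : ℝ) : Prop :=
  ∃ e : E → Lp V p mu, Continuous e ∧ (∀ y, S.Phi (0, e y, pth x a y) = pth x b y) ∧
    (∀ y, ‖y - x‖ + 1 ≤ a → e y = 0) ∧ e x = 0

theorem TT_refl (S : Sys V E) (x : E) (a : ℝ) : TT p S x a a :=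
  ⟨fun _ => 0, continuous_const, fun y => S.Phi_zero _, fun _ _ => rfl, rfl⟩

theorem cat_zero : cat ((0 : Lp V p mu), (0 : Lp V p mu)) = 0 := by
  have : ((0 : Lp V p mu), (0 : Lp V p mu)) = 0 := rfl
  rw [this, map_zero]

theorem TT_trans (S : Sys V E) (x : E) (a b c : ℝ) (hab : a ≤ b) (h1 : TT p S x a b) (h2 : TT p S x b c) :
    TT p S x a c := by
  obtain ⟨e, he, e1, e2, e3⟩ := h1
  obtain ⟨f, hf, f1, f2, f3⟩ := h2
  refine ⟨fun y => cat (e y, f y), cat.continuous.comp (he.prodMk hf), fun y => ?_, fun y hy => ?_, ?_⟩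
  · rw [S.Phi_cat0, e1, f1]
  · simp only [e2 y hy, f2 y (hy.trans hab), cat_zero]
  · simp only [e3, f3, cat_zero]

theorem TT_unit (S : Sys V E) (x : E)
    (hs : ∀ y, Submodule.span ℝ (range fun w : List V × V => S.Zb w.1 w.2 y) = ⊤) (i : ℕ) :
    TT p S x i (i + 1) := by
  obtain ⟨r0, hr, k, hk, h⟩ := local_cor (p := p) S (Metric.closedBall x ((i:ℝ) + 1))
    (isCompact_closedBall _ _) hs
  have hi : (0:ℝ) ≤ (i:ℝ) + 1 := by positivity
  have step : ∀ s s' : ℝ, s ≤ s' → s' ≤ (i:ℝ) + 1 → ((i:ℝ) + 1) * (s' - s) ≤ r0 → TT p S x s s' := by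
    intro s s' h1 h2 h3
    have hD : ∀ y, ((0:ℝ), pth x s y, pth x s' y) ∈ Dm (Metric.closedBall x ((i:ℝ) + 1)) r0 := by
      intro y
      refine ⟨le_rfl, pth_mem x y s _ hi (h1.trans h2), ?_⟩
      simp only [zero_add]
      exact (pth_lip x y s s' _ hi h1 h2).trans h3
    refine ⟨fun y => k (0, pth x s y, pth x s' y), ?_, fun y => (h _ (hD y)).1, fun y hy => ?_, ?_⟩
    · exact hk.comp_continuous (continuous_const.prodMk ((pth_cont x s).prodMk (pth_cont x s'))) hD
    · exact (h _ (hD y)).2 rfl (by simp only; rw [pth_end x y s hy, pth_end x y s' (hy.trans h1)])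
    · exact (h _ (hD x)).2 rfl (by simp only [pth_self])
  obtain ⟨m, hm⟩ := exists_nat_gt (((i:ℝ) + 1) / r0)
  have m0 : (0:ℝ) < m := lt_of_le_of_lt (by positivity) hm
  have key : ∀ j : ℕ, j ≤ m → TT p S x i (i + j / m) := by
    intro j
    induction j with
    | zero => intro _; simpa using TT_refl (p := p) S x (i:ℝ)
    | succ j ih =>
      intro hj
      have hj' : ((j:ℝ) + 1) ≤ m := by exact_mod_cast hj
      refine TT_trans S x _ _ _ ?_ (ih (by omega)) (step _ _ ?_ ?_ ?_)
      · have : (0:ℝ) ≤ j / m := by positivity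
        linarith
      · push_cast; gcongr; linarith
      · push_cast
        have : ((j:ℝ) + 1) / m ≤ 1 := (div_le_one m0).2 hj'
        linarith
      · push_cast
        have e : ((i:ℝ) + ((j:ℝ) + 1) / m - ((i:ℝ) + j / m)) = 1 / m := by field_simp; ring
        rw [e, mul_one_div, div_le_iff₀ m0]
        rw [div_lt_iff₀ hr] at hm
        linarith
  have := key m le_rfl
  rwa [div_self m0.ne'] at this

/-- global driftless section -/
theorem global_section (S : Sys V E) (x : E)
    (hs : ∀ y, Submodule.span ℝ (range fun w : List V × V => S.Zb w.1 w.2 y) = ⊤) :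
    ∃ c : E → Lp V p mu, Continuous c ∧ (∀ y, S.Phi (0, c y, x) = y) ∧ c x = 0 := by
  have hu := fun i : ℕ => TT_unit (p := p) S x hs i
  choose e ec e1 e2 e3 using hu
  let tail : ℕ → ℕ → E → Lp V p mu := fun m => Nat.rec (fun _ _ => 0)
    (fun m t j y => cat (e j y, t (j + 1) y)) m
  have t0 : ∀ j y, tail 0 j y = 0 := fun _ _ => rfl
  have ts : ∀ m j y, tail (m + 1) j y = cat (e j y, tail m (j + 1) y) := fun _ _ _ => rfl
  have tc : ∀ m j, Continuous (tail m j) := by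
    intro m
    induction m with
    | zero => intro j; exact continuous_const
    | succ m ih => intro j; exact cat.continuous.comp ((ec j).prodMk (ih (j + 1)))
  have tp : ∀ (m j : ℕ) y, S.Phi (0, tail m j y, pth x j y) = pth x ((j:ℝ) + m) y := by
    intro m
    induction m with
    | zero => intro j y; rw [t0, S.Phi_zero]; simp
    | succ m ih =>
      intro j y
      rw [ts, S.Phi_cat0, e1]
      have := ih (j + 1) y
      push_cast at this ⊢
      rw [this]; congr 1; ring
  have tx : ∀ m j, tail m j x = 0 := by
    intro m
    induction m with
    | zero => intro j; rfl
    | succ m ih => intro j; rw [ts, ih, e3, cat_zero]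
  have tst : ∀ (m j : ℕ) y, ‖y - x‖ + 1 ≤ (j:ℝ) + m → tail (m + 1) j y = tail m j y := by
    intro m
    induction m with
    | zero => intro j y h; rw [ts, t0, t0, e2 j y (by simpa using h), cat_zero]
    | succ m ih =>
      intro j y h
      rw [ts (m + 1), ih (j + 1) y (by push_cast at h ⊢; linarith), ts m]
  have tst2 : ∀ (m : ℕ) y, ‖y - x‖ + 1 ≤ m → ∀ l, m ≤ l → tail l 0 y = tail m 0 y := by
    intro m y h l hl
    induction l, hl using Nat.le_induction with
    | base => rfl
    | succ l hl ih =>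
      rw [tst l 0 y, ih]
      have : (m:ℝ) ≤ l := by exact_mod_cast hl
      push_cast; linarith
  set c : E → Lp V p mu := fun y => tail ⌈‖y - x‖ + 1⌉₊ 0 y with hc
  have cv : ∀ y (m : ℕ), ‖y - x‖ + 1 ≤ m → c y = tail m 0 y := by
    intro y m hm
    exact (tst2 _ y (Nat.le_ceil _) m (Nat.ceil_le.2 hm)).symm
  refine ⟨c, continuous_iff_continuousAt.2 fun y0 => ?_, fun y => ?_, tx _ _⟩
  · obtain ⟨m, hm⟩ := exists_nat_gt (‖y0 - x‖ + 1)
    have hev : ∀ᶠ y in 𝓝 y0, ‖y - x‖ + 1 < m := by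
      have : ContinuousAt (fun y => ‖y - x‖ + 1) y0 := by fun_prop
      exact this.eventually (gt_mem_nhds hm)
    refine (tc m 0).continuousAt.congr ?_
    filter_upwards [hev] with y hy
    exact (cv y m hy.le).symm
  · have := tp ⌈‖y - x‖ + 1⌉₊ 0 y
    rw [Nat.cast_zero, pth_zero, zero_add, pth_end x y _ (Nat.le_ceil _)] at this
    exact this

end glob
end EPM

namespace EPM

section assem
variable {V E : Type} [NormedAddCommGroup V] [NormedSpace ℝ V] [CompleteSpace V]
   [NormedAddCommGroup E] [NormedSpace ℝ E] [CompleteSpace E] [FiniteDimensional ℝ E]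
variable {p : ENNReal} [hp : Fact (1 ≤ p)]

theorem Rop_zero (a : ℝ) (q : Lp V p mu) : Rop a 0 q = 0 := by
  have := Rop_norm a 0 q
  rw [nR, abs_zero, zero_mul, zero_mul] at this
  exact norm_le_zero_iff.1 this

theorem Rop_one (u : Lp V p mu) : Rop 0 1 u = u := by
  apply Lp.ext
  filter_upwards [Rop_coe 0 1 u, ae_restrict_mem measurableSet_Icc] with t h1 h2
  rw [h1, one_smul, zero_add, one_mul, ext0, indicator_of_mem h2]

theorem Gop_zero (q u : Lp V p mu) : Gop 0 q u = u := by
  rw [Gop, inv_zero, Rop_zero, zero_add, sub_zero, inv_one, neg_zero, zero_div, Rop_one]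

theorem Psi_zero (S : Sys V E) (y : E) : S.Psi (0, (0 : Lp V p mu), y) = y := by
  rw [Sys.Psi]; simp only [neg_zero, map_zero]; exact S.Phi_zero y

theorem cutoff (S : Sys V E) (x : E) (c : E → Lp V p mu) (cc : Continuous c)
    (c1 : ∀ y, S.Phi (0, c y, x) = y) (c2 : c x = 0) (r0 : ℝ) (hr : 0 < r0) :
    ∃ ct : E → Lp V p mu, Continuous ct ∧ (∀ᶠ y in 𝓝 x, ct y = 0) ∧
      ∀ y, ‖S.Psi (0, ct y, y) - x‖ < r0 := by
  have hP : Continuous (S.Psi (p := p)) := S.Psi_contDiff.continuous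
  have tube : ∀ᶠ y in 𝓝 x, ∀ s ∈ Icc (0:ℝ) 1, ‖S.Psi (0, s • c y, y) - x‖ < r0 := by
    refine (isCompact_Icc (a := (0:ℝ)) (b := 1)).eventually_forall_of_forall_eventually ?_
    intro s hs
    have hcont : Continuous (fun z : E × ℝ => ‖S.Psi (0, z.2 • c z.1, z.1) - x‖) := by
      refine ((hP.comp (continuous_const.prodMk (Continuous.prodMk ?_ continuous_fst))).sub
        continuous_const).norm
      exact continuous_snd.smul (cc.comp continuous_fst)
    refine hcont.continuousAt.eventually (gt_mem_nhds ?_)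
    simp only [c2, smul_zero, Psi_zero, sub_self, norm_zero]
    exact hr
  obtain ⟨r1, r1p, hr1⟩ := Metric.eventually_nhds_iff.1 tube
  set χ : E → ℝ := fun y => max 0 (min 1 (2 * ‖y - x‖ / r1 - 1)) with hχ
  have χc : Continuous χ := by rw [hχ]; fun_prop
  have χ0 : ∀ y, 0 ≤ χ y := fun y => le_max_left _ _
  have χ1 : ∀ y, χ y ≤ 1 := fun y => max_le zero_le_one (min_le_left _ _)
  refine ⟨fun y => χ y • c y, χc.smul cc, ?_, fun y => ?_⟩
  · refine Metric.eventually_nhds_iff.2 ⟨r1 / 2, by positivity, fun y hy => ?_⟩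
    rw [dist_eq_norm] at hy
    have : χ y = 0 := by
      apply max_eq_left
      refine (min_le_right _ _).trans ?_
      rw [sub_nonpos, div_le_one r1p]; linarith
    show χ y • c y = 0
    rw [this, zero_smul]
  · by_cases h : dist y x < r1
    · exact hr1 h _ ⟨χ0 y, χ1 y⟩
    · rw [dist_eq_norm, not_lt] at h
      have : χ y = 1 := by
        have : 1 ≤ 2 * ‖y - x‖ / r1 - 1 := by
          rw [le_sub_iff_add_le, le_div_iff₀ r1p]; linarith
        rw [hχ]; simp only; rw [min_eq_left this]; simp
      simp only [this, one_smul]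
      have h2 := S.Psi_Phi 0 (c y) x
      rw [c1] at h2
      rw [h2, sub_self, norm_zero]; exact hr

set_option maxHeartbeats 1000000 in
theorem assembly (S : Sys V E) (x : E) (hpt : p ≠ ⊤)
    (hs : ∀ y, Submodule.span ℝ (range fun w : List V × V => S.Zb w.1 w.2 y) = ⊤)
    (a : ℝ) (ha : 0 < a) (hap : 1 < a + (1 / p).toReal)
    (C r0 : ℝ) (hC : 0 ≤ C) (hr0 : 0 < r0) (k : ℝ × E × E → Lp V p mu) (hk : ContinuousOn k (Dm {x} r0))
    (hk2 : ∀ z ∈ Dm {x} r0, S.Phi (z.1, k z, z.2.1) = z.2.2 ∧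
        ‖k z‖ ≤ C * (z.1 + ‖z.2.2 - z.2.1‖) ^ a) :
    ∃ σ : Lp V p mu × E → Lp V p mu, Continuous σ ∧ (∀ u y, S.Phi (1, σ (u, y), x) = y) ∧
      ∀ u, σ (u, S.Phi (1, u, x)) = u := by
  obtain ⟨c, cc, c1, c2⟩ := global_section (p := p) S x hs
  obtain ⟨ct, ctc, ct0, ct1⟩ := cutoff S x c cc c1 c2 r0 hr0
  have hP : Continuous (S.Psi (p := p)) := S.Psi_contDiff.continuous
  have hF : Continuous (fun u : Lp V p mu => S.Phi (1, u, x)) :=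
    S.Phi_contDiff.continuous.comp (continuous_const.prodMk (continuous_id.prodMk continuous_const))
  set F : Lp V p mu → E := fun u => S.Phi (1, u, x) with hFd
  set xp : (Lp V p mu × E) × ℝ → E := fun w => S.Psi (1 - w.2, w.1.1, w.1.2) with hxp
  have xpc : Continuous xp := hP.comp ((continuous_const.sub continuous_snd).prodMk
    ((continuous_fst.comp continuous_fst).prodMk (continuous_snd.comp continuous_fst)))
  set xq : (Lp V p mu × E) × ℝ → E := fun w => S.Psi (w.2 / 2, ct (xp w), xp w) with hxq
  have xqc : Continuous xq := hP.comp ((continuous_snd.div_const 2).prodMk ((ctc.comp xpc).prodMk xpc))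
  set O : Set ((Lp V p mu × E) × ℝ) := {w | |w.2| / 2 + ‖xq w - x‖ < r0} with hO
  have Oo : IsOpen O := isOpen_lt
    ((continuous_snd.abs.div_const 2).add (xqc.sub continuous_const).norm) continuous_const
  have O0 : ∀ P, (P, (0:ℝ)) ∈ O := by
    intro P
    have := ct1 (xp (P, 0))
    simp only [hO, mem_setOf_eq, hxq, abs_zero, zero_div, zero_add]
    exact this
  have Oc : (Oᶜ).Nonempty := by
    refine ⟨((0, 0), 2 * r0), ?_⟩
    simp only [hO, mem_compl_iff, mem_setOf_eq, not_lt]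
    rw [abs_of_pos (by positivity)]
    have := norm_nonneg (xq ((0, 0), 2 * r0) - x)
    linarith
  set δ : Lp V p mu × E → ℝ := fun P => min (1/2) (Metric.infDist (P, (0:ℝ)) Oᶜ / 2) with hδ
  have δc : Continuous δ := continuous_const.min
    (((Metric.continuous_infDist_pt _).comp (continuous_id.prodMk continuous_const)).div_const 2)
  have dpos : ∀ P : Lp V p mu × E, 0 < Metric.infDist (P, (0:ℝ)) Oᶜ := by
    intro P
    refine (Oo.isClosed_compl.notMem_iff_infDist_pos Oc).1 ?_
    simpa using O0 P
  have δpos : ∀ P, 0 < δ P := fun P => lt_min (by norm_num) (half_pos (dpos P))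
  set τ : Lp V p mu × E → ℝ := fun P => min (δ P) ‖P.2 - F P.1‖ with hτ
  have τc : Continuous τ := δc.min (continuous_snd.sub (hF.comp continuous_fst)).norm
  have τ0 : ∀ P, 0 ≤ τ P := fun P => le_min (δpos P).le (norm_nonneg _)
  have τh : ∀ P, τ P ≤ 1/2 := fun P => (min_le_left _ _).trans (min_le_left _ _)
  have τO : ∀ P, (P, τ P) ∈ O := by
    intro P
    by_contra h
    have h1 := Metric.infDist_le_dist_of_mem (x := (P, (0:ℝ))) (show (P, τ P) ∈ Oᶜ from h)
    rw [Prod.dist_eq, dist_self, Real.dist_eq] at h1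
    simp only [zero_sub, abs_neg, abs_of_nonneg (τ0 P)] at h1
    rw [max_eq_right (τ0 P)] at h1
    have h2 : τ P ≤ Metric.infDist (P, (0:ℝ)) Oᶜ / 2 := (min_le_left _ _).trans (min_le_right _ _)
    linarith [dpos P]
  have τz : ∀ P, τ P = 0 → P.2 = F P.1 := by
    intro P h
    rcases min_choice (δ P) ‖P.2 - F P.1‖ with h1 | h1
    · have : τ P = δ P := h1
      linarith [δpos P]
    · have : τ P = ‖P.2 - F P.1‖ := h1
      rw [h] at this
      exact sub_eq_zero.1 (norm_eq_zero.1 this.symm)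
  have hD : ∀ P, (τ P / 2, x, xq (P, τ P)) ∈ Dm {x} r0 := by
    intro P
    have h1 := τO P
    simp only [hO, mem_setOf_eq, abs_of_nonneg (τ0 P)] at h1
    exact ⟨by have := τ0 P; simp only; linarith, rfl, h1.le⟩
  have idc : Continuous (fun P => (P, τ P)) := continuous_id.prodMk τc
  set kk : Lp V p mu × E → Lp V p mu := fun P => k (τ P / 2, x, xq (P, τ P)) with hkk
  have kkc : Continuous kk := hk.comp_continuous ((τc.div_const 2).prodMk (continuous_const.prodMk
    (xqc.comp idc))) hD
  set q : Lp V p mu × E → Lp V p mu := fun P => cat (kk P, ct (xp (P, τ P))) with hq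
  have qc : Continuous q := cat.continuous.comp (kkc.prodMk (ctc.comp (xpc.comp idc)))
  have xF : ∀ u, S.Psi (1, u, F u) = x := fun u => S.Psi_Phi 1 u x
  have τF : ∀ u, τ (u, F u) = 0 := by
    intro u
    simp only [hτ, sub_self, norm_zero]
    exact min_eq_right (δpos _).le
  refine ⟨fun P => Gop (τ P) (q P) P.1, ?_, fun u y => ?_, fun u => ?_⟩
  rotate_left
  · rcases (τ0 (u, y)).eq_or_lt with h | h
    · simp only
      rw [← h, Gop_zero]
      exact (τz _ h.symm).symm
    · simp only
      have h1 := τh (u, y)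
      rw [S.Phi_Gop _ h (by linarith), mul_one, mul_one, hq]
      simp only
      rw [S.Phi_cat, (hk2 _ (hD (u, y))).1, hxq]
      simp only
      rw [S.Phi_Psi, hxp]
      simp only
      rw [S.Phi_Psi]
  · simp only
    have := τF u
    rw [hFd] at this
    simp only at this
    rw [this, Gop_zero]
  -- continuity
  unfold Gop
  refine Continuous.add ?_ ?_
  swap
  · refine continuous_iff_continuousAt.2 fun P0 => ?_
    have hne : (1 - τ P0) ≠ 0 := by have := τh P0; linarith
    have h1 := Rop_joint (V := V) hpt P0.1 (-τ P0 / (1 - τ P0)) (1 - τ P0)⁻¹ (inv_ne_zero hne)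
    have h2 : ContinuousAt (fun P : Lp V p mu × E =>
      (((-τ P / (1 - τ P), (1 - τ P)⁻¹), P.1) : (ℝ × ℝ) × Lp V p mu)) P0 := by
      have h3 : ContinuousAt (fun P => 1 - τ P) P0 := (continuous_const.sub τc).continuousAt
      exact ((τc.neg.continuousAt.div h3 hne).prodMk (h3.inv₀ hne)).prodMk continuousAt_fst
    exact ContinuousAt.comp (f := fun P : Lp V p mu × E =>
      (((-τ P / (1 - τ P), (1 - τ P)⁻¹), P.1) : (ℝ × ℝ) × Lp V p mu)) h1 h2
  refine continuous_iff_continuousAt.2 fun P0 => ?_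
  rcases (τ0 P0).eq_or_lt with h | h
  swap
  · have h1 := Rop_joint (V := V) hpt (q P0) 0 (τ P0)⁻¹ (inv_ne_zero h.ne')
    have h2 : ContinuousAt (fun P : Lp V p mu × E =>
      (((0, (τ P)⁻¹), q P) : (ℝ × ℝ) × Lp V p mu)) P0 :=
      (continuousAt_const.prodMk (τc.continuousAt.inv₀ h.ne')).prodMk qc.continuousAt
    exact ContinuousAt.comp (f := fun P : Lp V p mu × E =>
      (((0, (τ P)⁻¹), q P) : (ℝ × ℝ) × Lp V p mu)) h1 h2
  have y0 : P0.2 = F P0.1 := τz P0 h.symm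
  -- the smooth comparison map
  set H : (Lp V p mu × E) × ℝ → E := fun w => S.Psi (w.2 / 2, (0 : Lp V p mu), xp w) with hH
  have Hs : ContDiff ℝ 1 H := by
    have xps : ContDiff ℝ (⊤ : ℕ∞) xp := by
      refine ContDiff.comp (g := S.Psi (p := p)) (f := fun w : (Lp V p mu × E) × ℝ =>
        (1 - w.2, w.1.1, w.1.2)) S.Psi_contDiff ?_
      exact (contDiff_const.sub contDiff_snd).prodMk
        ((contDiff_fst.comp contDiff_fst).prodMk (contDiff_snd.comp contDiff_fst))
    have : ContDiff ℝ (⊤ : ℕ∞) H := by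
      refine ContDiff.comp (g := S.Psi (p := p)) (f := fun w : (Lp V p mu × E) × ℝ =>
        (w.2 / 2, (0 : Lp V p mu), xp w)) S.Psi_contDiff ?_
      exact (contDiff_snd.div_const 2).prodMk (contDiff_const.prodMk xps)
    exact this.of_le (WithTop.coe_le_coe.2 (le_top : (1:ℕ∞) ≤ ⊤))
  obtain ⟨L, t, ht, hL⟩ := (Hs.contDiffAt (x := (P0, (0:ℝ)))).exists_lipschitzOnWith
  have HF : ∀ u, H ((u, F u), 0) = x := by
    intro u
    simp only [hH, hxp, sub_zero, zero_div]
    rw [Psi_zero, xF]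
  have hP0 : (P0.1, F P0.1) = P0 := by rw [← y0]
  have ev1 : ∀ᶠ P in 𝓝 P0, (P, τ P) ∈ t := by
    refine idc.continuousAt.eventually_mem ?_
    rw [← h]; exact ht
  have ev2 : ∀ᶠ P : Lp V p mu × E in 𝓝 P0, ((P.1, F P.1), (0:ℝ)) ∈ t := by
    have : Continuous (fun P : Lp V p mu × E => ((P.1, F P.1), (0:ℝ))) :=
      (continuous_fst.prodMk (hF.comp continuous_fst)).prodMk continuous_const
    refine this.continuousAt.eventually_mem ?_
    rw [hP0]; exact ht
  have ev3 : ∀ᶠ P in 𝓝 P0, ct (xp (P, τ P)) = 0 := by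
    have h1 : Tendsto (fun P => xp (P, τ P)) (𝓝 P0) (𝓝 x) := by
      have h2 := (xpc.comp idc).tendsto P0
      have h3 : (xp ∘ fun P => (P, τ P)) P0 = x := by
        simp only [Function.comp, hxp, ← h, sub_zero, y0, xF]
      rw [h3] at h2
      exact h2
    exact h1.eventually ct0
  have ev4 : ∀ᶠ P in 𝓝 P0, τ P = ‖P.2 - F P.1‖ := by
    have h1 : ∀ᶠ P in 𝓝 P0, ‖P.2 - F P.1‖ < δ P := by
      refine (continuous_snd.sub (hF.comp continuous_fst)).norm.continuousAt.eventually_lt δc.continuousAt ?_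
      show ‖P0.2 - F P0.1‖ < δ P0
      rw [y0, sub_self, norm_zero]
      exact δpos P0
    filter_upwards [h1] with P hP
    exact min_eq_right hP.le
  set s := a + (1 / p).toReal - 1 with hsd
  have spos : 0 < s := by linarith
  set C2 := ‖(cat : (Lp V p mu × Lp V p mu) →L[ℝ] Lp V p mu)‖ * (C * (1 + L) ^ a) with hC2
  have main : ∀ᶠ P in 𝓝 P0, ‖Rop 0 (τ P)⁻¹ (q P)‖ ≤ C2 * τ P ^ s := by
    filter_upwards [ev1, ev2, ev3, ev4] with P e1 e2 e3 e4
    rcases (τ0 P).eq_or_lt with hz | hz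
    · rw [← hz, inv_zero, Rop_zero, norm_zero, Real.zero_rpow spos.ne', mul_zero]
    have l1 : ‖xq (P, τ P) - x‖ ≤ L * τ P := by
      have h1 := hL.dist_le_mul _ e1 _ e2
      rw [HF, dist_eq_norm] at h1
      have h2 : H (P, τ P) = xq (P, τ P) := by
        simp only [hH, hxq, e3]
      rw [h2] at h1
      refine h1.trans (mul_le_mul_of_nonneg_left ?_ L.2)
      rw [Prod.dist_eq, Prod.dist_eq]
      simp only [dist_self, Real.dist_eq, sub_zero, abs_of_nonneg (τ0 P)]
      refine max_le (max_le (τ0 P) ?_) le_rfl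
      rw [dist_eq_norm, e4]
    have l2 : ‖kk P‖ ≤ C * ((1 + L) * τ P) ^ a := by
      refine (hk2 _ (hD P)).2.trans ?_
      refine mul_le_mul_of_nonneg_left ?_ hC
      simp only
      refine Real.rpow_le_rpow (by have := τ0 P; positivity) ?_ ha.le
      linarith [τ0 P]
    have l3 : ‖q P‖ ≤ C2 * τ P ^ a := by
      rw [hq]; simp only
      rw [e3]
      refine (ContinuousLinearMap.le_opNorm _ _).trans ?_
      rw [Prod.norm_mk, norm_zero, max_eq_left (norm_nonneg _), hC2, mul_assoc]
      refine mul_le_mul_of_nonneg_left ?_ (norm_nonneg _)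
      rw [mul_assoc, ← Real.mul_rpow (by positivity) (τ0 P)]
      exact l2
    refine (Rop_norm _ _ _).trans ?_
    have l4 : nR p (τ P)⁻¹ = τ P ^ ((1 / p).toReal - 1) := by
      rw [nR, inv_inv, abs_of_pos hz, abs_of_pos (inv_pos.2 hz), Real.rpow_sub hz, Real.rpow_one]
      field_simp
    calc nR p (τ P)⁻¹ * ‖q P‖ ≤ nR p (τ P)⁻¹ * (C2 * τ P ^ a) :=
          mul_le_mul_of_nonneg_left l3 (nR_nonneg _ _)
      _ = C2 * (τ P ^ ((1 / p).toReal - 1) * τ P ^ a) := by rw [l4]; ring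
      _ = C2 * τ P ^ s := by
          rw [← Real.rpow_add hz]; congr 2; rw [hsd]; ring
  have v0 : Rop 0 (τ P0)⁻¹ (q P0) = 0 := by rw [← h, inv_zero, Rop_zero]
  rw [ContinuousAt, v0]
  refine squeeze_zero_norm' main ?_
  have h1 : Tendsto (fun P => C2 * τ P ^ s) (𝓝 P0) (𝓝 (C2 * τ P0 ^ s)) :=
    (continuous_const.mul (τc.rpow_const fun _ => Or.inr spos.le)).tendsto P0
  rwa [← h, Real.zero_rpow spos.ne', mul_zero] at h1

end assem
end EPM

namespace EPM

section fin
variable {n d : ℕ}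

/-- the linear-in-control part of the system -/
def Ymap (X : Fin d → EuclideanSpace ℝ (Fin n) → EuclideanSpace ℝ (Fin n)) (s : Finset (Fin d))
    (y : EuclideanSpace ℝ (Fin n)) : EuclideanSpace ℝ (Fin d) →L[ℝ] EuclideanSpace ℝ (Fin n) :=
  ∑ i ∈ s, ContinuousLinearMap.smulRightL ℝ (EuclideanSpace ℝ (Fin d)) (EuclideanSpace ℝ (Fin n))
    (EuclideanSpace.proj i) (X i y)

theorem Ymap_apply (X : Fin d → EuclideanSpace ℝ (Fin n) → EuclideanSpace ℝ (Fin n))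
    (y : EuclideanSpace ℝ (Fin n)) (v : EuclideanSpace ℝ (Fin d)) :
    Ymap X Finset.univ y v = ∑ i, v i • X i y := by
  simp [Ymap, ContinuousLinearMap.sum_apply]

theorem Ymap_lip (X : Fin d → EuclideanSpace ℝ (Fin n) → EuclideanSpace ℝ (Fin n))
    (h : ∀ i, ∃ K : NNReal, LipschitzWith K (X i)) (s : Finset (Fin d)) :
    ∃ K : NNReal, LipschitzWith K (Ymap X s) := by
  classical
  induction s using Finset.induction_on with
  | empty => exact ⟨0, by simpa [Ymap] using LipschitzWith.const _⟩
  | insert i s hi ih =>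
    obtain ⟨K, hK⟩ := ih
    obtain ⟨K2, hK2⟩ := h i
    have h3 := ((ContinuousLinearMap.smulRightL ℝ (EuclideanSpace ℝ (Fin d)) (EuclideanSpace ℝ (Fin n))
      (EuclideanSpace.proj i)).lipschitz.comp hK2).add hK
    have e : Ymap X (insert i s) = fun y => ((ContinuousLinearMap.smulRightL ℝ
      (EuclideanSpace ℝ (Fin d)) (EuclideanSpace ℝ (Fin n)) (EuclideanSpace.proj i)) ∘ X i) y
        + Ymap X s y := by
      funext y
      simp only [Ymap, Finset.sum_insert hi, Function.comp]
    rw [← e] at h3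
    exact ⟨_, h3⟩

theorem lip_of_bdd (f : EuclideanSpace ℝ (Fin n) → EuclideanSpace ℝ (Fin n))
    (hf : ContDiff ℝ (⊤ : ℕ∞) f) (C : ℝ) (hC : ∀ y, ‖fderiv ℝ f y‖ ≤ C) :
    ∃ K : NNReal, LipschitzWith K f := by
  refine ⟨C.toNNReal, lipschitzWith_of_nnnorm_fderiv_le (𝕜 := ℝ) (hf.differentiable (by simp)) fun y => ?_⟩
  rw [← NNReal.coe_le_coe, coe_nnnorm]
  exact (hC y).trans (Real.le_coe_toNNReal C)

/-- the control system of the theorem -/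
theorem mkSys (X0 : EuclideanSpace ℝ (Fin n) → EuclideanSpace ℝ (Fin n))
    (X : Fin d → EuclideanSpace ℝ (Fin n) → EuclideanSpace ℝ (Fin n))
    (hX0smooth : ContDiff ℝ (⊤ : ℕ∞) X0) (hXsmooth : ∀ i, ContDiff ℝ (⊤ : ℕ∞) (X i))
    (hX0der : ∃ C, ∀ y, ‖fderiv ℝ X0 y‖ ≤ C)
    (hXder : ∃ C, ∀ i y, ‖fderiv ℝ (X i) y‖ ≤ C) :
    ∃ S : Sys (EuclideanSpace ℝ (Fin d)) (EuclideanSpace ℝ (Fin n)), S.X0 = X0 ∧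
      ∀ y v, S.Y y v = ∑ i, v i • X i y := by
  obtain ⟨C0, h0⟩ := hX0der
  obtain ⟨C, h⟩ := hXder
  obtain ⟨L0, l0⟩ := lip_of_bdd X0 hX0smooth C0 h0
  obtain ⟨L, l⟩ := Ymap_lip X (fun i => lip_of_bdd (X i) (hXsmooth i) C (h i)) Finset.univ
  refine ⟨⟨X0, Ymap X Finset.univ, hX0smooth, ?_, L0, l0, L, l⟩, rfl, fun y v => Ymap_apply X y v⟩
  unfold Ymap
  refine ContDiff.sum fun i _ => ?_
  exact clm_cd (A := EuclideanSpace ℝ (Fin n)) _ (f := X i) (hXsmooth i)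

theorem spanning (X : Fin d → EuclideanSpace ℝ (Fin n) → EuclideanSpace ℝ (Fin n))
    (S : Sys (EuclideanSpace ℝ (Fin d)) (EuclideanSpace ℝ (Fin n)))
    (hY : ∀ y v, S.Y y v = ∑ i, v i • X i y) (hbg : BracketGenerating X)
    (y : EuclideanSpace ℝ (Fin n)) :
    Submodule.span ℝ (range fun w : List (EuclideanSpace ℝ (Fin d)) × EuclideanSpace ℝ (Fin d) =>
      S.Zb w.1 w.2 y) = ⊤ := by
  have mem : ∀ A, IsIteratedBracket X A → A ∈ S.Nb := by
    intro A hA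
    induction hA with
    | base i =>
      have h1 := S.Zb_mem [] (EuclideanSpace.single i (1:ℝ))
      have e : S.Zb [] (EuclideanSpace.single i (1:ℝ)) = X i := by
        funext z
        show S.Y z (EuclideanSpace.single i (1:ℝ)) = X i z
        rw [hY, Finset.sum_eq_single i]
        · simp
        · intro j _ hj
          simp [hj]
        · simp
      rwa [e] at h1
    | bracket A B _ _ ha hb => exact S.Nb_br ha hb
  rw [eq_top_iff, ← hbg y, Submodule.span_le]
  rintro v ⟨A, hA, rfl⟩
  exact S.Nb_eval (mem A hA) y

end fin

end EPM

/-- for a bounded, globally Lipschitz, smooth affine control system whose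
controlled fields `X₁, …, X_d` are bracket generating, there exists `p_c > 1` such that
for every `1 ≤ p < p_c` the endpoint map `F_p : L^p([0,1],ℝ^d) → ℝⁿ`, `F_p(u) = γ_u(1)`,
is a Hurewicz fibration. -/
theorem stmt16 (n d : ℕ) (x : EuclideanSpace ℝ (Fin n))
    (X0 : EuclideanSpace ℝ (Fin n) → EuclideanSpace ℝ (Fin n))
    (X : Fin d → EuclideanSpace ℝ (Fin n) → EuclideanSpace ℝ (Fin n))
    (hX0smooth : ContDiff ℝ (⊤ : ℕ∞) X0) (hXsmooth : ∀ i, ContDiff ℝ (⊤ : ℕ∞) (X i))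
    (hX0bdd : ∃ C, ∀ y, ‖X0 y‖ ≤ C) (hXbdd : ∃ C, ∀ i y, ‖X i y‖ ≤ C)
    (hX0der : ∃ C, ∀ y, ‖fderiv ℝ X0 y‖ ≤ C)
    (hXder : ∃ C, ∀ i y, ‖fderiv ℝ (X i) y‖ ≤ C)
    (hbg : BracketGenerating X) :
    ∃ pc : ℝ, 1 < pc ∧
      ∀ p : ℝ, 1 ≤ p → p < pc →
      ∀ [Fact (1 ≤ ENNReal.ofReal p)],
      ∀ F : Lp (EuclideanSpace ℝ (Fin d)) (ENNReal.ofReal p)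
          (volume.restrict (Set.Icc (0:ℝ) 1)) → EuclideanSpace ℝ (Fin n),
        (∀ u : Lp (EuclideanSpace ℝ (Fin d)) (ENNReal.ofReal p)
            (volume.restrict (Set.Icc (0:ℝ) 1)),
          ∃ γ, IsTrajectory X0 X x (⇑u) γ ∧ F u = γ 1) →
      ∀ (Z : Type*) [TopologicalSpace Z],
      ∀ g : Z × unitInterval → EuclideanSpace ℝ (Fin n), Continuous g →
      ∀ g₀ : Z → Lp (EuclideanSpace ℝ (Fin d)) (ENNReal.ofReal p)
          (volume.restrict (Set.Icc (0:ℝ) 1)), Continuous g₀ →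
        (∀ z, F (g₀ z) = g (z, 0)) →
        ∃ gt : Z × unitInterval → Lp (EuclideanSpace ℝ (Fin d)) (ENNReal.ofReal p)
            (volume.restrict (Set.Icc (0:ℝ) 1)),
          Continuous gt ∧ (∀ z, gt (z, 0) = g₀ z) ∧
            ∀ z s, F (gt (z, s)) = g (z, s) := by
  obtain ⟨S, hS0, hSY⟩ := EPM.mkSys X0 X hX0smooth hXsmooth hX0der hXder
  have hs := EPM.spanning X S hSY hbg
  obtain ⟨W, R, hRc, hR⟩ := EPM.rinv (fun w : List (EuclideanSpace ℝ (Fin d)) × EuclideanSpace ℝ (Fin d) =>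
    S.Zb w.1 w.2) (fun w => (S.Zb_smooth w.1 w.2).continuous) {x} isCompact_singleton (fun y _ => hs y)
  set κ := W.sup fun w => w.1.length with hκ
  set N : ℝ := ((2 * κ + 2 : ℕ) : ℝ) with hN
  have N2 : 2 ≤ N := by rw [hN]; push_cast; have : (0:ℝ) ≤ κ := by positivity
                        linarith
  refine ⟨N / (N - 1), by rw [lt_div_iff₀ (by linarith)]; linarith, ?_⟩
  intro p p1 ppc hfact F hF Z _ g hg g₀ hg₀ hgg
  obtain ⟨C, r0, hC, hr, k, hk, h⟩ := EPM.local_lemma (p := ENNReal.ofReal p) S {x} isCompact_singleton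
    W R hRc hR κ (fun w hw => Finset.le_sup
      (f := fun w : List (EuclideanSpace ℝ (Fin d)) × EuclideanSpace ℝ (Fin d) => w.1.length) hw)
  have hpos : 0 < p := by linarith
  have hap : 1 < 1 / N + (1 / ENNReal.ofReal p).toReal := by
    have e : (1 / ENNReal.ofReal p).toReal = 1 / p := by
      rw [ENNReal.toReal_div, ENNReal.toReal_one, ENNReal.toReal_ofReal hpos.le]
    rw [e]
    have h1 : p * (N - 1) < N := (lt_div_iff₀ (by linarith)).1 ppc
    rw [div_add_div _ _ (by positivity) hpos.ne', lt_div_iff₀ (by positivity)]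
    linarith
  obtain ⟨σ, σc, σ1, σ2⟩ := EPM.assembly S x ENNReal.ofReal_ne_top hs (1 / N) (by positivity) hap
    C r0 hC hr k hk h
  have hFP : ∀ u, F u = S.Phi (1, u, x) := by
    intro u
    obtain ⟨γ, hγ, e⟩ := hF u
    rw [e]
    refine S.Phi_eq ⟨hγ.1, fun t ht => ?_⟩
    have h2 := hγ.2 t ht
    simp only [hS0, hSY, one_smul]
    exact h2
  refine ⟨fun z => σ (g₀ z.1, g z), σc.comp ((hg₀.comp continuous_fst).prodMk hg), fun z => ?_, fun z s => ?_⟩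
  · simp only
    rw [← hgg, hFP, σ2]
  · rw [hFP, σ1]
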